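/- Let G be the 1-skeleton of a triangulation of the 2-sphere, and let 𝒫 = {D_v} and 𝒫̃ = {D̃_v} be circle packings in the Riemann sphere Ĉ (collections of pairwise interiorwise-disjoint closed disks) both realizing G as contact graph. Then there is a Möbius or anti-Möbius transformation of Ĉ carrying 𝒫 to 𝒫̃ (sending D_v to D̃_v for every vertex v). -/

import Mathlib

open Metric Real

/-- The Riemann sphere, modeled as the one-point compactification of `ℂ`. -/
abbrev RS := OnePoint ℂ

/-- The Möbius transformation of the Riemann sphere with matrix `[[a,b],[c,d]]`. -/
noncomputable def moeb (a b c d : ℂ) (z : RS) : RS :=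
  match (z : Option ℂ) with
  | Option.none => if c = 0 then (OnePoint.infty : RS) else (((a / c : ℂ) : RS))
  | Option.some w =>
      if c * w + d = 0 then (OnePoint.infty : RS)
      else (((a * w + b) / (c * w + d) : ℂ) : RS)

/-- `f` is a Möbius transformation of the Riemann sphere. -/
def IsMoebius (f : RS → RS) : Prop :=
  ∃ a b c d : ℂ, a * d - b * c ≠ 0 ∧ f = moeb a b c d

/-- Complex conjugation extended to the Riemann sphere. -/
noncomputable def conjRS (z : RS) : RS :=
  match (z : Option ℂ) with
  | Option.none => (OnePoint.infty : RS)
  | Option.some w => (((starRingEnd ℂ) w : ℂ) : RS)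

/-- `f` is an anti-Möbius transformation (a Möbius transformation composed with
complex conjugation). -/
def IsAntiMoebius (f : RS → RS) : Prop :=
  ∃ g : RS → RS, IsMoebius g ∧ f = fun z => g (conjRS z)

/-- The planar closed disk `closedBall c r`, viewed inside the Riemann sphere. -/
def coeDisk (c : ℂ) (r : ℝ) : Set RS :=
  (fun z : ℂ => (z : RS)) '' Metric.closedBall c r

/-- The planar circle `sphere c r`, viewed inside the Riemann sphere. -/
def coeCircle (c : ℂ) (r : ℝ) : Set RS :=
  (fun z : ℂ => (z : RS)) '' Metric.sphere c r

/-- A closed disk in the Riemann sphere: a Möbius image of a planar closed disk. -/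
def IsDiskRS (C : Set RS) : Prop :=
  ∃ f : RS → RS, IsMoebius f ∧ ∃ c : ℂ, ∃ r : ℝ, 0 < r ∧ C = f '' coeDisk c r

/-- A circle in the Riemann sphere: a Möbius image of a planar circle. -/
def IsCircleRS (S : Set RS) : Prop :=
  ∃ f : RS → RS, IsMoebius f ∧ ∃ c : ℂ, ∃ r : ℝ, 0 < r ∧ S = f '' coeCircle c r

/-- External intersection angle of two planar disks, from centers and radii. -/
noncomputable def extAngle (c₁ : ℂ) (r₁ : ℝ) (c₂ : ℂ) (r₂ : ℝ) : ℝ :=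
  Real.arccos ((dist c₁ c₂ ^ 2 - r₁ ^ 2 - r₂ ^ 2) / (2 * r₁ * r₂))

/-- The external intersection angle between two disks on the Riemann sphere equals
`θ`: some Möbius transformation carries both to planar disks whose external
intersection angle is `θ`.  (Möbius transformations preserve these angles.) -/
def AngleIsRS (C₁ C₂ : Set RS) (θ : ℝ) : Prop :=
  ∃ f : RS → RS, IsMoebius f ∧ ∃ c₁ c₂ : ℂ, ∃ r₁ r₂ : ℝ, 0 < r₁ ∧ 0 < r₂ ∧
    f '' C₁ = coeDisk c₁ r₁ ∧ f '' C₂ = coeDisk c₂ r₂ ∧ extAngle c₁ r₁ c₂ r₂ = θ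

/-- Two circles on the Riemann sphere meet orthogonally: some Möbius transformation
carries them to planar circles satisfying the orthogonality relation
`dist(c₁,c₂)² = r₁² + r₂²`. -/
def OrthCirclesRS (S₁ S₂ : Set RS) : Prop :=
  ∃ f : RS → RS, IsMoebius f ∧ ∃ c₁ c₂ : ℂ, ∃ r₁ r₂ : ℝ, 0 < r₁ ∧ 0 < r₂ ∧
    f '' S₁ = coeCircle c₁ r₁ ∧ f '' S₂ = coeCircle c₂ r₂ ∧
    dist c₁ c₂ ^ 2 = r₁ ^ 2 + r₂ ^ 2

/-- `(G, F)` is (the 1-skeleton and face set of) a triangulation of the 2-sphere: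
every face is a triangle of `G`, every edge of `G` lies in exactly two faces, every
vertex lies in a face, `G` is connected, and the Euler characteristic
`|V| - |E| + |F|` equals `2`. -/
def IsSphereTriangulation {V : Type*} [Fintype V] [DecidableEq V]
    (G : SimpleGraph V) [DecidableRel G.Adj] (F : Finset (Finset V)) : Prop :=
  (∀ f ∈ F, f.card = 3) ∧
  (∀ f ∈ F, ∀ u ∈ f, ∀ v ∈ f, u ≠ v → G.Adj u v) ∧
  (∀ u v : V, G.Adj u v → (F.filter fun f => u ∈ f ∧ v ∈ f).card = 2) ∧
  (∀ v : V, ∃ f ∈ F, v ∈ f) ∧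
  G.Connected ∧
  ((Fintype.card V : ℤ) - (G.edgeFinset.card : ℤ) + (F.card : ℤ) = 2)

namespace KAT
section Planar
variable {W : Type*} [Fintype W] [DecidableEq W]

/-- Height of the line through the points `e.1`, `e.2` at abscissa `ξ`. -/
noncomputable def ht (x y : W → ℝ) (e : W × W) (ξ : ℝ) : ℝ :=
  y e.1 + (y e.2 - y e.1) / (x e.2 - x e.1) * (ξ - x e.1)

/-- A noncrossing straight line drawing; edges are oriented from left to right. -/
structure NC (x y : W → ℝ) (E : Finset (W × W)) : Prop where
  lt : ∀ e ∈ E, x e.1 < x e.2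
  ve : ∀ e ∈ E, ∀ w, x e.1 < x w → x w < x e.2 → ht x y e (x w) ≠ y w
  ee : ∀ e ∈ E, ∀ f ∈ E, ∀ ξ, x e.1 < ξ → ξ < x e.2 → x f.1 < ξ → ξ < x f.2 →
    ht x y e ξ = ht x y f ξ → e = f

lemma ht_left (x y : W → ℝ) (e : W × W) : ht x y e (x e.1) = y e.1 := by
  simp [ht]

lemma ht_right (x y : W → ℝ) (e : W × W) (h : x e.1 < x e.2) : ht x y e (x e.2) = y e.2 := by
  have : x e.2 - x e.1 ≠ 0 := by linarith
  unfold ht; field_simp; ring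

lemma ht_aff (x y : W → ℝ) (e : W × W) (l ξ₁ ξ₂ : ℝ) :
    ht x y e ((1 - l) * ξ₁ + l * ξ₂) = (1 - l) * ht x y e ξ₁ + l * ht x y e ξ₂ := by
  unfold ht; ring

lemma NC.cross {x y : W → ℝ} {E : Finset (W × W)} (h : NC x y E) {e f : W × W}
    (he : e ∈ E) (hf : f ∈ E) {ξ₁ ξ₂ : ℝ} (h12 : ξ₁ < ξ₂)
    (a1 : x e.1 ≤ ξ₁) (a2 : ξ₂ ≤ x e.2) (b1 : x f.1 ≤ ξ₁) (b2 : ξ₂ ≤ x f.2)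
    (c1 : ht x y e ξ₁ < ht x y f ξ₁) (c2 : ht x y f ξ₂ < ht x y e ξ₂) : False := by
  set d1 := ht x y f ξ₁ - ht x y e ξ₁ with hd1
  set d2 := ht x y e ξ₂ - ht x y f ξ₂ with hd2
  have p1 : 0 < d1 := by linarith
  have p2 : 0 < d2 := by linarith
  set l := d1 / (d1 + d2) with hl
  have l0 : 0 < l := by positivity
  have l1 : l < 1 := by rw [hl, div_lt_one (by positivity)]; linarith
  have hle : l * (d1 + d2) = d1 := by rw [hl]; field_simp
  have hlt1 : ξ₁ < (1 - l) * ξ₁ + l * ξ₂ := by nlinarith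
  have hlt2 : (1 - l) * ξ₁ + l * ξ₂ < ξ₂ := by nlinarith
  have := h.ee e he f hf ((1 - l) * ξ₁ + l * ξ₂) (by linarith) (by linarith) (by linarith)
    (by linarith) (by
      rw [ht_aff, ht_aff]
      have : ht x y f ξ₁ = ht x y e ξ₁ + d1 := by rw [hd1]; ring
      have h2 : ht x y e ξ₂ = ht x y f ξ₂ + d2 := by rw [hd2]; ring
      rw [this, h2]; nlinarith)
  subst this
  linarith

/-- vertices with no edge passing strictly below. -/
noncomputable def dn (x y : W → ℝ) (E : Finset (W × W)) : Finset W :=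
  open Classical in
  Finset.univ.filter fun w => ¬ ∃ e ∈ E, x e.1 < x w ∧ x w < x e.2 ∧ ht x y e (x w) < y w

/-- vertices with no edge passing strictly above. -/
noncomputable def up (x y : W → ℝ) (E : Finset (W × W)) : Finset W :=
  open Classical in
  Finset.univ.filter fun w => ¬ ∃ e ∈ E, x e.1 < x w ∧ x w < x e.2 ∧ y w < ht x y e (x w)

/-- `e` is the edge directly above `w`. -/
def DirAbove (x y : W → ℝ) (E : Finset (W × W)) (w : W) (e : W × W) : Prop :=
  x e.1 < x w ∧ x w < x e.2 ∧ y w < ht x y e (x w) ∧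
  ∀ g ∈ E, x g.1 < x w → x w < x g.2 → y w < ht x y g (x w) → ht x y e (x w) ≤ ht x y g (x w)

/-- slope -/
noncomputable def sl (x y : W → ℝ) (v w : W) : ℝ := (y w - y v) / (x w - x v)

lemma ht_sl (x y : W → ℝ) (v w : W) (ξ : ℝ) : ht x y (v, w) ξ = y v + sl x y v w * (ξ - x v) := rfl

lemma y_sl (x y : W → ℝ) (v w : W) (h : x v < x w) : y w = y v + sl x y v w * (x w - x v) := by
  have : x w - x v ≠ 0 := by linarith
  unfold sl; field_simp; ring

lemma sweep_class {x y : W → ℝ} {E : Finset (W × W)} (hx : Function.Injective x)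
    (h : NC x y E) (v b : W) (he : (v, b) ∈ E) :
    (∀ a, (v, a) ∈ E → sl x y v b ≤ sl x y v a) ∨
    ((∀ u, (u, b) ∈ E → sl x y u b ≤ sl x y v b) ∧ b ∉ dn x y E) ∨
    (∃ w, DirAbove x y E w (v, b)) := by
  classical
  by_cases h1 : ∀ a, (v, a) ∈ E → sl x y v b ≤ sl x y v a
  · exact Or.inl h1
  right
  push Not at h1
  have hvb : x v < x b := h.lt _ he
  -- choose the next lower right edge
  obtain ⟨a, ha, hamax⟩ := Finset.exists_max_image
    (Finset.univ.filter fun a => (v, a) ∈ E ∧ sl x y v a < sl x y v b) (fun a => sl x y v a)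
    (by obtain ⟨a, h2, h3⟩ := h1; exact ⟨a, by simp [h2, h3]⟩)
  simp only [Finset.mem_filter, Finset.mem_univ, true_and] at ha hamax
  obtain ⟨haE, hab⟩ := ha
  have hva : x v < x a := h.lt _ haE
  obtain ⟨w, hw, hwmin⟩ := Finset.exists_min_image
    (Finset.univ.filter fun w => x v < x w ∧ sl x y v a ≤ sl x y v w ∧ sl x y v w ≤ sl x y v b)
    (fun w => x w) ⟨a, by simp [hva, hab.le]⟩
  simp only [Finset.mem_filter, Finset.mem_univ, true_and] at hw hwmin
  obtain ⟨hvw, haw, hwb⟩ := hw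
  have hwa : x w ≤ x a := hwmin a ⟨hva, le_rfl, hab.le⟩
  have hwb' : x w ≤ x b := hwmin b ⟨hvb, hab.le, le_rfl⟩
  -- vertex to the right of `v`, left of `w` is outside the cone
  have cone : ∀ c, x v < x c → x c < x w →
      y c < ht x y (v, a) (x c) ∨ ht x y (v, b) (x c) < y c := by
    intro c hc1 hc2
    by_contra hcon
    push Not at hcon
    have hc := y_sl x y v c hc1
    rw [ht_sl, ht_sl] at hcon
    have := hwmin c ⟨hc1, by nlinarith, by nlinarith⟩
    linarith
  by_cases hwbe : w = b
  · left
    subst hwbe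
    have hne : a ≠ w := by rintro rfl; exact lt_irrefl _ hab
    have hlt : x w < x a := lt_of_le_of_ne hwa (fun hh => hne (hx hh).symm)
    have hyw := y_sl x y v w hvw
    have hbelow : ht x y (v, a) (x w) < y w := by
      rw [ht_sl]; nlinarith
    refine ⟨?_, ?_⟩
    · intro u hu
      by_contra hcon
      push Not at hcon
      have huw : x u < x w := h.lt _ hu
      have hu2 := y_sl x y u w huw
      have hR := ht_right x y (u, w) huw
      have key : ∀ ξ, ht x y (u, w) ξ = y w + sl x y u w * (ξ - x w) := by
        intro ξ; rw [ht_sl]; nlinarith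
      have keyv : ∀ ξ, ht x y (v, w) ξ = y w + sl x y v w * (ξ - x w) := by
        intro ξ; rw [ht_sl]; nlinarith
      rcases le_or_gt (x u) (x v) with huv | huv
      · refine h.cross hu haE hvw huv le_rfl le_rfl hlt.le ?_ ?_
        · rw [ht_left x y (v, a), key]
          have := ht_left x y (v, w); rw [keyv] at this
          simp only at this ⊢
          nlinarith
        · rw [hR]; exact hbelow
      · have hyu : y u < ht x y (v, w) (x u) := by
          rw [keyv]
          have := ht_left x y (u, w); rw [key] at this
          simp only at this
          nlinarith
        rcases cone u huv huw with hc | hc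
        · refine h.cross hu haE huw le_rfl le_rfl huv.le hlt.le ?_ ?_
          · rw [ht_left x y (u, w)]; exact hc
          · rw [hR]; exact hbelow
        · linarith
    · simp only [dn, Finset.mem_filter, Finset.mem_univ, true_and, not_not]
      exact ⟨(v, a), haE, hvw, hlt, hbelow⟩
  · right
    have hltb : x w < x b := lt_of_le_of_ne hwb' (fun hh => hwbe (hx hh))
    have hyw := y_sl x y v w hvw
    have hwb2 : y w < ht x y (v, b) (x w) := by
      refine lt_of_le_of_ne ?_ (fun hh => h.ve _ he w hvw hltb hh.symm)
      rw [ht_sl]; nlinarith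
    have hwa2 : ht x y (v, a) (x w) ≤ y w := by
      rw [ht_sl]; nlinarith
    refine ⟨w, hvw, hltb, hwb2, ?_⟩
    rintro ⟨c, d⟩ hg hcw hwd hyg
    by_contra hcon
    push Not at hcon
    simp only at hcw hwd
    rcases lt_trichotomy (x c) (x v) with hcv | hcv | hcv
    · have hne := h.ve _ hg v hcv (hvw.trans hwd)
      rcases lt_or_gt_of_ne hne with hlt | hgt
      · refine h.cross hg haE hvw hcv.le hwd.le le_rfl hwa ?_ (by linarith)
        rw [ht_left x y (v, a)]; exact hlt
      · refine h.cross he hg hvw le_rfl hltb.le hcv.le hwd.le ?_ hcon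
        rw [ht_left x y (v, b)]; exact hgt
    · obtain rfl := hx hcv
      have h1 : sl x y c d < sl x y c b := by
        rw [ht_sl, ht_sl] at hcon; nlinarith
      have h2 := hamax d ⟨hg, h1⟩
      rw [ht_sl] at hyg
      nlinarith
    · rcases cone c hcv hcw with hc | hc
      · refine h.cross hg haE hcw le_rfl hwd.le hcv.le hwa ?_ (by linarith)
        rw [ht_left x y (c, d)]; exact hc
      · refine h.cross he hg hcw hcv.le hltb.le le_rfl hwd.le ?_ hcon
        rw [ht_left x y (c, d)]; exact hc

lemma sweep {x y : W → ℝ} {E : Finset (W × W)} (hx : Function.Injective x)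
    (h : NC x y E) [Nonempty W] :
    E.card + (dn x y E).card + (up x y E).card + 1 ≤ 3 * Fintype.card W := by
  classical
  obtain ⟨last, -, hlast⟩ := Finset.exists_max_image (Finset.univ : Finset W) x
    Finset.univ_nonempty
  set A1 := E.filter fun e => ∀ a, (e.1, a) ∈ E → sl x y e.1 e.2 ≤ sl x y e.1 a
  set A2 := E.filter fun e => (∀ u, (u, e.2) ∈ E → sl x y u e.2 ≤ sl x y e.1 e.2) ∧ e.2 ∉ dn x y E
  set A3 := E.filter fun e => ∃ w, DirAbove x y E w e
  have hsub : E ⊆ A1 ∪ (A2 ∪ A3) := by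
    rintro ⟨v, b⟩ he
    rcases sweep_class hx h v b he with h1 | h1 | h1
    · exact Finset.mem_union_left _ (Finset.mem_filter.2 ⟨he, h1⟩)
    · exact Finset.mem_union_right _ (Finset.mem_union_left _ (Finset.mem_filter.2 ⟨he, h1⟩))
    · exact Finset.mem_union_right _ (Finset.mem_union_right _ (Finset.mem_filter.2 ⟨he, h1⟩))
  have c1 : A1.card ≤ (Finset.univ.erase last).card := by
    refine Finset.card_le_card_of_injOn (fun e => e.1) ?_ ?_
    · intro e he
      have he := (Finset.mem_filter.1 he).1
      have := h.lt e he
      simp only [Finset.coe_erase, Finset.coe_univ, Set.mem_diff, Set.mem_univ, Set.mem_singleton_iff, true_and]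
      rintro hh
      have := hlast e.2 (Finset.mem_univ _)
      rw [← hh] at this
      linarith
    · rintro ⟨v, b⟩ h1 ⟨v', b'⟩ h2 hh
      simp only at hh
      subst hh
      obtain ⟨h1e, h1⟩ := Finset.mem_filter.1 h1
      obtain ⟨h2e, h2⟩ := Finset.mem_filter.1 h2
      have hs : sl x y v b = sl x y v b' := le_antisymm (h1 _ h2e) (h2 _ h1e)
      have l1 := h.lt _ h1e
      have l2 := h.lt _ h2e
      simp only at l1 l2
      obtain ⟨ξ, k1, k2⟩ := exists_between (lt_min l1 l2)
      rw [lt_min_iff] at k2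
      exact h.ee _ h1e _ h2e ξ k1 k2.1 k1 k2.2 (by rw [ht_sl, ht_sl, hs])
  have c2 : A2.card ≤ (Finset.univ \ dn x y E).card := by
    refine Finset.card_le_card_of_injOn (fun e => e.2) ?_ ?_
    · intro e he
      have he := (Finset.mem_filter.1 he).2.2
      simpa using he
    · rintro ⟨v, b⟩ h1 ⟨v', b'⟩ h2 hh
      simp only at hh
      subst hh
      obtain ⟨h1e, h1, -⟩ := Finset.mem_filter.1 h1
      obtain ⟨h2e, h2, -⟩ := Finset.mem_filter.1 h2
      have hs : sl x y v b = sl x y v' b := le_antisymm (h2 _ h1e) (h1 _ h2e)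
      have l1 := h.lt _ h1e
      have l2 := h.lt _ h2e
      simp only at l1 l2
      obtain ⟨ξ, k1, k2⟩ := exists_between (max_lt l1 l2)
      rw [max_lt_iff] at k1
      refine h.ee _ h1e _ h2e ξ k1.1 k2 k1.2 k2 ?_
      have e1 := y_sl x y v b l1
      have e2 := y_sl x y v' b l2
      rw [ht_sl, ht_sl]
      rw [hs] at e1 ⊢
      linarith
  have c3 : A3.card ≤ (Finset.univ \ up x y E).card := by
    have hex : ∀ e, ∃ w, e ∈ A3 → DirAbove x y E w e := by
      intro e
      by_cases he : e ∈ A3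
      · obtain ⟨w, hw⟩ := (Finset.mem_filter.1 he).2
        exact ⟨w, fun _ => hw⟩
      · exact ⟨last, fun hh => absurd hh he⟩
    choose f hf using hex
    refine Finset.card_le_card_of_injOn f ?_ ?_
    · intro e he
      have hd := hf e he
      simp only [Finset.coe_sdiff, Finset.coe_univ, Set.mem_diff, Set.mem_univ, true_and, up,
        Finset.coe_filter, Set.mem_setOf_eq, Finset.mem_univ, not_not]
      exact ⟨e, (Finset.mem_filter.1 he).1, hd.1, hd.2.1, hd.2.2.1⟩
    · intro e he g hg hh
      have h1 := hf e he
      have h2 := hf g hg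
      rw [← hh] at h2
      have he' := (Finset.mem_filter.1 he).1
      have hg' := (Finset.mem_filter.1 hg).1
      exact h.ee e he' g hg' _ h1.1 h1.2.1 h2.1 h2.2.1
        (le_antisymm (h1.2.2.2 g hg' h2.1 h2.2.1 h2.2.2.1) (h2.2.2.2 e he' h1.1 h1.2.1 h1.2.2.1))
  have t1 := Finset.card_le_card hsub
  have t2 := Finset.card_union_le A1 (A2 ∪ A3)
  have t3 := Finset.card_union_le A2 A3
  rw [Finset.card_erase_of_mem (Finset.mem_univ _), Finset.card_univ] at c1
  rw [Finset.card_sdiff_of_subset (Finset.subset_univ _), Finset.card_univ] at c2 c3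
  have u1 := Finset.card_le_univ (dn x y E)
  have u2 := Finset.card_le_univ (up x y E)
  have u3 : 0 < Fintype.card W := Fintype.card_pos
  omega

end Planar
end KAT

namespace KAT
section Planar2
variable {W : Type*} [Fintype W] [DecidableEq W]

lemma aff_lo (p q : ℝ) {ξ₁ ξ ξ₂ m : ℝ} (h1 : ξ₁ < ξ) (h2 : ξ < ξ₂) (a1 : m ≤ p + q * ξ₁)
    (a2 : m ≤ p + q * ξ₂) : m ≤ p + q * ξ := by
  by_contra hc
  push Not at hc
  have : 0 < -q := by
    by_contra hq
    nlinarith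
  nlinarith

lemma aff_zero (p q : ℝ) {ξ₁ ξ ξ₂ : ℝ} (h1 : ξ₁ < ξ) (h2 : ξ < ξ₂) (a1 : 0 ≤ p + q * ξ₁)
    (a2 : 0 ≤ p + q * ξ₂) (h : p + q * ξ = 0) : p + q * ξ₁ = 0 ∧ p + q * ξ₂ = 0 := by
  have e1 : p + q * ξ₁ = q * (ξ₁ - ξ) := by linarith
  have e2 : p + q * ξ₂ = q * (ξ₂ - ξ) := by linarith
  have : q = 0 := by
    rcases lt_trichotomy q 0 with h | h | h
    · nlinarith
    · exact h
    · nlinarith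
  subst this
  constructor <;> linarith

lemma ht_sub_aff (x y : W → ℝ) (e f : W × W) :
    ∃ p q : ℝ, ∀ ξ, ht x y e ξ - ht x y f ξ = p + q * ξ := by
  refine ⟨ht x y e 0 - ht x y f 0, (y e.2 - y e.1) / (x e.2 - x e.1) - (y f.2 - y f.1) / (x f.2 - x f.1), ?_⟩
  intro ξ; unfold ht; ring

lemma first_mem_up {x y : W → ℝ} {E : Finset (W × W)} {a : W} (h : ∀ w, x a ≤ x w) :
    a ∈ up x y E := by
  simp only [up, Finset.mem_filter, Finset.mem_univ, true_and]
  rintro ⟨e, -, h1, -⟩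
  linarith [h e.1]

lemma last_mem_up {x y : W → ℝ} {E : Finset (W × W)} {a : W} (h : ∀ w, x w ≤ x a) :
    a ∈ up x y E := by
  simp only [up, Finset.mem_filter, Finset.mem_univ, true_and]
  rintro ⟨e, -, -, h1, -⟩
  linarith [h e.2]

lemma up_two {x y : W → ℝ} {E : Finset (W × W)} {a b : W} (hab : a ≠ b)
    (ha : ∀ w, x a ≤ x w) (hb : ∀ w, x w ≤ x b) : 2 ≤ (up x y E).card := by
  rw [← Finset.card_pair hab]
  apply Finset.card_le_card
  intro w hw
  simp only [Finset.mem_insert, Finset.mem_singleton] at hw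
  rcases hw with rfl | rfl
  · exact first_mem_up ha
  · exact last_mem_up hb

lemma edge_bound {x y : W → ℝ} {E : Finset (W × W)} (hx : Function.Injective x)
    (h : NC x y E) {Dn : Finset W} (hDn : Dn ⊆ dn x y E) (hn : 2 ≤ Fintype.card W) :
    E.card + Dn.card + 3 ≤ 3 * Fintype.card W := by
  haveI : Nonempty W := Fintype.card_pos_iff.mp (by omega)
  obtain ⟨a, ha⟩ := Finite.exists_min x
  obtain ⟨b, hb⟩ := Finite.exists_max x
  have hab : a ≠ b := by
    rintro rfl
    haveI : Nontrivial W := Fintype.one_lt_card_iff_nontrivial.mp hn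
    obtain ⟨c, hc⟩ := exists_ne a
    exact hc (hx (le_antisymm (hb c) (ha c)))
  have := sweep hx h
  have h2 := up_two (y := y) (E := E) hab ha hb
  have h3 := Finset.card_le_card hDn
  omega

lemma NC.insert {x y : W → ℝ} {E : Finset (W × W)} (h : NC x y E) {a b : W} (hab : x a < x b)
    (h1 : ∀ w, x a < x w → x w < x b → ht x y (a, b) (x w) ≠ y w)
    (h2 : ∀ f ∈ E, ∀ ξ, x a < ξ → ξ < x b → x f.1 < ξ → ξ < x f.2 →
      ht x y (a, b) ξ = ht x y f ξ → (a, b) = f) : NC x y (insert (a, b) E) := by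
  constructor
  · intro e he
    rcases Finset.mem_insert.mp he with rfl | he
    · exact hab
    · exact h.lt e he
  · intro e he
    rcases Finset.mem_insert.mp he with rfl | he
    · exact h1
    · exact h.ve e he
  · intro e he f hf ξ a1 a2 a3 a4 a5
    rcases Finset.mem_insert.mp he with rfl | he
    · rcases Finset.mem_insert.mp hf with rfl | hf
      · rfl
      · exact h2 f hf ξ a1 a2 a3 a4 a5
    · rcases Finset.mem_insert.mp hf with rfl | hf
      · exact (h2 e he ξ a3 a4 a1 a2 a5.symm).symm
      · exact h.ee e he f hf ξ a1 a2 a3 a4 a5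

lemma mem_dn {x y : W → ℝ} {E : Finset (W × W)} {w : W} : w ∈ dn x y E ↔
    ∀ e ∈ E, x e.1 < x w → x w < x e.2 → y w ≤ ht x y e (x w) := by
  simp only [dn, Finset.mem_filter, Finset.mem_univ, true_and, not_exists, not_and, not_lt]

lemma mem_up {x y : W → ℝ} {E : Finset (W × W)} {w : W} : w ∈ up x y E ↔
    ∀ e ∈ E, x e.1 < x w → x w < x e.2 → ht x y e (x w) ≤ y w := by
  simp only [up, Finset.mem_filter, Finset.mem_univ, true_and, not_exists, not_and, not_lt]

/-- the tight situation -/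
structure Tight (x y : W → ℝ) (E : Finset (W × W)) (Dn : Finset W) : Prop where
  inj : Function.Injective x
  nc : NC x y E
  sub : Dn ⊆ dn x y E
  card : E.card + Dn.card + 3 = 3 * Fintype.card W
  two : 2 ≤ Fintype.card W

lemma Tight.dn_eq {x y : W → ℝ} {E : Finset (W × W)} {Dn : Finset W} (h : Tight x y E Dn) :
    dn x y E = Dn := by
  have := edge_bound h.inj h.nc (le_refl (dn x y E)) h.two
  have h2 := h.card
  exact (Finset.eq_of_subset_of_card_le h.sub (by omega)).symm

lemma Tight.rel_pos {x y : W → ℝ} {E : Finset (W × W)} {Dn : Finset W} (h : Tight x y E Dn)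
    {a b : W} (ha : a ∈ Dn) (hb : b ∈ Dn) (hab : x a < x b)
    (hc : ∀ c ∈ Dn, x a < x c → x c < x b → False) :
    ∀ w, x a < x w → x w < x b → ht x y (a, b) (x w) < y w := by
  by_contra hcon
  push Not at hcon
  obtain ⟨w0, hw0⟩ := hcon
  obtain ⟨w, hw, hmin⟩ := Finset.exists_min_image
    (Finset.univ.filter fun w => x a < x w ∧ x w < x b) (fun w => y w - ht x y (a, b) (x w))
    ⟨w0, by simp [hw0.1, hw0.2.1]⟩
  simp only [Finset.mem_filter, Finset.mem_univ, true_and] at hw hmin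
  have hm0 := hmin w0 ⟨hw0.1, hw0.2.1⟩
  have hnot : w ∉ dn x y E := by
    rw [h.dn_eq]; intro hh; exact hc w hh hw.1 hw.2
  rw [mem_dn] at hnot
  push Not at hnot
  obtain ⟨e, he, e1, e2, e3⟩ := hnot
  obtain ⟨p, q, hpq⟩ := ht_sub_aff x y e (a, b)
  set m := y w - ht x y (a, b) (x w) with hm
  have hm1 : m ≤ 0 := by linarith [hw0.2.2]
  have hhab : ht x y (a, b) (x b) = y b := ht_right x y (a, b) hab
  have hhaa : ht x y (a, b) (x a) = y a := ht_left x y (a, b)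
  have k1 : ∃ ξ₁, ξ₁ < x w ∧ m ≤ p + q * ξ₁ := by
    rcases lt_trichotomy (x e.1) (x a) with hh | hh | hh
    · refine ⟨x a, hw.1, ?_⟩
      rw [← hpq]
      have := mem_dn.mp (h.sub ha) e he hh (by linarith)
      linarith
    · have := h.inj hh
      refine ⟨x e.1, e1, ?_⟩
      rw [← hpq, ht_left, this, hhaa]; linarith
    · refine ⟨x e.1, e1, ?_⟩
      rw [← hpq, ht_left]; exact hmin _ ⟨hh, by linarith⟩
  have k2 : ∃ ξ₁, x w < ξ₁ ∧ m ≤ p + q * ξ₁ := by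
    have hlt := h.nc.lt e he
    rcases lt_trichotomy (x e.2) (x b) with hh | hh | hh
    · refine ⟨x e.2, e2, ?_⟩
      rw [← hpq, ht_right _ _ _ hlt]; exact hmin _ ⟨by linarith, hh⟩
    · have := h.inj hh
      refine ⟨x e.2, e2, ?_⟩
      rw [← hpq, ht_right _ _ _ hlt, this, hhab]; linarith
    · refine ⟨x b, hw.2, ?_⟩
      rw [← hpq]
      have := mem_dn.mp (h.sub hb) e he (by linarith) hh
      linarith
  obtain ⟨ξ₁, i1, i2⟩ := k1
  obtain ⟨ξ₂, j1, j2⟩ := k2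
  have := aff_lo p q i1 j1 i2 j2
  rw [← hpq] at this
  linarith

lemma Tight.adj {x y : W → ℝ} {E : Finset (W × W)} {Dn : Finset W} (h : Tight x y E Dn)
    {a b : W} (ha : a ∈ Dn) (hb : b ∈ Dn) (hab : x a < x b)
    (hc : ∀ c ∈ Dn, x a < x c → x c < x b → False) : (a, b) ∈ E := by
  by_contra hE
  have hrel := h.rel_pos ha hb hab hc
  have hhab : ht x y (a, b) (x b) = y b := ht_right x y (a, b) hab
  have hhaa : ht x y (a, b) (x a) = y a := ht_left x y (a, b)
  have hnc : NC x y (insert (a, b) E) := by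
    apply h.nc.insert hab
    · intro w h1 h2; exact (hrel w h1 h2).ne
    · intro e he ξ a1 a2 a3 a4 a5
      obtain ⟨p, q, hpq⟩ := ht_sub_aff x y e (a, b)
      have k1 : ∃ ξ₁, ξ₁ < ξ ∧ 0 ≤ p + q * ξ₁ ∧ (e.1 = a ∨ 0 < p + q * ξ₁) := by
        rcases lt_trichotomy (x e.1) (x a) with hh | hh | hh
        · have h1 := mem_dn.mp (h.sub ha) e he hh (by linarith)
          have h2 := h.nc.ve e he a hh (by linarith)
          have h3 : y a < ht x y e (x a) := lt_of_le_of_ne h1 h2.symm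
          have h4 : 0 < p + q * x a := by rw [← hpq]; linarith
          exact ⟨x a, a1, h4.le, Or.inr h4⟩
        · have h1 := h.inj hh
          refine ⟨x e.1, a3, ?_, Or.inl h1⟩
          rw [← hpq, ht_left, h1, hhaa]; linarith
        · have h4 : 0 < p + q * x e.1 := by
            rw [← hpq, ht_left]; linarith [hrel _ hh (by linarith)]
          exact ⟨x e.1, a3, h4.le, Or.inr h4⟩
      have k2 : ∃ ξ₁, ξ < ξ₁ ∧ 0 ≤ p + q * ξ₁ ∧ (e.2 = b ∨ 0 < p + q * ξ₁) := by
        have hlt := h.nc.lt e he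
        rcases lt_trichotomy (x e.2) (x b) with hh | hh | hh
        · have h4 : 0 < p + q * x e.2 := by
            rw [← hpq, ht_right _ _ _ hlt]; linarith [hrel _ (by linarith) hh]
          exact ⟨x e.2, a4, h4.le, Or.inr h4⟩
        · have h1 := h.inj hh
          refine ⟨x e.2, a4, ?_, Or.inl h1⟩
          rw [← hpq, ht_right _ _ _ hlt, h1, hhab]; linarith
        · have h1 := mem_dn.mp (h.sub hb) e he (by linarith) hh
          have h2 := h.nc.ve e he b (by linarith) hh
          have h3 : y b < ht x y e (x b) := lt_of_le_of_ne h1 h2.symm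
          have h4 : 0 < p + q * x b := by rw [← hpq]; linarith
          exact ⟨x b, a2, h4.le, Or.inr h4⟩
      obtain ⟨ξ₁, i1, i2, i3⟩ := k1
      obtain ⟨ξ₂, j1, j2, j3⟩ := k2
      obtain ⟨z1, z2⟩ := aff_zero p q i1 j1 i2 j2 (by rw [← hpq]; linarith)
      rcases i3 with i3 | i3
      · rcases j3 with j3 | j3
        · rw [← i3, ← j3]
        · linarith
      · linarith
  have hsub : Dn ⊆ dn x y (insert (a, b) E) := by
    intro c hcD
    rw [mem_dn]
    intro e he h1 h2
    rcases Finset.mem_insert.mp he with rfl | he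
    · exact (hc c hcD h1 h2).elim
    · exact mem_dn.mp (h.sub hcD) e he h1 h2
  have := edge_bound h.inj hnc hsub h.two
  rw [Finset.card_insert_of_notMem hE] at this
  have := h.card
  omega

lemma Tight.outer_mem {x y : W → ℝ} {E : Finset (W × W)} {Dn : Finset W} (h : Tight x y E Dn)
    {a : W} (ha : (∀ w, x a ≤ x w) ∨ (∀ w, x w ≤ x a)) : a ∈ Dn := by
  rw [← h.dn_eq, mem_dn]
  rintro e he h1 h2
  rcases ha with ha | ha
  · linarith [ha e.1]
  · linarith [ha e.2]

lemma Tight.up_eq {x y : W → ℝ} {E : Finset (W × W)} {Dn : Finset W} (h : Tight x y E Dn)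
    {a b : W} (hab : a ≠ b) (ha : ∀ w, x a ≤ x w) (hb : ∀ w, x w ≤ x b) {w : W}
    (hw : w ∈ up x y E) : w = a ∨ w = b := by
  by_contra hcon
  push Not at hcon
  have h3 : 3 ≤ (up x y E).card := by
    have : ({a, b, w} : Finset W).card = 3 := Finset.card_eq_three.mpr
      ⟨a, b, w, hab, hcon.1.symm, hcon.2.symm, rfl⟩
    rw [← this]
    apply Finset.card_le_card
    intro u hu
    simp only [Finset.mem_insert, Finset.mem_singleton] at hu
    rcases hu with rfl | rfl | rfl
    · exact first_mem_up ha
    · exact last_mem_up hb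
    · exact hw
  haveI : Nonempty W := ⟨a⟩
  have := sweep h.inj h.nc
  have h4 := Finset.card_le_card h.sub
  have := h.card
  omega

lemma Tight.outer_rel {x y : W → ℝ} {E : Finset (W × W)} {Dn : Finset W} (h : Tight x y E Dn)
    {a b : W} (hab : a ≠ b) (ha : ∀ w, x a ≤ x w) (hb : ∀ w, x w ≤ x b) :
    ∀ w, w ≠ a → w ≠ b → y w < ht x y (a, b) (x w) := by
  have hlt : x a < x b := lt_of_le_of_ne (ha b) (fun hh => hab (h.inj hh))
  by_contra hcon
  push Not at hcon
  obtain ⟨w0, hw0⟩ := hcon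
  obtain ⟨w, hw, hmin⟩ := Finset.exists_max_image
    (Finset.univ.filter fun w => w ≠ a ∧ w ≠ b) (fun w => y w - ht x y (a, b) (x w))
    ⟨w0, by simp [hw0.1, hw0.2.1]⟩
  simp only [Finset.mem_filter, Finset.mem_univ, true_and] at hw hmin
  have hm0 := hmin w0 ⟨hw0.1, hw0.2.1⟩
  have hnot : w ∉ up x y E := by
    intro hh; rcases h.up_eq hab ha hb hh with hh | hh
    · exact hw.1 hh
    · exact hw.2 hh
  rw [mem_up] at hnot
  push Not at hnot
  obtain ⟨e, he, e1, e2, e3⟩ := hnot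
  obtain ⟨p, q, hpq⟩ := ht_sub_aff x y (a, b) e
  set m := y w - ht x y (a, b) (x w) with hm
  have hm1 : 0 ≤ m := by linarith [hw0.2.2]
  have hhab : ht x y (a, b) (x b) = y b := ht_right x y (a, b) hlt
  have hhaa : ht x y (a, b) (x a) = y a := ht_left x y (a, b)
  have key : ∀ u, -m ≤ ht x y (a, b) (x u) - y u := by
    intro u
    by_cases hu : u = a
    · subst hu; rw [hhaa]; linarith
    by_cases hu2 : u = b
    · subst hu2; rw [hhab]; linarith
    have := hmin u ⟨hu, hu2⟩
    linarith
  have := aff_lo p q e1 e2 (m := -m) (by rw [← hpq, ht_left]; exact key _)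
    (by rw [← hpq, ht_right _ _ _ (h.nc.lt e he)]; exact key _)
  rw [← hpq] at this
  linarith

lemma Tight.outer_adj {x y : W → ℝ} {E : Finset (W × W)} {Dn : Finset W} (h : Tight x y E Dn)
    {a b : W} (hab : a ≠ b) (ha : ∀ w, x a ≤ x w) (hb : ∀ w, x w ≤ x b) : (a, b) ∈ E := by
  by_contra hE
  have hlt : x a < x b := lt_of_le_of_ne (ha b) (fun hh => hab (h.inj hh))
  have hrel := h.outer_rel hab ha hb
  have hhab : ht x y (a, b) (x b) = y b := ht_right x y (a, b) hlt
  have hhaa : ht x y (a, b) (x a) = y a := ht_left x y (a, b)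
  have hne : ∀ w, x a < x w → w ≠ a := by rintro w hw rfl; exact lt_irrefl _ hw
  have hne' : ∀ w, x w < x b → w ≠ b := by rintro w hw rfl; exact lt_irrefl _ hw
  have key : ∀ u, 0 ≤ ht x y (a, b) (x u) - y u := by
    intro u
    by_cases hu : u = a
    · subst hu; rw [hhaa]; linarith
    by_cases hu2 : u = b
    · subst hu2; rw [hhab]; linarith
    linarith [hrel u hu hu2]
  have key2 : ∀ u, ht x y (a, b) (x u) - y u = 0 → u = a ∨ u = b := by
    intro u h0
    by_contra hc
    push Not at hc
    linarith [hrel u hc.1 hc.2]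
  have hnc : NC x y (insert (a, b) E) := by
    apply h.nc.insert hlt
    · intro w h1 h2; exact (hrel w (hne w h1) (hne' w h2)).ne'
    · intro e he ξ a1 a2 a3 a4 a5
      obtain ⟨p, q, hpq⟩ := ht_sub_aff x y (a, b) e
      have hlt2 := h.nc.lt e he
      obtain ⟨z1, z2⟩ := aff_zero p q a3 a4 (by rw [← hpq, ht_left]; exact key _)
        (by rw [← hpq, ht_right _ _ _ hlt2]; exact key _) (by rw [← hpq]; linarith)
      rw [← hpq, ht_left] at z1
      rw [← hpq, ht_right _ _ _ hlt2] at z2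
      have w1 := key2 _ z1
      have w2 := key2 _ z2
      have n1 : e.1 ≠ b := by
        intro hh; rw [hh] at hlt2; linarith [hb e.2]
      have n2 : e.2 ≠ a := by
        intro hh; rw [hh] at hlt2; linarith [ha e.1]
      have w1 := w1.resolve_right n1
      have w2 := w2.resolve_left n2
      rw [← w1, ← w2]
  have hsub : Dn ⊆ dn x y (insert (a, b) E) := by
    intro c hcD
    rw [mem_dn]
    intro e he h1 h2
    rcases Finset.mem_insert.mp he with rfl | he
    · exact (hrel c (hne c h1) (hne' c h2)).le
    · exact mem_dn.mp (h.sub hcD) e he h1 h2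
  have := edge_bound h.inj hnc hsub h.two
  rw [Finset.card_insert_of_notMem hE] at this
  have := h.card
  omega

end Planar2
end KAT

namespace KAT
section HalfPlane
variable {U : Type*} [Fintype U] [DecidableEq U]

/-- A packing of round disks in the closed upper half plane. -/
structure HP (H : SimpleGraph U) (t s r : U → ℝ) : Prop where
  rpos : ∀ u, 0 < r u
  above : ∀ u, r u ≤ s u
  sep : ∀ u w, u ≠ w → (r u + r w) ^ 2 ≤ (t u - t w) ^ 2 + (s u - s w) ^ 2
  adj : ∀ u w, u ≠ w → (H.Adj u w ↔ (t u - t w) ^ 2 + (s u - s w) ^ 2 = (r u + r w) ^ 2)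

variable {H : SimpleGraph U} {t s r : U → ℝ}

lemma HP.K (h : HP H t s r) {a b u : U} (hab : H.Adj a b) (ha : u ≠ a) (hb : u ≠ b) {l : ℝ}
    (l0 : 0 ≤ l) (l1 : l ≤ 1) :
    r u ^ 2 < ((1 - l) * t a + l * t b - t u) ^ 2 + ((1 - l) * s a + l * s b - s u) ^ 2 := by
  have e1 := (h.adj a b hab.ne).mp hab
  have e2 := h.sep a u ha.symm
  have e3 := h.sep b u hb.symm
  have id1 : ((1 - l) * t a + l * t b - t u) ^ 2 + ((1 - l) * s a + l * s b - s u) ^ 2 =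
      (1 - l) * ((t a - t u) ^ 2 + (s a - s u) ^ 2) + l * ((t b - t u) ^ 2 + (s b - s u) ^ 2)
      - l * (1 - l) * ((t a - t b) ^ 2 + (s a - s b) ^ 2) := by ring
  rw [id1, e1]
  have f2 := mul_le_mul_of_nonneg_left e2 (sub_nonneg.mpr l1)
  have f3 := mul_le_mul_of_nonneg_left e3 l0
  have id2 : (1 - l) * (r a + r u) ^ 2 + l * (r b + r u) ^ 2 - l * (1 - l) * (r a + r b) ^ 2
      = r u ^ 2 + 2 * r u * ((1 - l) * r a + l * r b) + ((1 - l) * r a - l * r b) ^ 2 := by ring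
  have pa := h.rpos a
  have pb := h.rpos b
  have pu := h.rpos u
  have f4 : 0 < (1 - l) * r a + l * r b := by
    rcases eq_or_lt_of_le l0 with rfl | l0
    · simpa using pa
    · have := mul_pos l0 pb
      have := mul_nonneg (sub_nonneg.mpr l1) pa.le
      linarith
  have f5 := mul_pos (mul_pos two_pos pu) f4
  have f6 := sq_nonneg ((1 - l) * r a - l * r b)
  linarith

/-- parametrisation of a point on an edge -/
lemma ht_param (x y : U → ℝ) (e : U × U) {ξ : ℝ} (h1 : x e.1 < ξ) (h2 : ξ < x e.2) :
    ∃ l : ℝ, 0 < l ∧ l < 1 ∧ ξ = (1 - l) * x e.1 + l * x e.2 ∧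
      ht x y e ξ = (1 - l) * y e.1 + l * y e.2 := by
  have hp : 0 < x e.2 - x e.1 := by linarith
  have hne := hp.ne'
  refine ⟨(ξ - x e.1) / (x e.2 - x e.1), div_pos (by linarith) hp, ?_, ?_, ?_⟩
  · rw [div_lt_one hp]; linarith
  · field_simp; ring
  · unfold ht; field_simp; ring

variable (H) in
/-- left-to-right oriented edges -/
noncomputable def oe (x : U → ℝ) : Finset (U × U) :=
  open Classical in Finset.univ.filter fun e => H.Adj e.1 e.2 ∧ x e.1 < x e.2

lemma mem_oe {x : U → ℝ} {e : U × U} : e ∈ oe H x ↔ H.Adj e.1 e.2 ∧ x e.1 < x e.2 := by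
  simp [oe]

variable (H) in
/-- oriented edges -/
noncomputable def de : Finset (U × U) :=
  open Classical in Finset.univ.filter fun e => H.Adj e.1 e.2

lemma oe_card {x : U → ℝ} (hx : Function.Injective x) : 2 * (oe H x).card = (de H).card := by
  classical
  have h1 : de H = oe H x ∪ (oe H x).map (Equiv.prodComm U U).toEmbedding := by
    ext ⟨a, b⟩
    simp only [de, Finset.mem_filter, Finset.mem_univ, true_and, Finset.mem_union, mem_oe,
      Finset.mem_map_equiv]
    simp only [Equiv.prodComm_symm, Equiv.prodComm_apply, Prod.swap]
    constructor
    · intro h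
      rcases lt_trichotomy (x a) (x b) with hh | hh | hh
      · exact Or.inl ⟨h, hh⟩
      · exact absurd (hx hh) h.ne
      · exact Or.inr ⟨h.symm, hh⟩
    · rintro (h | h)
      · exact h.1
      · exact h.1.symm
  rw [h1, Finset.card_union_of_disjoint, Finset.card_map, two_mul]
  rw [Finset.disjoint_left]
  rintro ⟨a, b⟩ h1 h2
  rw [mem_oe] at h1
  rw [Finset.mem_map_equiv, mem_oe] at h2
  simp only [Equiv.prodComm_symm, Equiv.prodComm_apply, Prod.swap] at h2
  linarith [h1.2, h2.2]

lemma HP.inDisk (h : HP H t s r) {a b : U} (hab : H.Adj a b) {l : ℝ} (l0 : 0 < l) (l1 : l < 1) :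
    ((1 - l) * t a + l * t b - t a) ^ 2 + ((1 - l) * s a + l * s b - s a) ^ 2 ≤ r a ^ 2 ∨
    ((1 - l) * t a + l * t b - t b) ^ 2 + ((1 - l) * s a + l * s b - s b) ^ 2 ≤ r b ^ 2 := by
  have e1 := (h.adj a b hab.ne).mp hab
  have pa := h.rpos a
  have pb := h.rpos b
  rcases le_total (l * (r a + r b)) (r a) with hh | hh
  · left
    have : ((1 - l) * t a + l * t b - t a) ^ 2 + ((1 - l) * s a + l * s b - s a) ^ 2
      = l ^ 2 * ((t a - t b) ^ 2 + (s a - s b) ^ 2) := by ring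
    rw [this, e1, ← mul_pow]
    exact pow_le_pow_left₀ (by positivity) hh 2
  · right
    have : ((1 - l) * t a + l * t b - t b) ^ 2 + ((1 - l) * s a + l * s b - s b) ^ 2
      = (1 - l) ^ 2 * ((t a - t b) ^ 2 + (s a - s b) ^ 2) := by ring
    rw [this, e1, ← mul_pow]
    have : 0 < 1 - l := by linarith
    exact pow_le_pow_left₀ (by positivity) (by linarith) 2

lemma HP.share (h : HP H t s r) {a b c d : U} (hab : H.Adj a b) (hcd : H.Adj c d) {l m : ℝ}
    (l0 : 0 < l) (l1 : l < 1) (m0 : 0 < m) (m1 : m < 1)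
    (e1 : (1 - l) * t a + l * t b = (1 - m) * t c + m * t d)
    (e2 : (1 - l) * s a + l * s b = (1 - m) * s c + m * s d) : a = c ∨ a = d ∨ b = c ∨ b = d := by
  by_contra hc
  push Not at hc
  obtain ⟨n1, n2, n3, n4⟩ := hc
  have k1 := h.K hcd n1 n2 m0.le m1.le
  have k2 := h.K hcd n3 n4 m0.le m1.le
  have := h.inDisk hab l0 l1
  rw [e1, e2] at this
  rcases this with hh | hh <;> linarith

lemma HP.nc (h : HP H t s r) {ε : ℝ} {x : U → ℝ} (hx : Function.Injective x)
    (hxe : ∀ u, x u = t u + ε * s u) : NC x s (oe H x) := by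
  have hve : ∀ e ∈ oe H x, ∀ w, x e.1 < x w → x w < x e.2 → ht x s e (x w) ≠ s w := by
    intro e he w h1 h2 h3
    obtain ⟨hA, hlt⟩ := mem_oe.mp he
    obtain ⟨l, l0, l1, p1, p2⟩ := ht_param x s e h1 h2
    have n1 : w ≠ e.1 := by rintro rfl; exact lt_irrefl _ h1
    have n2 : w ≠ e.2 := by rintro rfl; exact lt_irrefl _ h2
    have k := h.K hA n1 n2 l0.le l1.le
    rw [h3] at p2
    have p3 : t w = (1 - l) * t e.1 + l * t e.2 := by
      rw [hxe, hxe, hxe, p2] at p1; linear_combination p1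
    rw [← p2, ← p3] at k
    have := h.rpos w
    nlinarith
  refine ⟨fun e he => (mem_oe.mp he).2, hve, ?_⟩
  intro e he f hf ξ a1 a2 b1 b2 hh
  obtain ⟨hA, hlt⟩ := mem_oe.mp he
  obtain ⟨hB, hlt'⟩ := mem_oe.mp hf
  obtain ⟨l, l0, l1, p1, p2⟩ := ht_param x s e a1 a2
  obtain ⟨m, m0, m1, q1, q2⟩ := ht_param x s f b1 b2
  have e2 : (1 - l) * s e.1 + l * s e.2 = (1 - m) * s f.1 + m * s f.2 := by
    rw [← p2, ← q2, hh]
  have e1 : (1 - l) * t e.1 + l * t e.2 = (1 - m) * t f.1 + m * t f.2 := by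
    rw [q1] at p1; simp only [hxe] at p1; linear_combination -p1 - ε * e2
  rcases h.share hA hB l0 l1 m0 m1 e1 e2 with k | k | k | k
  · have hs : ∀ η, ht x s e η = ht x s f η := by
      intro η
      have hh' := hh
      unfold ht at hh' ⊢
      rw [k] at hh' ⊢
      have : ξ - x f.1 ≠ 0 := by linarith
      have h2 := mul_right_cancel₀ this (add_left_cancel hh')
      rw [h2]
    rcases lt_trichotomy (x e.2) (x f.2) with h4 | h4 | h4
    · exact absurd (by rw [← hs, ht_right _ _ _ hlt]) (hve f hf e.2 (by rw [← k]; exact hlt) h4)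
    · exact Prod.ext k (hx h4)
    · exact absurd (by rw [hs, ht_right _ _ _ hlt']) (hve e he f.2 (by rw [k]; exact hlt') h4)
  · rw [k] at a1; linarith
  · rw [k] at a2; linarith
  · have hs : ∀ η, ht x s e η = ht x s f η := by
      intro η
      have r1 := ht_right x s e hlt
      have r2 := ht_right x s f hlt'
      rw [k] at r1
      obtain ⟨p, q, hpq⟩ := ht_sub_aff x s e f
      have z1 := hpq (x f.2)
      have z2 := hpq ξ
      have hq : q * (x f.2 - ξ) = 0 := by linear_combination -z1 + z2 + r1 - r2 - hh
      have hq0 : q = 0 := by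
        rcases mul_eq_zero.mp hq with h5 | h5
        · exact h5
        · linarith
      have z3 := hpq η
      rw [hq0] at z2 z3
      linarith
    rcases lt_trichotomy (x e.1) (x f.1) with h4 | h4 | h4
    · exact absurd (by rw [hs, ht_left]) (hve e he f.1 h4 (by rw [k]; exact hlt'))
    · exact Prod.ext (hx h4) k
    · exact absurd (by rw [← hs, ht_left]) (hve f hf e.1 h4 (by rw [← k]; exact hlt))

/-- bottom disks -/
noncomputable def bot (s r : U → ℝ) : Finset U :=
  open Classical in Finset.univ.filter fun u => s u = r u

lemma mem_bot {u : U} : u ∈ bot s r ↔ s u = r u := by simp [bot]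

lemma HP.sub_dn (h : HP H t s r) {ε : ℝ} {x : U → ℝ} 
    (hxe : ∀ u, x u = t u + ε * s u) (hε : ∀ u w, ε ^ 2 * r u ≤ s w) : bot s r ⊆ dn x s (oe H x) := by
  intro u hu
  rw [mem_bot] at hu
  rw [mem_dn]
  intro e he h1 h2
  by_contra h3
  push Not at h3
  obtain ⟨hA, hlt⟩ := mem_oe.mp he
  obtain ⟨l, l0, l1, p1, p2⟩ := ht_param x s e h1 h2
  have n1 : u ≠ e.1 := by rintro rfl; exact lt_irrefl _ h1
  have n2 : u ≠ e.2 := by rintro rfl; exact lt_irrefl _ h2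
  have k := h.K hA n1 n2 l0.le l1.le
  rw [← p2] at k
  set m := ht x s e (x u) with hm
  have hm1 : ε ^ 2 * r u ≤ m := by
    rw [p2]
    have := mul_le_mul_of_nonneg_left (hε u e.1) (by linarith : 0 ≤ 1 - l)
    have := mul_le_mul_of_nonneg_left (hε u e.2) l0.le
    linarith
  have p3 : (1 - l) * t e.1 + l * t e.2 - t u = ε * (s u - m) := by
    rw [p2]; simp only [hxe] at p1; linear_combination -p1
  rw [p3] at k
  rw [hu] at k h3
  have hr := h.rpos u
  have hm0 : 0 < m := by
    rw [p2]
    have a1 := lt_of_lt_of_le (h.rpos e.1) (h.above e.1)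
    have a2 := lt_of_lt_of_le (h.rpos e.2) (h.above e.2)
    have := mul_pos l0 a2
    have := mul_pos (by linarith : 0 < 1 - l) a1
    linarith
  have g1 : ε ^ 2 * (r u - m) ^ 2 ≤ m * (r u - m) := by
    have : ε ^ 2 * (r u - m) ≤ m := by nlinarith [sq_nonneg ε]
    nlinarith
  nlinarith

lemma HP.exists_eps (h : HP H t s r) : ∃ ε : ℝ, 0 < ε ∧
    (∀ u w, t u < t w → t u + ε * s u < t w + ε * s w) ∧ (∀ u w, ε ^ 2 * r u ≤ s w) := by
  have h1 : ∀ᶠ ε : ℝ in nhdsWithin 0 (Set.Ioi 0), 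
      (∀ u w, t u < t w → t u + ε * s u < t w + ε * s w) ∧ (∀ u w, ε ^ 2 * r u ≤ s w) := by
    apply eventually_nhdsWithin_of_eventually_nhds
    rw [Filter.eventually_and]
    constructor
    · simp only [Filter.eventually_all]
      intro u w huw
      apply Filter.Tendsto.eventually_lt (f := fun ε : ℝ => t u + ε * s u) (g := fun ε => t w + ε * s w)
        (y := t u) (z := t w) ?_ ?_ huw
      · exact Continuous.tendsto' (by fun_prop) _ _ (by simp)
      · exact Continuous.tendsto' (by fun_prop) _ _ (by simp)
    · simp only [Filter.eventually_all]
      intro u w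
      have : 0 < s w := lt_of_lt_of_le (h.rpos w) (h.above w)
      exact (Filter.Tendsto.eventually_lt (f := fun ε : ℝ => ε ^ 2 * r u) (g := fun ε => s w)
        (y := 0) (z := s w) (Continuous.tendsto' (by fun_prop) _ _ (by simp)) tendsto_const_nhds this).mono
        fun _ h => h.le
  obtain ⟨ε, e1, e2⟩ := (h1.and self_mem_nhdsWithin).exists
  exact ⟨ε, e2, e1⟩

lemma rel_iff {x y : U → ℝ} {a b w : U} (h : x a < x b) :
    ht x y (a, b) (x w) < y w ↔ (y b - y a) * (x w - x a) < (y w - y a) * (x b - x a) := by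
  have hp : 0 < x b - x a := by linarith
  unfold ht
  rw [← mul_lt_mul_iff_left₀ hp]
  simp only
  constructor
  · intro h; field_simp at h; linarith
  · intro h; field_simp; linarith

lemma rel_iff' {x y : U → ℝ} {a b w : U} (h : x a < x b) :
    y w < ht x y (a, b) (x w) ↔ (y w - y a) * (x b - x a) < (y b - y a) * (x w - x a) := by
  have hp : 0 < x b - x a := by linarith
  unfold ht
  rw [← mul_lt_mul_iff_left₀ hp]
  simp only
  constructor
  · intro h; field_simp at h; linarith
  · intro h; field_simp; linarith

lemma HP.planar (h : HP H t s r) (hcard : (de H).card + 2 * (bot s r).card + 6 = 6 * Fintype.card U)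
    (h2 : 2 ≤ Fintype.card U) :
    (∀ a ∈ bot s r, ∀ b ∈ bot s r, t a < t b → (∀ c ∈ bot s r, t a < t c → t c < t b → False) →
      H.Adj a b ∧ ∀ w, t a < t w → t w < t b →
        (s b - s a) * (t w - t a) < (s w - s a) * (t b - t a)) ∧
    ∃ a ∈ bot s r, ∃ b ∈ bot s r, (∀ w, t a ≤ t w ∧ t w ≤ t b) ∧ H.Adj a b ∧
      ∀ w, w ≠ a → w ≠ b → (s w - s a) * (t b - t a) < (s b - s a) * (t w - t a) := by
  obtain ⟨ε, e0, e1, e2⟩ := h.exists_eps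
  set x : U → ℝ := fun u => t u + ε * s u with hxdef
  have hxe : ∀ u, x u = t u + ε * s u := fun u => rfl
  have hx : Function.Injective x := by
    intro u w huw
    by_contra hne
    have hh := h.sep u w hne
    have hp : 0 < (r u + r w) ^ 2 := by have := h.rpos u; have := h.rpos w; positivity
    rcases lt_trichotomy (t u) (t w) with k | k | k
    · exact (e1 u w k).ne huw
    · rw [hxe, hxe, k] at huw
      have : s u = s w := by
        have := add_left_cancel huw
        exact mul_left_cancel₀ e0.ne' this
      rw [k, this] at hh; simp only [sub_self] at hh; linarith
    · exact (e1 w u k).ne' huw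
  have hT : Tight x s (oe H x) (bot s r) := by
    refine ⟨hx, h.nc hx hxe, h.sub_dn hxe e2, ?_, h2⟩
    have := oe_card (H := H) hx
    omega
  have tdist : ∀ a ∈ bot s r, ∀ b ∈ bot s r, a ≠ b → t a ≠ t b := by
    intro a ha b hb hab ht'
    have := h.sep a b hab
    rw [mem_bot] at ha hb
    rw [ht', ha, hb] at this
    nlinarith [h.rpos a, h.rpos b]
  have le_of : ∀ u w, x u ≤ x w → t u ≤ t w := by
    intro u w huw
    by_contra hc
    push Not at hc
    exact absurd (e1 w u hc) (not_lt.mpr huw)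
  refine ⟨?_, ?_⟩
  · intro a ha b hb hab hc
    have hc' : ∀ c ∈ bot s r, x a < x c → x c < x b → False := by
      intro c hcb h1 h2
      refine hc c hcb (lt_of_le_of_ne (le_of _ _ h1.le) ?_) (lt_of_le_of_ne (le_of _ _ h2.le) ?_)
      · exact tdist a ha c hcb (by rintro rfl; exact lt_irrefl _ h1)
      · exact tdist c hcb b hb (by rintro rfl; exact lt_irrefl _ h2)
    have hab' := e1 a b hab
    refine ⟨(mem_oe.mp (hT.adj ha hb hab' hc')).1, ?_⟩
    intro w h1 h2
    have := (rel_iff hab').mp (hT.rel_pos ha hb hab' hc' w (e1 _ _ h1) (e1 _ _ h2))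
    simp only [hxe] at this
    linarith
  · haveI : Nontrivial U := Fintype.one_lt_card_iff_nontrivial.mp h2
    obtain ⟨a, ha⟩ := Finite.exists_min x
    obtain ⟨b, hb⟩ := Finite.exists_max x
    have hab : a ≠ b := by
      rintro rfl
      obtain ⟨c, hc⟩ := exists_ne a
      exact hc (hx (le_antisymm (hb c) (ha c)))
    have hlt : x a < x b := lt_of_le_of_ne (ha b) (fun hh => hab (hx hh))
    refine ⟨a, hT.outer_mem (Or.inl ha), b, hT.outer_mem (Or.inr hb),
      fun w => ⟨le_of _ _ (ha w), le_of _ _ (hb w)⟩, (mem_oe.mp (hT.outer_adj hab ha hb)).1, ?_⟩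
    intro w h1 h2
    have := (rel_iff' hlt).mp (hT.outer_rel hab ha hb w h1 h2)
    simp only [hxe] at this
    linarith

end HalfPlane
end KAT

namespace KAT
section HalfPlane
variable {U : Type*} [Fintype U] [DecidableEq U]
variable {H : SimpleGraph U} {t s r : U → ℝ}

lemma HP.vert (h : HP H t s r) {a u : U} (ha : s a = r a) (hu : u ≠ a)
    (hsp : t u ^ 2 + (s u - 1) ^ 2 = r u ^ 2) {l : ℝ} (l0 : 0 < l) (l1 : l ≤ 1)
    (h1 : l * t u = t a) (h2 : (1 - l) + l * s u ≤ r a) : False := by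
  have hsep := h.sep a u hu.symm
  have hru := h.rpos u
  have hra := h.rpos a
  have hsu : 0 < s u := lt_of_lt_of_le hru (h.above u)
  set zs := (1 - l) + l * s u with hzs
  have hz0 : 0 < zs := by have := mul_pos l0 hsu; linarith
  have hid : t a - t u = -((1 - l) * t u) := by rw [← h1]; ring
  have hid2 : zs - s u = (1 - l) * (1 - s u) := by rw [hzs]; ring
  have hρ : (t a - t u) ^ 2 + (zs - s u) ^ 2 = ((1 - l) * r u) ^ 2 := by
    rw [hid, hid2]; linear_combination (1 - l) ^ 2 * hsp
  have hρ0 : 0 ≤ (1 - l) * r u := mul_nonneg (by linarith) hru.le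
  have hb : zs - s u ≤ (1 - l) * r u := by
    exact abs_le_of_sq_le_sq' (by nlinarith [sq_nonneg (t a - t u)]) hρ0 |>.2
  have hd : 0 ≤ r a - zs := by linarith
  have h5 : (t a - t u) ^ 2 + (s a - s u) ^ 2 ≤ ((1 - l) * r u + (r a - zs)) ^ 2 := by
    rw [ha]
    have := mul_le_mul_of_nonneg_right hb hd
    nlinarith
  have h6 : ((1 - l) * r u + (r a - zs)) ^ 2 < (r a + r u) ^ 2 := by
    apply pow_lt_pow_left₀ _ (by linarith) two_ne_zero
    nlinarith
  linarith

lemma HP.cross (h : HP H t s r) {a b u : U} (ha : s a = r a) (hb : s b = r b) (hab : H.Adj a b)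
    (hlt : t a < t b) (hua : u ≠ a) (hub : u ≠ b)
    (hsp : t u ^ 2 + (s u - 1) ^ 2 = r u ^ 2) {l : ℝ} (l0 : 0 < l) (l1 : l ≤ 1)
    (h1 : t a ≤ l * t u) (h2 : l * t u ≤ t b)
    (h3 : ((1 - l) + l * s u - r a) * (t b - t a) ≤ (r b - r a) * (l * t u - t a))
    (h4 : l * t u = t a ∨ l * t u = t b ∨
      ((1 - l) + l * s u - r a) * (t b - t a) = (r b - r a) * (l * t u - t a)) : False := by
  have hp : 0 < t b - t a := by linarith
  rcases h4 with h4 | h4 | h4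
  · apply h.vert ha hua hsp l0 l1 h4
    rw [h4] at h3
    by_contra hc
    push Not at hc
    nlinarith
  · apply h.vert hb hub hsp l0 l1 h4
    rw [h4] at h3
    have := le_of_mul_le_mul_right h3 hp
    linarith
  · set m := (l * t u - t a) / (t b - t a) with hm
    have m0 : 0 ≤ m := div_nonneg (by linarith) hp.le
    have m1 : m ≤ 1 := by rw [hm, div_le_one hp]; linarith
    have hme : m * (t b - t a) = l * t u - t a := by rw [hm]; field_simp
    have k := h.K hab hua hub m0 m1
    have e1 : (1 - m) * t a + m * t b = l * t u := by linarith
    have e2 : (1 - m) * s a + m * s b = (1 - l) + l * s u := by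
      rw [ha, hb]
      apply mul_right_cancel₀ hp.ne'
      rw [← hme] at h4
      linear_combination -h4
    rw [e1, e2] at k
    have : (l * t u - t u) ^ 2 + ((1 - l) + l * s u - s u) ^ 2 = (1 - l) ^ 2 * r u ^ 2 := by
      rw [← hsp]; ring
    rw [this] at k
    have : (1 - l) ^ 2 ≤ 1 := by nlinarith
    nlinarith [sq_nonneg (r u)]

/-- crossing argument for the segment from `i` to the centre of a special disk -/
lemma HP.crossing (h : HP H t s r) {a b u : U} (ha : s a = r a) (hb : s b = r b) (hab : H.Adj a b)
    (hlt : t a < t b) (hua : u ≠ a) (hub : u ≠ b)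
    (hsp : t u ^ 2 + (s u - 1) ^ 2 = r u ^ 2) 
    (hh : (t a < 0 ∧ 0 < t b ∧ (1 - r a) * (t b - t a) < (r b - r a) * (0 - t a) ∧
        (t a < t u → t u < t b → (r b - r a) * (t u - t a) < (s u - r a) * (t b - t a))) ∨
      ((0 < t a ∨ t b < 0 ∨ (r b - r a) * (0 - t a) < (1 - r a) * (t b - t a)) ∧
        t a ≤ t u ∧ t u ≤ t b ∧ (s u - r a) * (t b - t a) < (r b - r a) * (t u - t a))) : False := by
  set f : ℝ → ℝ := fun l => max (max (t a - l * t u) (l * t u - t b))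
    (((1 - l) + l * s u - r a) * (t b - t a) - (r b - r a) * (l * t u - t a)) with hf
  have hfc : ContinuousOn f (Set.Icc 0 1) := by
    apply Continuous.continuousOn
    simp only [hf]; fun_prop
  have key : ∃ l, 0 < l ∧ l ≤ 1 ∧ f l = 0 := by
    rcases hh with ⟨a1, a2, a3, a4⟩ | ⟨b1, b2, b3, b4⟩
    · have f0 : f 0 < 0 := by
        simp only [hf, max_lt_iff]
        refine ⟨⟨by linarith, by linarith⟩, ?_⟩
        simp only [zero_mul, sub_zero, add_zero]; linarith
      have f1 : 0 ≤ f 1 := by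
        simp only [hf, le_max_iff, one_mul, sub_self, zero_add]
        by_cases c1 : t a < t u
        · by_cases c2 : t u < t b
          · right; linarith [a4 c1 c2]
          · left; right; linarith
        · left; left; linarith
      obtain ⟨l, hl, hl2⟩ := intermediate_value_Icc zero_le_one hfc ⟨f0.le, f1⟩
      refine ⟨l, lt_of_le_of_ne hl.1 ?_, hl.2, hl2⟩
      rintro rfl
      linarith
    · have f0 : 0 < f 0 := by
        simp only [hf, lt_max_iff, zero_mul, sub_zero, add_zero, zero_sub]
        rcases b1 with b1 | b1 | b1
        · left; left; linarith
        · left; right; linarith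
        · right; linarith
      have f1 : f 1 ≤ 0 := by
        simp only [hf, max_le_iff, one_mul, sub_self, zero_add]
        refine ⟨⟨by linarith, by linarith⟩, by linarith⟩
      obtain ⟨l, hl, hl2⟩ := intermediate_value_Icc' zero_le_one hfc ⟨f1, f0.le⟩
      refine ⟨l, lt_of_le_of_ne hl.1 ?_, hl.2, hl2⟩
      rintro rfl
      linarith
  obtain ⟨l, l0, l1, hl⟩ := key
  have hle : f l ≤ 0 := hl.le
  simp only [hf, max_le_iff] at hle
  have hge : 0 ≤ f l := hl.ge
  simp only [hf, le_max_iff] at hge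
  refine h.cross ha hb hab hlt hua hub hsp l0 l1 (by linarith [hle.1.1]) (by linarith [hle.1.2])
    (by linarith [hle.2]) ?_
  rcases hge with (hg | hg) | hg
  · left; linarith [hle.1.1]
  · right; left; linarith [hle.1.2]
  · right; right; linarith [hle.2]

lemma HP.special (h : HP H t s r) {a b : U} (ha : s a = r a) (hb : s b = r b) (hab : H.Adj a b)
    (hp : ∃ p q, p ≠ q ∧ t p ^ 2 + (s p - 1) ^ 2 = r p ^ 2 ∧ t q ^ 2 + (s q - 1) ^ 2 = r q ^ 2)
    (hne : 1 + t a * t b ≠ 0) : ∃ u, u ≠ a ∧ u ≠ b ∧ t u ^ 2 + (s u - 1) ^ 2 = r u ^ 2 := by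
  have e1 := (h.adj a b hab.ne).mp hab
  rw [ha, hb] at e1
  have e2 : (t a - t b) ^ 2 = 4 * r a * r b := by linarith
  have hnot : t a ^ 2 + (s a - 1) ^ 2 = r a ^ 2 → t b ^ 2 + (s b - 1) ^ 2 = r b ^ 2 → False := by
    intro h1 h2
    rw [ha] at h1
    rw [hb] at h2
    have k1 : 2 * r a = 1 + t a ^ 2 := by linarith
    have k2 : 2 * r b = 1 + t b ^ 2 := by linarith
    have k3 : (t a - t b) ^ 2 = (1 + t a ^ 2) * (1 + t b ^ 2) := by
      rw [← k1, ← k2, e2]; ring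
    exact hne (pow_eq_zero_iff (two_ne_zero) |>.mp (by linarith : (1 + t a * t b) ^ 2 = 0))
  obtain ⟨p, q, hpq, h1, h2⟩ := hp
  by_cases pa : p = a
  · by_cases qb : q = b
    · subst pa qb; exact (hnot h1 h2).elim
    · exact ⟨q, by rw [← pa]; exact hpq.symm, qb, h2⟩
  · by_cases pb : p = b
    · by_cases qa : q = a
      · subst pb qa; exact (hnot h2 h1).elim
      · exact ⟨q, qa, by rw [← pb]; exact hpq.symm, h2⟩
    · exact ⟨p, pa, pb, h1⟩

lemma HP.good_inner (h : HP H t s r) {a b : U} (ha : s a = r a) (hb : s b = r b) (hab : H.Adj a b)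
    (hlt : t a < t b)
    (hrel : ∀ w, t a < t w → t w < t b → (s b - s a) * (t w - t a) < (s w - s a) * (t b - t a))
    (hp : ∃ p q, p ≠ q ∧ t p ^ 2 + (s p - 1) ^ 2 = r p ^ 2 ∧ t q ^ 2 + (s q - 1) ^ 2 = r q ^ 2) :
    0 ≤ 1 + t a * t b := by
  by_contra hc
  push Not at hc
  obtain ⟨u, u1, u2, u3⟩ := h.special ha hb hab hp hc.ne
  have ta : t a < 0 := by
    by_contra hh; push Not at hh; nlinarith
  have tb : 0 < t b := by
    by_contra hh; push Not at hh; nlinarith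
  have e1 := (h.adj a b hab.ne).mp hab
  rw [ha, hb] at e1
  have e2 : (t b - t a) ^ 2 = 4 * r a * r b := by linarith
  have pa := h.rpos a
  have pb := h.rpos b
  refine h.crossing ha hb hab hlt u1 u2 u3 (Or.inl ⟨ta, tb, ?_, ?_⟩)
  · have key : t b - t a < r a * t b - r b * t a := by
      apply lt_of_pow_lt_pow_left₀ 2 (by nlinarith)
      have k1 : (t b - t a) ^ 2 * (- (t a * t b)) ≤ (r a * t b - r b * t a) ^ 2 := by
        rw [e2]; nlinarith [sq_nonneg (r a * t b + r b * t a)]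
      have k2 : 0 < (t b - t a) ^ 2 := by have : 0 < t b - t a := by linarith
                                          positivity
      nlinarith
    linarith
  · intro h1 h2
    have := hrel u h1 h2
    rwa [ha, hb] at this

lemma HP.good_outer (h : HP H t s r) {a b : U} (ha : s a = r a) (hb : s b = r b) (hab : H.Adj a b)
    (hlt : t a < t b) (hle : ∀ w, t a ≤ t w ∧ t w ≤ t b)
    (hrel : ∀ w, w ≠ a → w ≠ b → (s w - s a) * (t b - t a) < (s b - s a) * (t w - t a))
    (hout : ∀ u, r u ^ 2 ≤ t u ^ 2 + (s u - 1) ^ 2)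
    (hp : ∃ p q, p ≠ q ∧ t p ^ 2 + (s p - 1) ^ 2 = r p ^ 2 ∧ t q ^ 2 + (s q - 1) ^ 2 = r q ^ 2) :
    1 + t a * t b ≤ 0 := by
  by_contra hc
  push Not at hc
  obtain ⟨u, u1, u2, u3⟩ := h.special ha hb hab hp hc.ne'
  have pa := h.rpos a
  have pb := h.rpos b
  refine h.crossing ha hb hab hlt u1 u2 u3 (Or.inr ⟨?_, (hle u).1, (hle u).2, ?_⟩)
  · by_contra hcon
    push Not at hcon
    obtain ⟨c1, c2, c3⟩ := hcon
    have oa := hout a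
    have ob := hout b
    rw [ha] at oa
    rw [hb] at ob
    have k1 : 2 * r a ≤ 1 + t a ^ 2 := by linarith
    have k2 : 2 * r b ≤ 1 + t b ^ 2 := by linarith
    have k3 := mul_le_mul_of_nonneg_right k1 c2
    have k4 := mul_le_mul_of_nonneg_right k2 (by linarith : 0 ≤ - t a)
    have k5 : (t b - t a) * (1 - t a * t b) < 2 * (t b - t a) := by nlinarith
    nlinarith
  · have := hrel u u1 u2
    rwa [ha, hb] at this

lemma sin_arctan_sub (p q : ℝ) : Real.sin (Real.arctan q - Real.arctan p) =
    (q - p) / (√(1 + p ^ 2) * √(1 + q ^ 2)) := by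
  rw [Real.sin_sub, Real.sin_arctan, Real.cos_arctan, Real.sin_arctan, Real.cos_arctan]
  have : 0 < √(1 + p ^ 2) := by positivity
  have : 0 < √(1 + q ^ 2) := by positivity
  field_simp

lemma cos_arctan_sub (p q : ℝ) : Real.cos (Real.arctan q - Real.arctan p) =
    (1 + p * q) / (√(1 + p ^ 2) * √(1 + q ^ 2)) := by
  rw [Real.cos_sub, Real.sin_arctan, Real.cos_arctan, Real.sin_arctan, Real.cos_arctan]
  have : 0 < √(1 + p ^ 2) := by positivity
  have : 0 < √(1 + q ^ 2) := by positivity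
  field_simp

lemma sqrt_w {p q ra rb : ℝ} (h : p < q) (e : (q - p) ^ 2 = 4 * ra * rb) :
    √(2 * ra / (1 + p ^ 2) * (2 * rb / (1 + q ^ 2))) = Real.sin (Real.arctan q - Real.arctan p) := by
  rw [sin_arctan_sub]
  have h1 : 0 < 1 + p ^ 2 := by positivity
  have h2 : 0 < 1 + q ^ 2 := by positivity
  have : 2 * ra / (1 + p ^ 2) * (2 * rb / (1 + q ^ 2)) = (q - p) ^ 2 / ((1 + p ^ 2) * (1 + q ^ 2)) := by
    rw [e]; field_simp; ring
  rw [this, Real.sqrt_div (by positivity), Real.sqrt_sq (by linarith), Real.sqrt_mul h1.le]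

lemma angle_inner {p q ra rb : ℝ} (h : p < q) (e : (q - p) ^ 2 = 4 * ra * rb)
    (hg : 0 ≤ 1 + p * q) :
    Real.arcsin √(2 * ra / (1 + p ^ 2) * (2 * rb / (1 + q ^ 2))) = Real.arctan q - Real.arctan p := by
  rw [sqrt_w h e]
  have h0 : Real.arctan p < Real.arctan q := Real.arctan_strictMono h
  have hπ := Real.pi_pos
  apply Real.arcsin_sin (by linarith)
  by_contra hc
  push Not at hc
  have h1 := Real.cos_neg_of_pi_div_two_lt_of_lt hc
    (by linarith [Real.arctan_lt_pi_div_two q, Real.neg_pi_div_two_lt_arctan p])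
  rw [cos_arctan_sub] at h1
  have : 0 ≤ (1 + p * q) / (√(1 + p ^ 2) * √(1 + q ^ 2)) := by positivity
  linarith

lemma angle_outer {p q ra rb : ℝ} (h : p < q) (e : (q - p) ^ 2 = 4 * ra * rb)
    (hg : 1 + p * q ≤ 0) :
    Real.arcsin √(2 * ra / (1 + p ^ 2) * (2 * rb / (1 + q ^ 2))) =
      Real.pi - (Real.arctan q - Real.arctan p) := by
  rw [sqrt_w h e]
  have h0 : Real.arctan p < Real.arctan q := Real.arctan_strictMono h
  have hπ := Real.pi_pos
  rw [← Real.sin_pi_sub]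
  apply Real.arcsin_sin (by linarith [Real.arctan_lt_pi_div_two q, Real.neg_pi_div_two_lt_arctan p])
  by_contra hc
  push Not at hc
  have h1 : 0 < Real.cos (Real.arctan q - Real.arctan p) :=
    Real.cos_pos_of_mem_Ioo ⟨by linarith, by linarith⟩
  rw [cos_arctan_sub] at h1
  have : (1 + p * q) / (√(1 + p ^ 2) * √(1 + q ^ 2)) ≤ 0 :=
    div_nonpos_of_nonpos_of_nonneg hg (by positivity)
  linarith

lemma HP.bot_sep (h : HP H t s r) {a b : U} (ha : s a = r a) (hb : s b = r b) (hab : a ≠ b) :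
    4 * r a * r b ≤ (t a - t b) ^ 2 ∧ (H.Adj a b ↔ (t a - t b) ^ 2 = 4 * r a * r b) := by
  have h1 := h.sep a b hab
  have h2 := h.adj a b hab
  rw [ha, hb] at h1 h2
  refine ⟨by linarith, h2.trans ⟨fun h => by linarith, fun h => by linarith⟩⟩

lemma HP.noncross (h : HP H t s r) {a b c d : U} (ha : s a = r a) (hb : s b = r b) (hc : s c = r c)
    (hd : s d = r d) (hab : t a < t b) (hbc : t b < t c) (hcd : t c < t d) :
    ¬ (H.Adj a c ∧ H.Adj b d) := by
  rintro ⟨h1, h2⟩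
  have ne : ∀ {u w : U}, t u < t w → u ≠ w := by rintro u w h rfl; exact lt_irrefl _ h
  have e1 := (h.bot_sep ha hc h1.ne).2.mp h1
  have e2 := (h.bot_sep hb hd h2.ne).2.mp h2
  have f1 := (h.bot_sep ha hb (ne hab)).1
  have f2 := (h.bot_sep hb hc (ne hbc)).1
  have f3 := (h.bot_sep hc hd (ne hcd)).1
  have f4 := (h.bot_sep ha hd (ne (hab.trans (hbc.trans hcd)))).1
  have pa := h.rpos a
  have pb := h.rpos b
  have pc := h.rpos c
  have pd := h.rpos d
  set R := 16 * (r a * r b * r c * r d) with hR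
  have hRp : 0 < R := by positivity
  have g1 : ((t c - t a) * (t d - t b)) ^ 2 = R := by
    have : ((t c - t a) * (t d - t b)) ^ 2 = (t a - t c) ^ 2 * (t b - t d) ^ 2 := by ring
    rw [this, e1, e2, hR]; ring
  have g2 : R ≤ ((t b - t a) * (t d - t c)) ^ 2 := by
    have : ((t b - t a) * (t d - t c)) ^ 2 = (t a - t b) ^ 2 * (t c - t d) ^ 2 := by ring
    rw [this]
    calc R = (4 * r a * r b) * (4 * r c * r d) := by rw [hR]; ring
      _ ≤ _ := mul_le_mul f1 f3 (by positivity) (by positivity)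
  have g3 : 0 < (t c - t b) * (t d - t a) := mul_pos (by linarith) (by linarith)
  have g4 : 0 < (t b - t a) * (t d - t c) := mul_pos (by linarith) (by linarith)
  have g5 : (t c - t a) * (t d - t b) = (t b - t a) * (t d - t c) + (t c - t b) * (t d - t a) := by
    ring
  nlinarith

/-- The flower theorem in half plane form. -/
lemma HP.flower (h : HP H t s r)
    (hcard : (de H).card + 2 * (bot s r).card + 6 = 6 * Fintype.card U)
    (h3 : 3 ≤ (bot s r).card)
    (hout : ∀ u, r u ^ 2 ≤ t u ^ 2 + (s u - 1) ^ 2)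
    (hp : ∃ p q, p ≠ q ∧ t p ^ 2 + (s p - 1) ^ 2 = r p ^ 2 ∧ t q ^ 2 + (s q - 1) ^ 2 = r q ^ 2) :
    ∃ m : ℕ, 2 ≤ m ∧ ∃ b : Fin (m + 1) → U, Function.Injective b ∧
      (∀ u, s u = r u ↔ ∃ i, b i = u) ∧ (∀ i, H.Adj (b i) (b (i + 1))) ∧
      (∀ i j k l, i < j → j < k → k < l → ¬ (H.Adj (b i) (b k) ∧ H.Adj (b j) (b l))) ∧
      ∑ i, Real.arcsin √(2 * r (b i) / (1 + t (b i) ^ 2) *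
        (2 * r (b (i + 1)) / (1 + t (b (i + 1)) ^ 2))) = Real.pi := by
  obtain ⟨P1, a0, ha0, b0, hb0, hle, hadj0, hrel0⟩ := h.planar hcard
    (by have := Finset.card_le_univ (bot s r); omega)
  have tinj : Set.InjOn t (bot s r) := by
    intro a ha b hb hab
    by_contra hne
    have := (h.bot_sep (mem_bot.mp ha) (mem_bot.mp hb) hne).1
    rw [hab] at this
    nlinarith [h.rpos a, h.rpos b]
  obtain ⟨m, hm⟩ : ∃ m, (bot s r).card = m + 1 := ⟨(bot s r).card - 1, by omega⟩
  have hcT : ((bot s r).image t).card = m + 1 := by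
    rw [Finset.card_image_of_injOn tinj, hm]
  set T := (bot s r).image t with hT
  set e := T.orderEmbOfFin hcT with he
  have hex : ∀ i, ∃ u, u ∈ bot s r ∧ t u = e i := by
    intro i
    have := T.orderEmbOfFin_mem hcT i
    exact Finset.mem_image.mp this
  choose b hb1 hb2 using hex
  have hmono : ∀ i j, i < j → t (b i) < t (b j) := by
    intro i j hij
    rw [hb2, hb2]
    exact e.strictMono hij
  have hsurj : ∀ u ∈ bot s r, ∃ i, b i = u := by
    intro u hu
    have : t u ∈ Set.range e := by
      rw [he, Finset.range_orderEmbOfFin]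
      exact Finset.mem_coe.mpr (Finset.mem_image_of_mem t hu)
    obtain ⟨i, hi⟩ := this
    exact ⟨i, tinj (hb1 i) hu (by rw [hb2, hi])⟩
  have hbs : ∀ i, s (b i) = r (b i) := fun i => mem_bot.mp (hb1 i)
  have hstep : ∀ i : Fin m, H.Adj (b i.castSucc) (b i.succ) ∧
      0 ≤ 1 + t (b i.castSucc) * t (b i.succ) := by
    intro i
    have hlt := hmono i.castSucc i.succ (Fin.castSucc_lt_succ)
    have := P1 _ (hb1 i.castSucc) _ (hb1 i.succ) hlt (by
      intro c hc h1 h2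
      obtain ⟨j, rfl⟩ := hsurj c hc
      rw [hb2, hb2, e.lt_iff_lt] at h1 h2
      rw [Fin.lt_def] at h1 h2
      simp only [Fin.val_castSucc, Fin.val_succ] at h1 h2
      omega)
    exact ⟨this.1, h.good_inner (hbs _) (hbs _) this.1 hlt this.2 hp⟩
  have hb0' : b 0 = a0 := by
    obtain ⟨j, hj⟩ := hsurj a0 ha0
    have h1 := (hle (b 0)).1
    rw [← hj, hb2, hb2, e.le_iff_le] at h1
    rw [← hj, le_antisymm h1 (Fin.zero_le j)]
  have hbl : b (Fin.last m) = b0 := by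
    obtain ⟨j, hj⟩ := hsurj b0 hb0
    have h1 := (hle (b (Fin.last m))).2
    rw [← hj, hb2, hb2, e.le_iff_le] at h1
    rw [← hj, le_antisymm h1 (Fin.le_last j)]
  have hlt0 : t (b 0) < t (b (Fin.last m)) := by
    apply hmono
    rw [Fin.lt_def]; simp; omega
  have hadjl : H.Adj (b 0) (b (Fin.last m)) := by rw [hb0', hbl]; exact hadj0
  have hgl : 1 + t (b 0) * t (b (Fin.last m)) ≤ 0 := by
    refine h.good_outer (hbs _) (hbs _) hadjl hlt0 ?_ ?_ hout hp
    · rw [hb0', hbl]; exact hle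
    · rw [hb0', hbl]; exact hrel0
  refine ⟨m, by omega, b, ?_, ?_, ?_, ?_, ?_⟩
  · intro i j hij
    apply e.injective
    rw [← hb2, ← hb2, hij]
  · intro u
    constructor
    · intro hu; exact hsurj u (mem_bot.mpr hu)
    · rintro ⟨i, rfl⟩; exact hbs i
  · intro i
    induction i using Fin.lastCases with
    | last => rw [Fin.last_add_one]; exact hadjl.symm
    | cast i => rw [Fin.coeSucc_eq_succ]; exact (hstep i).1
  · intro i j k l hij hjk hkl
    exact h.noncross (hbs _) (hbs _) (hbs _) (hbs _) (hmono _ _ hij) (hmono _ _ hjk) (hmono _ _ hkl)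
  · rw [Fin.sum_univ_castSucc]
    have h1 : ∀ i : Fin m, Real.arcsin √(2 * r (b i.castSucc) / (1 + t (b i.castSucc) ^ 2) *
        (2 * r (b (i.castSucc + 1)) / (1 + t (b (i.castSucc + 1)) ^ 2))) =
        Real.arctan (t (b i.succ)) - Real.arctan (t (b i.castSucc)) := by
      intro i
      rw [Fin.coeSucc_eq_succ]
      have hlt := hmono i.castSucc i.succ (Fin.castSucc_lt_succ)
      apply angle_inner hlt _ (hstep i).2
      rw [← (h.bot_sep (hbs _) (hbs _) (hstep i).1.ne).2.mp (hstep i).1]; ring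
    rw [Finset.sum_congr rfl fun i _ => h1 i, Finset.sum_sub_distrib, Fin.last_add_one,
      mul_comm (2 * r (b (Fin.last m)) / _)]
    rw [angle_outer hlt0 (by rw [← (h.bot_sep (hbs _) (hbs _) hadjl.ne).2.mp hadjl]; ring) hgl]
    have e1 := Fin.sum_univ_succ (fun i => Real.arctan (t (b i)))
    have e2 := Fin.sum_univ_castSucc (fun i => Real.arctan (t (b i)))
    linarith

end HalfPlane
end KAT

namespace KAT
section Ham
open scoped Fin.NatCast Fin.CommRing

lemma fin_ne_zero_of {m n : ℕ} (h1 : 0 < n) (h2 : n ≤ m) : ((n : ℕ) : Fin (m + 1)) ≠ 0 := by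
  intro h
  have := congrArg Fin.val h
  rw [Fin.val_natCast, Nat.mod_eq_of_lt (by omega)] at this
  simp at this; omega

lemma fin_ne_one_of {m n : ℕ} (h1 : 1 < n) (h2 : n ≤ m) : ((n : ℕ) : Fin (m + 1)) ≠ 1 := by
  intro h
  have h' : ((n : ℕ) : Fin (m + 1)) = ((1 : ℕ) : Fin (m + 1)) := by rw [h]; simp
  have := congrArg Fin.val h'
  rw [Fin.val_natCast, Fin.val_natCast, Nat.mod_eq_of_lt (by omega), Nat.mod_eq_of_lt (by omega)] at this
  omega

lemma ham_key {m : ℕ} (hm : 2 ≤ m) {R : Fin (m + 1) → Fin (m + 1) → Prop}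
    (hsymm : ∀ i j, R i j → R j i)
    (hnc : ∀ i j k l, i < j → j < k → k < l → ¬ (R i k ∧ R j l))
    (σ : Equiv.Perm (Fin (m + 1))) (hσ : ∀ i, R (σ i) (σ (i + 1))) (i : Fin (m + 1)) :
    σ (i + 1) = σ i + 1 ∨ σ i = σ (i + 1) + 1 := by
  have h10 : (1 : Fin (m + 1)) ≠ 0 := by
    have := fin_ne_zero_of (m := m) (n := 1) (by omega) (by omega)
    simpa using this
  have hne : σ i ≠ σ (i + 1) := by
    intro h
    have := σ.injective h
    exact h10 (by simpa using this)
  -- P < Q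
  obtain ⟨P, Q, hPQ, hset, hR⟩ : ∃ P Q, P < Q ∧ ((P = σ i ∧ Q = σ (i + 1)) ∨ (P = σ (i + 1) ∧ Q = σ i)) ∧ R P Q := by
    rcases lt_or_gt_of_ne hne with h | h
    · exact ⟨_, _, h, Or.inl ⟨rfl, rfl⟩, hσ i⟩
    · exact ⟨_, _, h, Or.inr ⟨rfl, rfl⟩, hsymm _ _ (hσ i)⟩
  by_contra hcon
  push Not at hcon
  have hc1 : Q ≠ P + 1 := by
    rcases hset with ⟨rfl, rfl⟩ | ⟨rfl, rfl⟩
    · exact hcon.1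
    · exact hcon.2
  have hc2 : P ≠ Q + 1 := by
    rcases hset with ⟨rfl, rfl⟩ | ⟨rfl, rfl⟩
    · exact hcon.2
    · exact hcon.1
  -- positions
  have hpos : ∀ n : ℕ, 2 ≤ n → n ≤ m → σ (i + n) ≠ P ∧ σ (i + n) ≠ Q := by
    intro n h1 h2
    have a1 : σ (i + n) ≠ σ i := by
      intro h
      have := σ.injective h
      exact fin_ne_zero_of (m := m) (n := n) (by omega) h2 (by simpa using this)
    have a2 : σ (i + n) ≠ σ (i + 1) := by
      intro h
      have := σ.injective h
      exact fin_ne_one_of (m := m) (n := n) (by omega) h2 (by simpa using this)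
    rcases hset with ⟨rfl, rfl⟩ | ⟨rfl, rfl⟩
    · exact ⟨a1, a2⟩
    · exact ⟨a2, a1⟩
  have hcr : ∀ j k, R j k → P < j → j < Q → k ≠ P → k ≠ Q → P < k ∧ k < Q := by
    intro j k hjk h1 h2 h3 h4
    by_contra hc
    rcases lt_or_gt_of_ne h3 with h5 | h5
    · exact hnc k P j Q h5 h1 h2 ⟨hsymm _ _ hjk, hR⟩
    · rcases lt_or_gt_of_ne h4 with h6 | h6
      · exact hc ⟨h5, h6⟩
      · exact hnc P j Q k h1 h2 h6 ⟨hR, hjk⟩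
  have hside : ∀ n : ℕ, 2 ≤ n → n ≤ m → ((P < σ (i + n) ∧ σ (i + n) < Q) ↔
      (P < σ (i + (2 : ℕ)) ∧ σ (i + (2 : ℕ)) < Q)) := by
    intro n h1
    induction n, h1 using Nat.le_induction with
    | base => intro _; rfl
    | succ n h1 ih =>
      intro h2
      rw [← ih (by omega)]
      have e : i + ((n + 1 : ℕ) : Fin (m + 1)) = i + n + 1 := by push_cast; ring
      have r := hσ (i + n)
      rw [← e] at r
      obtain ⟨p1, p2⟩ := hpos n h1 (by omega)
      obtain ⟨q1, q2⟩ := hpos (n + 1) (by omega) h2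
      exact ⟨fun h => hcr _ _ (hsymm _ _ r) h.1 h.2 p1 p2, fun h => hcr _ _ r h.1 h.2 q1 q2⟩
  have hall : ∀ j, j ≠ P → j ≠ Q → ∃ n : ℕ, 2 ≤ n ∧ n ≤ m ∧ σ (i + n) = j := by
    intro j h1 h2
    set n := (σ.symm j - i).val with hn
    have e1 : ((n : ℕ) : Fin (m + 1)) = σ.symm j - i := by rw [hn]; exact Fin.cast_val_eq_self _
    have e2 : σ (i + n) = j := by rw [e1]; simp
    refine ⟨n, ?_, ?_, e2⟩
    · by_contra hlt
      push Not at hlt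
      interval_cases n
      · simp at e2
        rcases hset with ⟨rfl, rfl⟩ | ⟨rfl, rfl⟩
        · exact h1 e2.symm
        · exact h2 e2.symm
      · simp at e2
        rcases hset with ⟨rfl, rfl⟩ | ⟨rfl, rfl⟩
        · exact h2 e2.symm
        · exact h1 e2.symm
    · have := (σ.symm j - i).isLt; omega
  -- an inner element
  have hPl : P ≠ Fin.last m := fun h => by rw [h] at hPQ; exact absurd (Fin.le_last Q) (not_le.mpr hPQ)
  have hP1 : (P + 1).val = P.val + 1 := Fin.val_add_one_of_lt (Fin.lt_last_iff_ne_last.mpr hPl)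
  have hin : P < P + 1 ∧ P + 1 < Q := by
    constructor
    · rw [Fin.lt_def, hP1]; omega
    · apply lt_of_le_of_ne _ hc1.symm
      rw [Fin.le_def, hP1]; exact hPQ
  obtain ⟨n, n1, n2, n3⟩ := hall (P + 1) hin.1.ne' hin.2.ne
  have hA := (hside n n1 n2).mp (by rw [n3]; exact hin)
  -- an outer element
  have hout : ∃ j, j < P ∨ Q < j := by
    by_cases hQ : Q = Fin.last m
    · refine ⟨0, Or.inl ?_⟩
      apply lt_of_le_of_ne (Fin.zero_le _)
      rintro h
      exact hc2 (by rw [hQ, Fin.last_add_one, ← h])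
    · refine ⟨Q + 1, Or.inr ?_⟩
      rw [Fin.lt_def, Fin.val_add_one_of_lt (Fin.lt_last_iff_ne_last.mpr hQ)]; omega
  obtain ⟨j, hj⟩ := hout
  obtain ⟨n', n1', n2', n3'⟩ := hall j (by rintro rfl; rcases hj with h | h; exact lt_irrefl _ h; exact lt_asymm h hPQ)
    (by rintro rfl; rcases hj with h | h; exact lt_asymm h hPQ; exact lt_irrefl _ h)
  have hB := (hside n' n1' n2').mpr hA
  rw [n3'] at hB
  rcases hj with h | h
  · exact lt_asymm h hB.1
  · exact lt_asymm h hB.2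

lemma ham_sum {V : Type*} {m m' : ℕ} (hm : 2 ≤ m) {R : V → V → Prop} (hsymm : ∀ i j, R i j → R j i)
    {b : Fin (m + 1) → V} {b' : Fin (m' + 1) → V} (hb : Function.Injective b)
    (hb' : Function.Injective b') (hrange : Set.range b = Set.range b')
    (hnc : ∀ i j k l, i < j → j < k → k < l → ¬ (R (b i) (b k) ∧ R (b j) (b l)))
    (hR : ∀ i, R (b' i) (b' (i + 1))) (g : V → V → ℝ) (hg : ∀ a c, g a c = g c a) :
    ∑ i, g (b' i) (b' (i + 1)) = ∑ i, g (b i) (b (i + 1)) := by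
  classical
  have hmm : m = m' := by
    have h1 : Nat.card (Set.range b) = m + 1 := by
      rw [Nat.card_range_of_injective hb]; simp
    have h2 : Nat.card (Set.range b') = m' + 1 := by
      rw [Nat.card_range_of_injective hb']; simp
    rw [hrange] at h1; omega
  subst hmm
  have hex : ∀ i, ∃ j, b j = b' i := by
    intro i
    have : b' i ∈ Set.range b := by rw [hrange]; exact ⟨i, rfl⟩
    exact this
  choose f hf using hex
  have hfi : Function.Injective f := by
    intro i j h
    apply hb'
    rw [← hf, ← hf, h]
  set σ : Equiv.Perm (Fin (m + 1)) := Equiv.ofBijective f (Finite.injective_iff_bijective.mp hfi)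
  have hσ : ∀ i, b (σ i) = b' i := hf
  have key := ham_key hm (R := fun i j => R (b i) (b j)) (fun i j h => hsymm _ _ h) hnc σ
    (fun i => by rw [hσ, hσ]; exact hR i)
  have h20 : (1 : Fin (m + 1)) + 1 ≠ 0 := by
    have := fin_ne_zero_of (m := m) (n := 2) (by omega) (by omega)
    intro h
    apply this
    push_cast
    rw [← h]; norm_num
  set τ : Fin (m + 1) → Fin (m + 1) := fun i => if σ (i + 1) = σ i + 1 then σ i else σ (i + 1) with hτ
  have hτs : ∀ i, s(σ i, σ (i + 1)) = s(τ i, τ i + 1) := by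
    intro i
    simp only [hτ]
    split_ifs with h
    · rw [h]
    · rw [(key i).resolve_left h, Sym2.eq_swap]
  have hτi : Function.Injective τ := by
    intro i j h
    have e := hτs i
    rw [h, ← hτs j, Sym2.eq_iff] at e
    rcases e with e | e
    · exact σ.injective e.1
    · exfalso
      have e1 := σ.injective e.1
      have e2 := σ.injective e.2
      rw [e1] at e2
      apply h20
      have : j + (1 + 1) = j := by rw [← add_assoc]; exact e2
      simpa using this
  have hτb : Function.Bijective τ := Finite.injective_iff_bijective.mp hτi
  rw [← Function.Bijective.sum_comp hτb (fun i => g (b i) (b (i + 1)))]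
  apply Finset.sum_congr rfl
  intro i _
  rw [← hσ, ← hσ]
  have e := hτs i
  rw [Sym2.eq_iff] at e
  rcases e with ⟨e1, e2⟩ | ⟨e1, e2⟩
  · rw [e1, e2]
  · rw [e1, e2, hg]

end Ham
end KAT

namespace KAT
section MaxPrinciple
open scoped Fin.NatCast Fin.CommRing
variable {V : Type*} [Fintype V] [DecidableEq V]

/-- the horocyclic size of `u` seen from the tangency point of `x` and `y` -/
def kap (I : V → V → ℝ) (x y u : V) : ℝ := - I u x - I u y

/-- the weight of a neighbour `a` of `v` -/
noncomputable def wt (I : V → V → ℝ) (x y v a : V) : ℝ := kap I x y v / (kap I x y v + kap I x y a)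

/-- `b` is a cyclic enumeration of the neighbours of `v`, and the flower closes up. -/
structure Flo (G : SimpleGraph V) (I : V → V → ℝ) (x y v : V) (m : ℕ) (b : Fin (m + 1) → V) : Prop where
  two : 2 ≤ m
  inj : Function.Injective b
  nbr : ∀ u, G.Adj v u ↔ ∃ i, b i = u
  cyc : ∀ i, G.Adj (b i) (b (i + 1))
  nc : ∀ i j k l, i < j → j < k → k < l → ¬ (G.Adj (b i) (b k) ∧ G.Adj (b j) (b l))
  sum : ∑ i, Real.arcsin √(wt I x y v (b i) * wt I x y v (b (i + 1))) = Real.pi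

/-- Gram matrix of a packing. -/
structure GP (G : SimpleGraph V) (I : V → V → ℝ) : Prop where
  symm : ∀ u v, I u v = I v u
  self : ∀ v, I v v = 1
  le : ∀ u v, u ≠ v → I u v ≤ -1
  adj : ∀ u v, u ≠ v → (I u v = -1 ↔ G.Adj u v)
  flower : ∀ x y, G.Adj x y → ∀ v, v ≠ x → v ≠ y → ∃ m, ∃ b : Fin (m + 1) → V, Flo G I x y v m b

variable {G : SimpleGraph V} {I I' : V → V → ℝ}

lemma GP.kap_left (h : GP G I) {x y : V} (hxy : G.Adj x y) : kap I x y x = 0 := by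
  unfold kap
  rw [h.self, (h.adj x y hxy.ne).mpr hxy]; norm_num

lemma GP.kap_right (h : GP G I) {x y : V} (hxy : G.Adj x y) : kap I x y y = 0 := by
  unfold kap
  rw [h.self, (h.adj y x hxy.ne').mpr hxy.symm]; norm_num

lemma GP.kap_pos (h : GP G I) {x y u : V} (hx : u ≠ x) (hy : u ≠ y) : 2 ≤ kap I x y u := by
  unfold kap
  linarith [h.le u x hx, h.le u y hy]

lemma GP.kap_nonneg (h : GP G I) {x y : V} (hxy : G.Adj x y) (u : V) : 0 ≤ kap I x y u := by
  by_cases hx : u = x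
  · rw [hx, h.kap_left hxy]
  by_cases hy : u = y
  · rw [hy, h.kap_right hxy]
  linarith [h.kap_pos hx hy]

lemma GP.wt_mem (h : GP G I) {x y v : V} (hxy : G.Adj x y) (hx : v ≠ x) (hy : v ≠ y) (a : V) :
    0 < wt I x y v a ∧ wt I x y v a ≤ 1 := by
  have h1 := h.kap_pos hx hy
  have h2 := h.kap_nonneg hxy a
  unfold wt
  refine ⟨by positivity, ?_⟩
  rw [div_le_one (by linarith)]; linarith

/-- the main step: at a maximiser, all neighbours are maximisers too -/
lemma GP.step (h : GP G I) (h' : GP G I') {x y v : V} (hxy : G.Adj x y) (hx : v ≠ x) (hy : v ≠ y)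
    {L : ℝ} (hv : kap I x y v = L * kap I' x y v) (hle : ∀ u, kap I x y u ≤ L * kap I' x y u)
    {a : V} (ha : G.Adj v a) : kap I x y a = L * kap I' x y a := by
  obtain ⟨m, b, hb⟩ := h.flower x y hxy v hx hy
  obtain ⟨m', b', hb'⟩ := h'.flower x y hxy v hx hy
  have hrange : Set.range b = Set.range b' := by
    ext u
    rw [Set.mem_range, Set.mem_range, ← hb.nbr, ← hb'.nbr]
  have hsum := ham_sum hb.two (R := G.Adj) (fun _ _ h => h.symm) hb.inj hb'.inj hrange hb.nc hb'.cyc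
    (fun p q => Real.arcsin √(wt I' x y v p * wt I' x y v q)) (fun p q => by rw [mul_comm])
  rw [hb'.sum, ← hb.sum] at hsum
  have k1 := h.kap_pos hx hy
  have k1' := h'.kap_pos hx hy
  have hL : 0 < L := by
    by_contra hc
    push Not at hc
    nlinarith
  have hw : ∀ p, wt I' x y v p ≤ wt I x y v p := by
    intro p
    have k2 := h.kap_nonneg hxy p
    have k2' := h'.kap_nonneg hxy p
    unfold wt
    rw [div_le_div_iff₀ (by linarith) (by linarith), hv]
    have := hle p
    nlinarith [mul_le_mul_of_nonneg_left this (by linarith : 0 ≤ kap I' x y v)]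
  have m1 := h.wt_mem hxy hx hy
  have m2 := h'.wt_mem hxy hx hy
  have hterm := (Finset.sum_eq_sum_iff_of_le (fun i _ => by
    apply Real.monotone_arcsin
    apply Real.sqrt_le_sqrt
    exact mul_le_mul (hw (b i)) (hw (b (i + 1))) (m2 _).1.le (m1 _).1.le)).mp hsum.symm
  obtain ⟨i, rfl⟩ := (hb.nbr a).mp ha
  have ht := hterm i (Finset.mem_univ _)
  have hle1 : ∀ J : V → V → ℝ, (∀ p, 0 < wt J x y v p ∧ wt J x y v p ≤ 1) →
      √(wt J x y v (b i) * wt J x y v (b (i + 1))) ∈ Set.Icc (-1 : ℝ) 1 := by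
    intro J hJ
    refine ⟨le_trans (by norm_num) (Real.sqrt_nonneg _), ?_⟩
    rw [Real.sqrt_le_one]
    exact mul_le_one₀ (hJ _).2 (hJ _).1.le (hJ _).2
  have h2 := Real.injOn_arcsin (hle1 I' m2) (hle1 I m1) ht
  rw [Real.sqrt_inj (mul_pos (m2 _).1 (m2 _).1).le (mul_pos (m1 _).1 (m1 _).1).le] at h2
  have h3 : wt I' x y v (b i) = wt I x y v (b i) := by
    apply le_antisymm (hw _)
    by_contra hc
    push Not at hc
    have := mul_lt_mul hc (hw (b (i + 1))) (m2 _).1 (m1 _).1.le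
    linarith
  unfold wt at h3
  have k2 := h.kap_nonneg hxy (b i)
  have k2' := h'.kap_nonneg hxy (b i)
  rw [div_eq_div_iff (by linarith) (by linarith), hv] at h3
  have : kap I' x y v * (kap I x y (b i) - L * kap I' x y (b i)) = 0 := by linarith
  rcases mul_eq_zero.mp this with h4 | h4
  · linarith
  · linarith

/-- walking around a vertex -/
lemma walk_round (m : ℕ) (b : Fin (m + 1) → V) (hb : Function.Injective b)
    (hcyc : ∀ i, G.Adj (b i) (b (i + 1)))
    (S : V → Prop) (i0 : Fin (m + 1)) (hS : ∀ i, i ≠ i0 → S (b (i + 1)) → S (b i))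
    {j : Fin (m + 1)} (hj : j ≠ i0) (hSj : S (b j)) : S (b (i0 + 1)) := by
  have : ∀ n : ℕ, 1 ≤ n → n ≤ m → S (b (i0 + n)) → S (b (i0 + 1)) := by
    intro n h1
    induction n, h1 using Nat.le_induction with
    | base => intro _ h; simpa using h
    | succ n h1 ih =>
      intro h2 h3
      apply ih (by omega)
      apply hS
      · intro h
        exact fin_ne_zero_of (m := m) (n := n) (by omega) (by omega) (by simpa using h)
      · have e : i0 + ((n + 1 : ℕ) : Fin (m + 1)) = i0 + n + 1 := by push_cast; ring
        rwa [e] at h3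
  have e1 : (((j - i0).val : ℕ) : Fin (m + 1)) = j - i0 := Fin.cast_val_eq_self _
  apply this (j - i0).val
  · by_contra hc
    have : (j - i0).val = 0 := by omega
    rw [this] at e1
    apply hj
    rw [← sub_eq_zero, ← e1]; simp
  · have := (j - i0).isLt; omega
  · rw [e1]; simpa using hSj

lemma GP.kap_le (h : GP G I) (h' : GP G I') (hconn : G.Connected)
    (htri : ∀ v, ∃ p q, G.Adj v p ∧ G.Adj v q ∧ G.Adj p q)
    {x y : V} (hxy : G.Adj x y) : ∀ u, kap I x y u ≤ kap I' x y u := by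
  classical
  -- there is another vertex
  have hne : (Finset.univ.filter fun v => v ≠ x ∧ v ≠ y).Nonempty := by
    obtain ⟨p, q, h1, h2, h3⟩ := htri x
    by_cases hp : p = y
    · exact ⟨q, by simp [h2.ne', hp ▸ h3.ne']⟩
    · exact ⟨p, by simp [h1.ne', hp]⟩
  obtain ⟨v, hv, hmax⟩ := Finset.exists_max_image _ (fun v => kap I x y v / kap I' x y v) hne
  simp only [Finset.mem_filter, Finset.mem_univ, true_and] at hv hmax
  set L := kap I x y v / kap I' x y v with hL
  have hle : ∀ u, kap I x y u ≤ L * kap I' x y u := by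
    intro u
    by_cases hx : u = x
    · rw [hx, h.kap_left hxy, h'.kap_left hxy]; simp
    by_cases hy : u = y
    · rw [hy, h.kap_right hxy, h'.kap_right hxy]; simp
    have := hmax u ⟨hx, hy⟩
    rwa [div_le_iff₀ (by linarith [h'.kap_pos hx hy])] at this
  set S : V → Prop := fun u => u ≠ x ∧ u ≠ y ∧ kap I x y u = L * kap I' x y u with hS
  have hSv : S v := by
    refine ⟨hv.1, hv.2, ?_⟩
    rw [hL]; have := h'.kap_pos hv.1 hv.2
    field_simp
  have hstep : ∀ u a, S u → G.Adj u a → a ≠ x → a ≠ y → S a := by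
    intro u a hu hua h1 h2
    exact ⟨h1, h2, h.step h' hxy hu.1 hu.2.1 hu.2.2 hle hua⟩
  -- common neighbour in S
  have hround : ∀ c d, ((c = x ∧ d = y) ∨ (c = y ∧ d = x)) → G.Adj c d → ∀ u, S u → G.Adj c u →
      ∃ z, S z ∧ G.Adj z x ∧ G.Adj z y := by
    intro c d hcd hadj u hu hcu
    obtain ⟨p, q, h1, h2, h3⟩ := htri c
    obtain ⟨m, b, hb⟩ := h.flower p q h3 c h1.ne h2.ne
    obtain ⟨i0, hi0⟩ := (hb.nbr d).mp hadj
    obtain ⟨j, hj⟩ := (hb.nbr u).mp hcu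
    have hcb : ∀ i, G.Adj c (b i) := fun i => (hb.nbr _).mpr ⟨i, rfl⟩
    have hud : u ≠ d := by rcases hcd with ⟨rfl, rfl⟩ | ⟨rfl, rfl⟩; exact hu.2.1; exact hu.1
    have hSz := walk_round (G := G) m b hb.inj hb.cyc S i0 (by
      intro i hi hSi
      have hbd : b i ≠ d := fun hh => hi (hb.inj (hh.trans hi0.symm))
      have hbc := (hcb i).ne'
      apply hstep _ _ hSi (hb.cyc i).symm
      · rcases hcd with ⟨rfl, rfl⟩ | ⟨rfl, rfl⟩; exact hbc; exact hbd
      · rcases hcd with ⟨rfl, rfl⟩ | ⟨rfl, rfl⟩; exact hbd; exact hbc) (j := j)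
      (by rintro rfl; exact hud (hj.symm.trans hi0)) (by rw [hj]; exact hu)
    refine ⟨b (i0 + 1), hSz, ?_, ?_⟩
    · rcases hcd with ⟨rfl, rfl⟩ | ⟨rfl, rfl⟩
      · exact (hcb _).symm
      · rw [← hi0]; exact (hb.cyc i0).symm
    · rcases hcd with ⟨rfl, rfl⟩ | ⟨rfl, rfl⟩
      · rw [← hi0]; exact (hb.cyc i0).symm
      · exact (hcb _).symm
  have hz : ∃ z, S z ∧ G.Adj z x ∧ G.Adj z y := by
    by_contra hcon
    have hcl : ∀ u a, S u → G.Adj u a → S a := by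
      intro u a hu hua
      apply hstep u a hu hua
      · rintro rfl; exact hcon (hround a y (Or.inl ⟨rfl, rfl⟩) hxy u hu hua.symm)
      · rintro rfl; exact hcon (hround a x (Or.inr ⟨rfl, rfl⟩) hxy.symm u hu hua.symm)
    have hw : ∀ u a, G.Walk u a → S u → S a := by
      intro u a w
      induction w with
      | nil => exact id
      | cons hadj _ ih => intro hu; exact ih (hcl _ _ hu hadj)
    obtain ⟨w⟩ := hconn.preconnected v x
    exact (hw v x w hSv).1 rfl
  obtain ⟨z, hz1, hz2, hz3⟩ := hz
  have e1 : kap I x y z = 2 := by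
    unfold kap; rw [(h.adj z x hz2.ne).mpr hz2, (h.adj z y hz3.ne).mpr hz3]; norm_num
  have e2 : kap I' x y z = 2 := by
    unfold kap; rw [(h'.adj z x hz2.ne).mpr hz2, (h'.adj z y hz3.ne).mpr hz3]; norm_num
  have hL1 : L = 1 := by have := hz1.2.2; rw [e1, e2] at this; linarith
  intro u
  have := hle u
  rwa [hL1, one_mul] at this

/-- Rigidity of Gram matrices. -/
lemma GP.unique (h : GP G I) (h' : GP G I') (hconn : G.Connected)
    (htri : ∀ v, ∃ p q, G.Adj v p ∧ G.Adj v q ∧ G.Adj p q) : I = I' := by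
  have key : ∀ x y, G.Adj x y → ∀ u, kap I x y u = kap I' x y u := fun x y hxy u =>
    le_antisymm (h.kap_le h' hconn htri hxy u) (h'.kap_le h hconn htri hxy u)
  funext u v
  obtain ⟨p, q, h1, h2, h3⟩ := htri v
  have a1 := key v p h1 u
  have a2 := key v q h2 u
  have a3 := key p q h3 u
  unfold kap at a1 a2 a3
  linarith

end MaxPrinciple
end KAT

namespace KAT
section Forms
open ComplexConjugate

/-- Hermitian forms in two variables. -/
@[ext]
structure Frm where
  A : ℝ
  B : ℂ
  C : ℝ

/-- value of the form -/
noncomputable def Frm.Q (X : Frm) (z w : ℂ) : ℝ :=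
  X.A * Complex.normSq z + 2 * (conj X.B * z * conj w).re + X.C * Complex.normSq w

/-- Lorentz product -/
noncomputable def ip (X Y : Frm) : ℝ := (X.B * conj Y.B).re - (X.A * Y.C + Y.A * X.C) / 2

/-- pull back by a matrix -/
noncomputable def pull (a b c d : ℂ) (X : Frm) : Frm where
  A := X.Q a c
  B := conj (X.A * a * conj b + conj X.B * a * conj d + X.B * c * conj b + X.C * c * conj d)
  C := X.Q b d

lemma Q_real (X : Frm) (z w : ℂ) : X.Q z w = X.A * (z.re ^ 2 + z.im ^ 2)
    + 2 * (X.B.re * (z.re * w.re + z.im * w.im) + X.B.im * (z.im * w.re - z.re * w.im))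
    + X.C * (w.re ^ 2 + w.im ^ 2) := by
  simp [Frm.Q, Complex.normSq_apply]
  ring

lemma ip_real (X Y : Frm) : ip X Y = X.B.re * Y.B.re + X.B.im * Y.B.im
    - (X.A * Y.C + Y.A * X.C) / 2 := by
  simp [ip]

lemma pull_B_re (a b c d : ℂ) (X : Frm) : (pull a b c d X).B.re =
    X.A * (a.re * b.re + a.im * b.im) + X.C * (c.re * d.re + c.im * d.im) +
    X.B.re * (a.re * d.re + a.im * d.im + c.re * b.re + c.im * b.im) +
    X.B.im * (a.im * d.re - a.re * d.im + c.re * b.im - c.im * b.re) := by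
  simp [pull]
  ring

lemma pull_B_im (a b c d : ℂ) (X : Frm) : (pull a b c d X).B.im =
    X.A * (a.re * b.im - a.im * b.re) + X.C * (c.re * d.im - c.im * d.re) +
    X.B.re * (a.re * d.im - a.im * d.re + c.re * b.im - c.im * b.re) +
    X.B.im * (a.re * d.re + a.im * d.im - c.re * b.re - c.im * b.im) := by
  simp [pull]
  ring

lemma pull_A (a b c d : ℂ) (X : Frm) : (pull a b c d X).A = X.Q a c := rfl
lemma pull_C (a b c d : ℂ) (X : Frm) : (pull a b c d X).C = X.Q b d := rfl

lemma pull_Q (a b c d : ℂ) (X : Frm) (z w : ℂ) :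
    (pull a b c d X).Q z w = X.Q (a * z + b * w) (c * z + d * w) := by
  rw [Q_real, Q_real, pull_B_re, pull_B_im, pull_A, pull_C, Q_real, Q_real]
  simp only [Complex.add_re, Complex.add_im, Complex.mul_re, Complex.mul_im]
  ring

lemma ip_pull (a b c d : ℂ) (X Y : Frm) :
    ip (pull a b c d X) (pull a b c d Y) = Complex.normSq (a * d - b * c) * ip X Y := by
  rw [ip_real, ip_real, pull_B_re, pull_B_im, pull_A, pull_C, pull_B_re, pull_B_im, pull_A, pull_C,
    Q_real, Q_real, Q_real, Q_real, Complex.normSq_apply]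
  simp only [Complex.sub_re, Complex.sub_im, Complex.mul_re, Complex.mul_im]
  ring

lemma Q_smul (X : Frm) (k z w : ℂ) : X.Q (k * z) (k * w) = Complex.normSq k * X.Q z w := by
  rw [Q_real, Q_real, Complex.normSq_apply]
  simp only [Complex.mul_re, Complex.mul_im]
  ring

/-- lower half plane -/
noncomputable def lhp : Frm := ⟨0, Complex.I, 0⟩

lemma lhp_Q (z w : ℂ) : lhp.Q z w = 2 * (z.im * w.re - z.re * w.im) := by
  rw [Q_real]; simp [lhp]

lemma ip_lhp (X : Frm) : ip X lhp = X.B.im := by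
  rw [ip_real]; simp [lhp]

lemma exists_norm (X : Frm) (h : ip X X = 1) : ∃ a b c d : ℂ, Complex.normSq (a * d - b * c) = 1 ∧
    pull a b c d X = lhp := by
  rw [ip_real] at h
  by_cases hA : X.A = 0
  · refine ⟨-Complex.I * X.B, -X.B * X.C / 2, 0, 1, ?_, ?_⟩
    · rw [hA] at h
      simp [Complex.normSq_apply]
      linarith
    · rw [hA] at h
      have h1 : X.B.re ^ 2 + X.B.im ^ 2 = 1 := by linarith
      apply Frm.ext
      · rw [pull_A, Q_real]; simp [lhp, hA]
      · apply Complex.ext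
        · rw [pull_B_re]; simp [lhp, hA]; ring
        · rw [pull_B_im]; simp [lhp, hA]; linarith
      · rw [pull_C, Q_real]; simp [lhp, hA]; linear_combination (-X.C) * h1
  · have hC : X.C = (X.B.re ^ 2 + X.B.im ^ 2 - 1) / X.A := by
      field_simp; linarith
    have hzp : ∀ e : ℝ, ((-X.B + (e : ℂ)) / (X.A : ℂ)).re = (-X.B.re + e) / X.A ∧
        ((-X.B + (e : ℂ)) / (X.A : ℂ)).im = (-X.B.im) / X.A := by
      intro e
      rw [Complex.div_ofReal_re, Complex.div_ofReal_im]; simp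
    obtain ⟨p1, p2⟩ := hzp 1
    obtain ⟨q1, q2⟩ := hzp (-1)
    set zp := ((-X.B + ((1 : ℝ) : ℂ)) / (X.A : ℂ))
    set zm := ((-X.B + ((-1 : ℝ) : ℂ)) / (X.A : ℂ))
    refine ⟨Complex.I * X.A / 2 * zp, zm, Complex.I * X.A / 2, 1, ?_, ?_⟩
    · rw [Complex.normSq_apply]
      simp [p1, p2, q1, q2]
      field_simp
      ring
    · apply Frm.ext
      · rw [pull_A, Q_real]; simp [lhp, p1, p2, hC]; field_simp; ring
      · apply Complex.ext
        · rw [pull_B_re]; simp [lhp, p1, p2, q1, q2, hC]; field_simp; ring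
        · rw [pull_B_im]; simp [lhp, p1, p2, q1, q2, hC]; field_simp; ring
      · rw [pull_C, Q_real]; simp [lhp, q1, q2, hC]; field_simp; ring

end Forms
end KAT

namespace KAT
section FormsDisj
open ComplexConjugate

/-- The open disks of two forms are disjoint. -/
def Disj (X Y : Frm) : Prop := ∀ z w : ℂ, ¬ (X.Q z w < 0 ∧ Y.Q z w < 0)

lemma lhp_disj_shape (X : Frm) (h1 : ip X X = 1) (h : Disj X lhp) :
    (0 < X.A ∧ X.B.im ≤ -1) ∨ (X.A = 0 ∧ X.B.re = 0 ∧ X.B.im = -1 ∧ 0 ≤ X.C) := by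
  rw [ip_real] at h1
  have key : ∀ p q : ℝ, q < 0 → 0 ≤ X.A * (p ^ 2 + q ^ 2) + 2 * (X.B.re * p + X.B.im * q) + X.C := by
    intro p q hq
    by_contra hc
    push Not at hc
    refine h ⟨p, q⟩ 1 ⟨?_, ?_⟩
    · rw [Q_real]; simp; linarith
    · rw [lhp_Q]; simp; linarith
  rcases lt_trichotomy X.A 0 with hA | hA | hA
  · exfalso
    -- q = - y
    set M := 1 + (2 * |X.B.im| + |X.C|) / (-X.A) with hM
    have hMp : 1 ≤ M := by
      have : 0 ≤ (2 * |X.B.im| + |X.C|) / (-X.A) := by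
        apply div_nonneg <;> [positivity; linarith]
      linarith
    have h2 : (M - 1) * (-X.A) = 2 * |X.B.im| + |X.C| := by
      rw [hM]; field_simp [hA.ne]; ring
    have := key 0 (-M) (by linarith)
    have h3 := neg_abs_le X.B.im
    have h4 := le_abs_self X.C
    have h5 := abs_nonneg X.C
    have h6 : X.B.im * (-M) ≤ |X.B.im| * M := by nlinarith
    have h7 : X.C ≤ |X.C| * M := by nlinarith
    have h8 : 0 ≤ M * (X.A * M + 2 * |X.B.im| + |X.C|) := by nlinarith
    have h9 : X.A * M + 2 * |X.B.im| + |X.C| = X.A := by linarith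
    rw [h9] at h8
    nlinarith
  · right
    rw [hA] at h1 key
    have h1' : X.B.re ^ 2 + X.B.im ^ 2 = 1 := by linarith
    have hfin : X.B.im = -1 := by
      by_contra hne
      have hlt : -1 < X.B.im := lt_of_le_of_ne (by nlinarith [sq_nonneg X.B.re]) (Ne.symm hne)
      -- point k(-B - i)
      set e := 1 + X.B.im with he
      have hep : 0 < e := by linarith
      set k := (1 + |X.C|) / e with hk
      have hkp : 0 < k := by positivity
      have hke : k * e = 1 + |X.C| := by rw [hk]; field_simp
      have := key (-k * X.B.re) (-k * e) (by nlinarith)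
      have h4 := le_abs_self X.C
      have h5 : X.B.re * (-k * X.B.re) + X.B.im * (-k * e) = - (k * e) := by
        rw [he]; linear_combination (-k) * h1'
      nlinarith [abs_nonneg X.C]
    have hre : X.B.re = 0 := by
      rw [hfin] at h1'
      have : X.B.re ^ 2 = 0 := by linarith
      exact pow_eq_zero_iff (two_ne_zero) |>.1 this
    refine ⟨hA, hre, hfin, ?_⟩
    by_contra hc
    push Not at hc
    have := key 0 (X.C / 4) (by linarith)
    rw [hfin, hre] at this
    linarith
  · left
    refine ⟨hA, ?_⟩
    by_contra hc
    push Not at hc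
    obtain ⟨τ, hτ1, hτ2⟩ := exists_between (show max 0 (-X.B.im) < 1 by
      rw [max_lt_iff]; constructor <;> linarith)
    rw [max_lt_iff] at hτ1
    have := key (-X.B.re / X.A) ((-X.B.im - τ) / X.A) (div_neg_of_neg_of_pos (by linarith) hA)
    have e : X.A * (X.A * ((-X.B.re / X.A) ^ 2 + ((-X.B.im - τ) / X.A) ^ 2)
      + 2 * (X.B.re * (-X.B.re / X.A) + X.B.im * ((-X.B.im - τ) / X.A)) + X.C) = τ ^ 2 - 1 := by
      field_simp
      linear_combination (-1) * h1
    have h2 : 0 ≤ τ ^ 2 - 1 := by rw [← e]; positivity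
    nlinarith

lemma lhp_disj (X : Frm) (h1 : ip X X = 1) (h : Disj X lhp) :
    (∀ z w, 0 ≤ X.Q z w + lhp.Q z w) ∧ ip X lhp ≤ -1 ∧
    ((∃ z w : ℂ, (z ≠ 0 ∨ w ≠ 0) ∧ X.Q z w ≤ 0 ∧ lhp.Q z w ≤ 0) ↔ ip X lhp = -1) := by
  have hs := lhp_disj_shape X h1 h
  rw [ip_lhp]
  rw [ip_real] at h1
  rcases hs with ⟨hA, hB⟩ | ⟨hA, hre, him, hC⟩
  · have id : ∀ z w : ℂ, X.A * (X.Q z w + lhp.Q z w) =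
        (X.A * z.re + X.B.re * w.re - (X.B.im + 1) * w.im) ^ 2 +
        (X.A * z.im + X.B.re * w.im + (X.B.im + 1) * w.re) ^ 2 +
        (-2 - 2 * X.B.im) * (w.re ^ 2 + w.im ^ 2) := by
      intro z w
      rw [Q_real, lhp_Q]
      linear_combination (-(w.re ^ 2 + w.im ^ 2)) * h1
    have psd : ∀ z w, 0 ≤ X.Q z w + lhp.Q z w := by
      intro z w
      have : 0 ≤ X.A * (X.Q z w + lhp.Q z w) := by
        rw [id]
        have : 0 ≤ (-2 - 2 * X.B.im) * (w.re ^ 2 + w.im ^ 2) := by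
          apply mul_nonneg <;> [linarith; positivity]
        positivity
      exact nonneg_of_mul_nonneg_right this hA
    refine ⟨psd, hB, ?_, ?_⟩
    · rintro ⟨z, w, hzw, hq1, hq2⟩
      by_contra hne
      have hlt : X.B.im < -1 := lt_of_le_of_ne hB hne
      have h0 : X.Q z w + lhp.Q z w = 0 := le_antisymm (by linarith) (psd z w)
      have i := id z w
      rw [h0] at i
      have hw : w.re ^ 2 + w.im ^ 2 = 0 := by
        by_contra hw
        have : 0 < w.re ^ 2 + w.im ^ 2 := lt_of_le_of_ne (by positivity) (Ne.symm hw)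
        have : 0 < (-2 - 2 * X.B.im) * (w.re ^ 2 + w.im ^ 2) := mul_pos (by linarith) this
        nlinarith [sq_nonneg (X.A * z.re + X.B.re * w.re - (X.B.im + 1) * w.im),
          sq_nonneg (X.A * z.im + X.B.re * w.im + (X.B.im + 1) * w.re)]
      have w1 : w.re = 0 := by nlinarith [sq_nonneg w.re, sq_nonneg w.im]
      have w2 : w.im = 0 := by nlinarith [sq_nonneg w.re, sq_nonneg w.im]
      rw [w1, w2] at i
      have i2 : (X.A * z.re) ^ 2 + (X.A * z.im) ^ 2 = 0 := by linarith
      have z1 : X.A * z.re = 0 := by nlinarith [sq_nonneg (X.A * z.re), sq_nonneg (X.A * z.im)]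
      have z2 : X.A * z.im = 0 := by nlinarith [sq_nonneg (X.A * z.re), sq_nonneg (X.A * z.im)]
      rcases hzw with hz | hw'
      · apply hz
        apply Complex.ext
        · simpa [hA.ne'] using z1
        · simpa [hA.ne'] using z2
      · exact hw' (Complex.ext w1 w2)
    · intro hB1
      refine ⟨((-X.B.re / X.A : ℝ) : ℂ), 1, Or.inr one_ne_zero, ?_, ?_⟩
      · have : X.A * X.Q ((-X.B.re / X.A : ℝ) : ℂ) 1 = 0 := by
          rw [Q_real, Complex.ofReal_re, Complex.ofReal_im, Complex.one_re, Complex.one_im]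
          field_simp
          rw [hB1] at h1
          linear_combination (-1) * h1
        rcases mul_eq_zero.1 this with h | h
        · exact absurd h hA.ne'
        · exact h.le
      · rw [lhp_Q, Complex.ofReal_re, Complex.ofReal_im]; simp
  · refine ⟨?_, him.le, ?_⟩
    · intro z w
      rw [Q_real, lhp_Q, hA, hre, him]
      nlinarith [mul_nonneg hC (show 0 ≤ w.re ^ 2 + w.im ^ 2 by positivity)]
    · refine ⟨fun _ => him, fun _ => ⟨1, 0, Or.inl one_ne_zero, ?_, ?_⟩⟩
      · rw [Q_real, hA]; simp
      · rw [lhp_Q]; simp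

lemma pull_inv_Q (a b c d : ℂ) (X : Frm) (z w : ℂ) :
    (pull a b c d X).Q (d * z + (-b) * w) ((-c) * z + a * w) =
      Complex.normSq (a * d - b * c) * X.Q z w := by
  rw [pull_Q, ← Q_smul]
  congr 1 <;> ring

lemma disj_pull (a b c d : ℂ) (X Y : Frm) (h : Disj X Y) :
    Disj (pull a b c d X) (pull a b c d Y) := by
  intro z w
  rw [pull_Q, pull_Q]
  exact h _ _

lemma disj_main (X Y : Frm) (hX : ip X X = 1) (hY : ip Y Y = 1) (h : Disj X Y) :
    (∀ z w, 0 ≤ X.Q z w + Y.Q z w) ∧ ip X Y ≤ -1 ∧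
    ((∃ z w : ℂ, (z ≠ 0 ∨ w ≠ 0) ∧ X.Q z w ≤ 0 ∧ Y.Q z w ≤ 0) ↔ ip X Y = -1) := by
  obtain ⟨a, b, c, d, hdet, hp⟩ := exists_norm Y hY
  have hdet0 : a * d - b * c ≠ 0 := by
    intro h0; rw [h0] at hdet; simp at hdet
  have h1 : ip (pull a b c d X) (pull a b c d X) = 1 := by rw [ip_pull, hdet, hX, one_mul]
  have h2 : Disj (pull a b c d X) lhp := hp ▸ disj_pull a b c d X Y h
  obtain ⟨e1, e2, e3⟩ := lhp_disj _ h1 h2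
  rw [← hp] at e1 e2 e3
  rw [ip_pull, hdet, one_mul] at e2 e3
  have inv : ∀ Z : Frm, ∀ z w, Z.Q z w =
      (pull a b c d Z).Q (d * z + (-b) * w) ((-c) * z + a * w) := by
    intro Z z w; rw [pull_inv_Q, hdet, one_mul]
  refine ⟨fun z w => ?_, e2, ?_⟩
  · rw [inv X, inv Y]; exact e1 _ _
  · rw [← e3]
    constructor
    · rintro ⟨z, w, hzw, q1, q2⟩
      refine ⟨d * z + (-b) * w, (-c) * z + a * w, ?_, ?_, ?_⟩
      · by_contra hc
        push Not at hc
        obtain ⟨c1, c2⟩ := hc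
        have z0 : (a * d - b * c) * z = 0 := by linear_combination a * c1 + b * c2
        have w0 : (a * d - b * c) * w = 0 := by linear_combination c * c1 + d * c2
        rcases hzw with hz | hw
        · exact hz ((mul_eq_zero.1 z0).resolve_left hdet0)
        · exact hw ((mul_eq_zero.1 w0).resolve_left hdet0)
      · rw [← inv]; exact q1
      · rw [← inv]; exact q2
    · rintro ⟨z, w, hzw, q1, q2⟩
      rw [pull_Q] at q1 q2
      refine ⟨_, _, ?_, q1, q2⟩
      by_contra hc
      push Not at hc
      obtain ⟨c1, c2⟩ := hc
      have z0 : (a * d - b * c) * z = 0 := by linear_combination d * c1 - b * c2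
      have w0 : (a * d - b * c) * w = 0 := by linear_combination (-c) * c1 + a * c2
      rcases hzw with hz | hw
      · exact hz ((mul_eq_zero.1 z0).resolve_left hdet0)
      · exact hw ((mul_eq_zero.1 w0).resolve_left hdet0)

end FormsDisj
end KAT

namespace KAT
section Sphere
open ComplexConjugate

/-- Homogeneous coordinates on the sphere. -/
noncomputable def toRS (z w : ℂ) : RS := if w = 0 then OnePoint.infty else ((z / w : ℂ) : RS)

lemma moeb_infty (a b c d : ℂ) : moeb a b c d OnePoint.infty =
    if c = 0 then (OnePoint.infty : RS) else (((a / c : ℂ) : RS)) := rfl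

lemma moeb_coe (a b c d w : ℂ) : moeb a b c d (w : RS) =
    if c * w + d = 0 then (OnePoint.infty : RS)
      else (((a * w + b) / (c * w + d) : ℂ) : RS) := rfl

lemma conjRS_infty : conjRS OnePoint.infty = OnePoint.infty := rfl

lemma conjRS_coe (w : ℂ) : conjRS (w : RS) = ((conj w : ℂ) : RS) := rfl

lemma exists_toRS (p : RS) : ∃ z w : ℂ, (z ≠ 0 ∨ w ≠ 0) ∧ p = toRS z w := by
  induction p using OnePoint.rec with
  | infty => exact ⟨1, 0, Or.inl one_ne_zero, by simp [toRS]⟩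
  | coe z => exact ⟨z, 1, Or.inr one_ne_zero, by simp [toRS]⟩

lemma toRS_smul (k z w : ℂ) (hk : k ≠ 0) : toRS (k * z) (k * w) = toRS z w := by
  unfold toRS
  by_cases hw : w = 0
  · simp [hw]
  · simp [hw, hk]
    field_simp

lemma moeb_toRS (a b c d z w : ℂ) (hd : a * d - b * c ≠ 0) (h : z ≠ 0 ∨ w ≠ 0) :
    moeb a b c d (toRS z w) = toRS (a * z + b * w) (c * z + d * w) := by
  by_cases hw : w = 0
  · subst hw
    have hz : z ≠ 0 := by simpa using h
    rw [toRS, if_pos rfl, moeb_infty]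
    by_cases hc : c = 0
    · simp [hc, toRS]
    · simp [hc, toRS, hz]
      field_simp
  · rw [toRS, if_neg hw, moeb_coe]
    have e : c * (z / w) + d = (c * z + d * w) / w := by field_simp
    by_cases hc : c * z + d * w = 0
    · rw [e, hc]; simp [toRS, hc]
    · rw [e, if_neg (div_ne_zero hc hw)]
      simp only [toRS, if_neg hc]
      congr 1
      field_simp

lemma mul_ne (a b c d z w : ℂ) (hd : a * d - b * c ≠ 0) (h : z ≠ 0 ∨ w ≠ 0) :
    a * z + b * w ≠ 0 ∨ c * z + d * w ≠ 0 := by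
  by_contra hc
  push Not at hc
  obtain ⟨c1, c2⟩ := hc
  have z0 : (a * d - b * c) * z = 0 := by linear_combination d * c1 - b * c2
  have w0 : (a * d - b * c) * w = 0 := by linear_combination (-c) * c1 + a * c2
  rcases h with hz | hw
  · exact hz ((mul_eq_zero.1 z0).resolve_left hd)
  · exact hw ((mul_eq_zero.1 w0).resolve_left hd)

lemma moeb_comp (a b c d a' b' c' d' : ℂ) (hd : a * d - b * c ≠ 0)
    (hd' : a' * d' - b' * c' ≠ 0) (p : RS) :
    moeb a b c d (moeb a' b' c' d' p) =
      moeb (a * a' + b * c') (a * b' + b * d') (c * a' + d * c') (c * b' + d * d') p := by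
  obtain ⟨z, w, h, rfl⟩ := exists_toRS p
  rw [moeb_toRS _ _ _ _ _ _ hd' h, moeb_toRS _ _ _ _ _ _ hd (mul_ne _ _ _ _ _ _ hd' h),
    moeb_toRS _ _ _ _ _ _ _ h]
  · congr 1 <;> ring
  · have : (a * a' + b * c') * (c * b' + d * d') - (a * b' + b * d') * (c * a' + d * c')
        = (a * d - b * c) * (a' * d' - b' * c') := by ring
    rw [this]
    exact mul_ne_zero hd hd'

lemma moeb_scalar (k : ℂ) (hk : k ≠ 0) (p : RS) : moeb k 0 0 k p = p := by
  obtain ⟨z, w, h, rfl⟩ := exists_toRS p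
  rw [moeb_toRS _ _ _ _ _ _ (by simpa using hk) h]
  simp only [zero_mul, add_zero, zero_add]
  exact toRS_smul _ _ _ hk

lemma moeb_inv_left (a b c d : ℂ) (hd : a * d - b * c ≠ 0) (p : RS) :
    moeb d (-b) (-c) a (moeb a b c d p) = p := by
  have hd' : d * a - (-b) * (-c) ≠ 0 := by
    have : d * a - (-b) * (-c) = a * d - b * c := by ring
    rwa [this]
  rw [moeb_comp _ _ _ _ _ _ _ _ hd' hd]
  have e1 : d * a + -b * c = a * d - b * c := by ring
  have e2 : d * b + -b * d = 0 := by ring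
  have e3 : -c * a + a * c = 0 := by ring
  have e4 : -c * b + a * d = a * d - b * c := by ring
  rw [e1, e2, e3, e4]
  exact moeb_scalar _ hd p

lemma moeb_inv_right (a b c d : ℂ) (hd : a * d - b * c ≠ 0) (p : RS) :
    moeb a b c d (moeb d (-b) (-c) a p) = p := by
  have hd' : d * a - (-b) * (-c) ≠ 0 := by
    have : d * a - (-b) * (-c) = a * d - b * c := by ring
    rwa [this]
  have := moeb_inv_left d (-b) (-c) a hd' p
  simpa using this

/-- The closed disk of a form. -/
def diskOf (X : Frm) : Set RS := {p | ∃ z w : ℂ, (z ≠ 0 ∨ w ≠ 0) ∧ p = toRS z w ∧ X.Q z w ≤ 0}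

lemma toRS_eq (z w z' w' : ℂ) (h : z ≠ 0 ∨ w ≠ 0) (h' : z' ≠ 0 ∨ w' ≠ 0)
    (he : toRS z w = toRS z' w') : ∃ k : ℂ, k ≠ 0 ∧ z = k * z' ∧ w = k * w' := by
  unfold toRS at he
  by_cases hw : w = 0 <;> by_cases hw' : w' = 0
  · subst hw hw'
    have hz : z ≠ 0 := by simpa using h
    have hz' : z' ≠ 0 := by simpa using h'
    exact ⟨z / z', div_ne_zero hz hz', by field_simp, by simp⟩
  · rw [if_pos hw, if_neg hw'] at he
    exact absurd he (OnePoint.infty_ne_coe _)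
  · rw [if_pos hw', if_neg hw] at he
    exact absurd he (OnePoint.coe_ne_infty _)
  · rw [if_neg hw', if_neg hw] at he
    have he := OnePoint.coe_injective he
    refine ⟨w / w', div_ne_zero hw hw', ?_, by field_simp⟩
    field_simp at he ⊢
    linear_combination he

lemma mem_diskOf (X : Frm) (z w : ℂ) (h : z ≠ 0 ∨ w ≠ 0) : toRS z w ∈ diskOf X ↔ X.Q z w ≤ 0 := by
  constructor
  · rintro ⟨z', w', h', he, hq⟩
    obtain ⟨k, hk, rfl, rfl⟩ := toRS_eq _ _ _ _ h h' he
    rw [Q_smul]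
    exact mul_nonpos_of_nonneg_of_nonpos (Complex.normSq_nonneg k) hq
  · intro hq
    exact ⟨z, w, h, rfl, hq⟩

lemma coe_mem_diskOf (X : Frm) (z : ℂ) : (z : RS) ∈ diskOf X ↔ X.Q z 1 ≤ 0 := by
  rw [← mem_diskOf X z 1 (Or.inr one_ne_zero)]
  simp [toRS]

lemma infty_mem_diskOf (X : Frm) : (OnePoint.infty : RS) ∈ diskOf X ↔ X.A ≤ 0 := by
  have := mem_diskOf X 1 0 (Or.inl one_ne_zero)
  rw [toRS, if_pos rfl] at this
  rw [this, Q_real]; simp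

lemma moeb_mem_diskOf (a b c d : ℂ) (hd : a * d - b * c ≠ 0) (X : Frm) (p : RS) :
    moeb a b c d p ∈ diskOf X ↔ p ∈ diskOf (pull a b c d X) := by
  obtain ⟨z, w, h, rfl⟩ := exists_toRS p
  rw [moeb_toRS _ _ _ _ _ _ hd h, mem_diskOf _ _ _ (mul_ne _ _ _ _ _ _ hd h), mem_diskOf _ _ _ h,
    pull_Q]

/-- scaling a form -/
noncomputable def Frm.sc (k : ℝ) (X : Frm) : Frm := ⟨k * X.A, (k : ℂ) * X.B, k * X.C⟩

lemma sc_Q (k : ℝ) (X : Frm) (z w : ℂ) : (X.sc k).Q z w = k * X.Q z w := by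
  rw [Q_real, Q_real]; simp [Frm.sc]; ring

lemma sc_ip (k : ℝ) (X Y : Frm) : ip (X.sc k) (Y.sc k) = k ^ 2 * ip X Y := by
  rw [ip_real, ip_real]; simp [Frm.sc]; ring

lemma diskOf_sc (k : ℝ) (hk : 0 < k) (X : Frm) : diskOf (X.sc k) = diskOf X := by
  ext p
  obtain ⟨z, w, h, rfl⟩ := exists_toRS p
  rw [mem_diskOf _ _ _ h, mem_diskOf _ _ _ h, sc_Q, mul_nonpos_iff_pos_imp_nonpos]
  constructor
  · intro h; exact h.1 hk
  · intro h; exact ⟨fun _ => h, fun _ => hk.le⟩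

lemma exists_form (D : Set RS) (hD : IsDiskRS D) : ∃ X : Frm, ip X X = 1 ∧ D = diskOf X := by
  obtain ⟨f, ⟨a, b, c, d, hd, rfl⟩, ζ, r, hr, rfl⟩ := hD
  set S : Frm := ⟨1 / r, -(ζ / r), (Complex.normSq ζ - r ^ 2) / r⟩ with hS
  have hS1 : ip S S = 1 := by
    rw [ip_real]; simp [hS, Complex.normSq_apply]; field_simp; ring
  have hSd : coeDisk ζ r = diskOf S := by
    ext p
    induction p using OnePoint.rec with
    | infty =>
      rw [infty_mem_diskOf]
      simp only [hS, coeDisk, Set.mem_image]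
      constructor
      · rintro ⟨x, _, hx⟩; exact absurd hx (OnePoint.coe_ne_infty _)
      · intro h; have : 0 < 1 / r := by positivity
        linarith
    | coe z =>
      rw [coe_mem_diskOf]
      have e : S.Q z 1 = (Complex.normSq (z - ζ) - r ^ 2) / r := by
        rw [Q_real]; simp [hS, Complex.normSq_apply]; field_simp; ring
      rw [e, div_nonpos_iff]
      simp only [coeDisk, Set.mem_image, OnePoint.coe_eq_coe, exists_eq_right, mem_closedBall,
        dist_eq_norm]
      rw [Complex.normSq_eq_norm_sq]
      constructor
      · intro h
        right
        exact ⟨by nlinarith [norm_nonneg (z - ζ)], hr.le⟩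
      · rintro (h | h)
        · linarith [h.2]
        · exact abs_le_of_sq_le_sq' (by linarith [h.1]) hr.le |>.2
  have hd' : d * a - (-b) * (-c) ≠ 0 := by
    have : d * a - (-b) * (-c) = a * d - b * c := by ring
    rwa [this]
  have hn : 0 < ‖d * a - (-b) * (-c)‖ := norm_pos_iff.2 hd'
  refine ⟨(pull d (-b) (-c) a S).sc (1 / ‖d * a - (-b) * (-c)‖), ?_, ?_⟩
  · rw [sc_ip, ip_pull, hS1, Complex.normSq_eq_norm_sq, mul_one, one_div, inv_pow, inv_mul_cancel₀ (pow_pos hn 2).ne']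
  · rw [diskOf_sc _ (by positivity), hSd]
    ext p
    rw [← moeb_mem_diskOf _ _ _ _ hd']
    constructor
    · rintro ⟨q, hq, rfl⟩
      rwa [moeb_inv_left _ _ _ _ hd]
    · intro hq
      exact ⟨_, hq, moeb_inv_right _ _ _ _ hd p⟩

lemma Q_cont (X : Frm) : Continuous fun z : ℂ => X.Q z 1 := by
  unfold Frm.Q
  fun_prop

/-- Open disk of a form is contained in the interior. -/
lemma toRS_mem_interior (X : Frm) (z w : ℂ) (h : z ≠ 0 ∨ w ≠ 0) (hq : X.Q z w < 0) :
    toRS z w ∈ interior (diskOf X) := by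
  -- the complement of the open disk
  have hopen : IsOpen {p : RS | ∃ z w : ℂ, (z ≠ 0 ∨ w ≠ 0) ∧ p = toRS z w ∧ X.Q z w < 0} := by
    have hpre : ((↑) ⁻¹' {p : RS | ∃ z w : ℂ, (z ≠ 0 ∨ w ≠ 0) ∧ p = toRS z w ∧ X.Q z w < 0} : Set ℂ)
        = {z : ℂ | X.Q z 1 < 0} := by
      ext z
      simp only [Set.mem_preimage, Set.mem_setOf_eq]
      constructor
      · rintro ⟨z', w', h', he, hq⟩
        have he' : toRS z 1 = toRS z' w' := by rw [← he]; simp [toRS]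
        obtain ⟨k, hk, e1, e2⟩ := toRS_eq _ _ _ _ (Or.inr one_ne_zero) h' he'
        rw [e1, e2, Q_smul]
        exact mul_neg_of_pos_of_neg (Complex.normSq_pos.2 hk) hq
      · intro hz
        exact ⟨z, 1, Or.inr one_ne_zero, by simp [toRS], hz⟩
    have ho : IsOpen {z : ℂ | X.Q z 1 < 0} := isOpen_lt (Q_cont X) continuous_const
    rw [OnePoint.isOpen_def, hpre]
    refine ⟨?_, ho⟩
    rintro ⟨z', w', h', he, hq⟩
    have hA : X.A < 0 := by
      have he' : toRS 1 0 = toRS z' w' := by rw [← he]; simp [toRS]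
      obtain ⟨k, hk, e1, e2⟩ := toRS_eq _ _ _ _ (Or.inl one_ne_zero) h' he'
      have : X.Q 1 0 < 0 := by
        rw [e1, e2, Q_smul]
        exact mul_neg_of_pos_of_neg (Complex.normSq_pos.2 hk) hq
      rw [Q_real] at this
      simpa using this
    apply Metric.isCompact_of_isClosed_isBounded ho.isClosed_compl
    rw [isBounded_iff_forall_norm_le]
    refine ⟨1 + (2 * ‖X.B‖ + |X.C|) / (-X.A), ?_⟩
    intro z hz
    simp only [Set.mem_compl_iff, Set.mem_setOf_eq, not_lt] at hz
    by_contra hc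
    push Not at hc
    set M := ‖z‖
    have hK : 0 ≤ (2 * ‖X.B‖ + |X.C|) / (-X.A) := div_nonneg (by positivity) (by linarith)
    have hM : 1 < M := by linarith
    have h2 : (2 * ‖X.B‖ + |X.C|) < (M - 1) * (-X.A) := by
      rw [← div_lt_iff₀ (by linarith)]; linarith
    have hq : X.Q z 1 ≤ X.A * M ^ 2 + 2 * (‖X.B‖ * M) + |X.C| := by
      unfold Frm.Q
      rw [Complex.normSq_eq_norm_sq]
      have h3 : (conj X.B * z * conj 1).re ≤ ‖X.B‖ * M := by
        refine (Complex.re_le_norm _).trans ?_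
        simp [M]
      have := le_abs_self X.C
      simp only [map_one, mul_one] at h3 ⊢
      linarith
    have h5 := abs_nonneg X.C
    have h7 : |X.C| ≤ |X.C| * M := by nlinarith
    have h8 : 0 ≤ M * (X.A * M + 2 * ‖X.B‖ + |X.C|) := by nlinarith
    have h9 : X.A * M + 2 * ‖X.B‖ + |X.C| < 0 := by nlinarith
    nlinarith
  refine _root_.mem_interior.2 ⟨_, ?_, hopen, ⟨z, w, h, rfl, hq⟩⟩
  rintro p ⟨z', w', h', he, hq⟩
  exact ⟨z', w', h', he, hq.le⟩

lemma disj_of_interior (X Y : Frm) (h : Disjoint (interior (diskOf X)) (interior (diskOf Y))) :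
    Disj X Y := by
  rintro z w ⟨h1, h2⟩
  have hzw : z ≠ 0 ∨ w ≠ 0 := by
    by_contra hc
    push Not at hc
    rw [hc.1, hc.2, Q_real] at h1
    simp at h1
  exact Set.disjoint_left.1 h (toRS_mem_interior X z w hzw h1) (toRS_mem_interior Y z w hzw h2)

lemma inter_nonempty_iff (X Y : Frm) : (diskOf X ∩ diskOf Y).Nonempty ↔
    ∃ z w : ℂ, (z ≠ 0 ∨ w ≠ 0) ∧ X.Q z w ≤ 0 ∧ Y.Q z w ≤ 0 := by
  constructor
  · rintro ⟨p, h1, h2⟩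
    obtain ⟨z, w, h, rfl⟩ := exists_toRS p
    exact ⟨z, w, h, (mem_diskOf _ _ _ h).1 h1, (mem_diskOf _ _ _ h).1 h2⟩
  · rintro ⟨z, w, h, h1, h2⟩
    exact ⟨toRS z w, (mem_diskOf _ _ _ h).2 h1, (mem_diskOf _ _ _ h).2 h2⟩

/-- A packing of forms. -/
structure Pk {V : Type*} (G : SimpleGraph V) (X : V → Frm) : Prop where
  self : ∀ v, ip (X v) (X v) = 1
  psd : ∀ u v, u ≠ v → ∀ z w, 0 ≤ (X u).Q z w + (X v).Q z w
  le : ∀ u v, u ≠ v → ip (X u) (X v) ≤ -1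
  adj : ∀ u v, u ≠ v → (ip (X u) (X v) = -1 ↔ G.Adj u v)

lemma exists_Pk {V : Type*} (G : SimpleGraph V) (D : V → Set RS) (hD : ∀ v, IsDiskRS (D v))
    (hdisj : ∀ u v : V, u ≠ v → Disjoint (interior (D u)) (interior (D v)))
    (hcg : ∀ u v : V, u ≠ v → ((D u ∩ D v).Nonempty ↔ G.Adj u v)) :
    ∃ X : V → Frm, Pk G X ∧ ∀ v, D v = diskOf (X v) := by
  choose X h1 h2 using fun v => exists_form (D v) (hD v)
  have hm : ∀ u v, u ≠ v → _ := fun u v huv => disj_main (X u) (X v) (h1 u) (h1 v)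
    (disj_of_interior _ _ (by rw [← h2, ← h2]; exact hdisj u v huv))
  refine ⟨X, ⟨h1, fun u v huv => (hm u v huv).1, fun u v huv => (hm u v huv).2.1, ?_⟩, h2⟩
  intro u v huv
  rw [← (hm u v huv).2.2, ← inter_nonempty_iff, ← h2, ← h2, hcg u v huv]

lemma Pk.pull {V : Type*} {G : SimpleGraph V} {X : V → Frm} (h : Pk G X) (a b c d : ℂ)
    (hd : Complex.normSq (a * d - b * c) = 1) : Pk G (fun v => pull a b c d (X v)) where
  self v := by rw [ip_pull, hd, h.self, one_mul]
  psd u v huv z w := by rw [pull_Q, pull_Q]; exact h.psd u v huv _ _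
  le u v huv := by rw [ip_pull, hd, one_mul]; exact h.le u v huv
  adj u v huv := by rw [ip_pull, hd, one_mul]; exact h.adj u v huv

end Sphere
end KAT

namespace KAT
section Tri
open Classical in
lemma de_card {V : Type*} [Fintype V] [DecidableEq V] (G : SimpleGraph V) [DecidableRel G.Adj] :
    (de G).card = 2 * G.edgeFinset.card := by
  rw [← G.sum_degrees_eq_twice_card_edges]
  unfold de
  rw [Finset.card_filter, Fintype.sum_prod_type]
  apply Finset.sum_congr rfl
  intro v _
  have : (∑ y, if G.Adj (v, y).1 (v, y).2 then 1 else 0)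
      = (Finset.univ.filter fun y => G.Adj v y).card := by
    rw [Finset.card_filter]
  rw [← SimpleGraph.card_neighborFinset_eq_degree]
  refine Eq.trans ?_ (this.trans ?_)
  · apply Finset.sum_congr rfl
    intro y _
    congr 1
  · congr 1
    ext w
    simp

lemma de_card_del {V : Type*} [Fintype V] [DecidableEq V] (G : SimpleGraph V) [DecidableRel G.Adj]
    (v : V) : (de (G.comap (Subtype.val : {u : V // u ≠ v} → V))).card + 2 * G.degree v
      = (de G).card := by
  classical
  have h1 : (de G).card = ((de G).filter fun e => e.1 ≠ v ∧ e.2 ≠ v).card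
      + ((de G).filter fun e => e.1 = v).card + ((de G).filter fun e => e.2 = v).card := by
    rw [← Finset.card_union_of_disjoint, ← Finset.card_union_of_disjoint]
    · congr 1
      ext e
      simp only [Finset.mem_union, Finset.mem_filter]
      tauto
    · rw [Finset.disjoint_left]
      rintro e he hc
      simp only [Finset.mem_union, Finset.mem_filter, de, Finset.mem_univ, true_and] at he hc
      rcases he with he | he
      · exact he.2.2 hc.2
      · have := he.1.ne
        rw [he.2, hc.2] at this
        exact this rfl
    · rw [Finset.disjoint_left]
      rintro e he hc
      simp only [Finset.mem_filter] at he hc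
      exact he.2.1 hc.2
  have h2 : ((de G).filter fun e => e.1 = v).card = G.degree v := by
    rw [← SimpleGraph.card_neighborFinset_eq_degree]
    symm
    apply Finset.card_bij (fun w _ => (v, w))
    · intro w hw; simpa [de] using hw
    · intro a _ b _ h; simpa using h
    · rintro ⟨a, b⟩ h
      simp only [Finset.mem_filter, de, Finset.mem_univ, true_and] at h
      exact ⟨b, by simpa [← h.2] using h.1, by rw [← h.2]⟩
  have h3 : ((de G).filter fun e => e.2 = v).card = G.degree v := by
    rw [← SimpleGraph.card_neighborFinset_eq_degree]
    symm
    apply Finset.card_bij (fun w _ => (w, v))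
    · intro w hw; simpa [de, G.adj_comm] using hw
    · intro a _ b _ h; simpa using h
    · rintro ⟨a, b⟩ h
      simp only [Finset.mem_filter, de, Finset.mem_univ, true_and] at h
      exact ⟨a, by simpa [← h.2] using h.1.symm, by rw [← h.2]⟩
  have h4 : (de (G.comap (Subtype.val : {u : V // u ≠ v} → V))).card
      = ((de G).filter fun e => e.1 ≠ v ∧ e.2 ≠ v).card := by
    apply Finset.card_bij (fun e _ => (e.1.1, e.2.1))
    · intro e he
      simp only [Finset.mem_filter, de, Finset.mem_univ, true_and] at he ⊢
      exact ⟨he, e.1.2, e.2.2⟩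
    · intro a _ b _ h
      simp only [Prod.mk.injEq] at h
      exact Prod.ext (Subtype.ext h.1) (Subtype.ext h.2)
    · rintro ⟨a, b⟩ h
      simp only [Finset.mem_filter, de, Finset.mem_univ, true_and] at h
      exact ⟨(⟨a, h.2.1⟩, ⟨b, h.2.2⟩), by simpa [de] using h.1, rfl⟩
  omega

lemma tri_edges {V : Type*} [Fintype V] [DecidableEq V] (G : SimpleGraph V) [DecidableRel G.Adj]
    (F : Finset (Finset V)) (hT : IsSphereTriangulation G F) :
    G.edgeFinset.card + 6 = 3 * Fintype.card V := by
  classical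
  obtain ⟨h3, hadj, h2, -, -, heu⟩ := hT
  have hdc := Finset.sum_card_bipartiteAbove_eq_sum_card_bipartiteBelow (s := de G) (t := F)
    (fun e f => e.1 ∈ f ∧ e.2 ∈ f)
  have l : ∑ a ∈ de G, (Finset.bipartiteAbove (fun (e : V × V) (f : Finset V) => e.1 ∈ f ∧ e.2 ∈ f) F a).card
      = ∑ a ∈ de G, 2 := by
    apply Finset.sum_congr rfl
    intro e he
    simp only [de, Finset.mem_filter, Finset.mem_univ, true_and] at he
    rw [← h2 e.1 e.2 he]
    congr 1
  have r : ∑ b ∈ F, (Finset.bipartiteBelow (fun (e : V × V) (f : Finset V) => e.1 ∈ f ∧ e.2 ∈ f) (de G) b).card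
      = ∑ b ∈ F, 6 := by
    apply Finset.sum_congr rfl
    intro f hf
    have : Finset.bipartiteBelow (fun (e : V × V) (f : Finset V) => e.1 ∈ f ∧ e.2 ∈ f) (de G) f
        = f.offDiag := by
      ext e
      simp only [Finset.bipartiteBelow, de, Finset.mem_filter, Finset.mem_univ, true_and,
        Finset.mem_offDiag]
      constructor
      · rintro ⟨h, h1, h2⟩; exact ⟨h1, h2, h.ne⟩
      · rintro ⟨h1, h2, h⟩; exact ⟨hadj f hf _ h1 _ h2 h, h1, h2⟩
    rw [this, Finset.offDiag_card, h3 f hf]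
  rw [l, r, Finset.sum_const, Finset.sum_const, de_card, smul_eq_mul, smul_eq_mul] at hdc
  omega

lemma tri_nbr {V : Type*} [Fintype V] [DecidableEq V] (G : SimpleGraph V) [DecidableRel G.Adj]
    (F : Finset (Finset V)) (hT : IsSphereTriangulation G F) (v : V) :
    ∃ p q q', G.Adj v p ∧ G.Adj v q ∧ G.Adj v q' ∧ G.Adj p q ∧ p ≠ q' ∧ q ≠ q' := by
  obtain ⟨h3, hadj, h2, hv, -, -⟩ := hT
  have third : ∀ f ∈ F, ∀ a ∈ f, ∀ b ∈ f, a ≠ b → ∃ c, c ≠ a ∧ c ≠ b ∧ f = {a, b, c} := by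
    intro f hf a ha b hb hab
    have hc := h3 f hf
    have : ((f.erase a).erase b).card = 1 := by
      rw [Finset.card_erase_of_mem (by simp [hb, hab.symm]), Finset.card_erase_of_mem ha, hc]
    obtain ⟨c, hc⟩ := Finset.card_eq_one.1 this
    have hcm : c ∈ (f.erase a).erase b := by rw [hc]; simp
    simp only [Finset.mem_erase] at hcm
    refine ⟨c, hcm.2.1, hcm.1, ?_⟩
    ext x
    have hx : x ∈ (f.erase a).erase b ↔ x ∈ ({c} : Finset V) := by rw [hc]
    simp only [Finset.mem_erase, Finset.mem_singleton] at hx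
    simp only [Finset.mem_insert, Finset.mem_singleton]
    by_cases hxa : x = a
    · simp [hxa, ha]
    · by_cases hxb : x = b
      · simp [hxb, hb]
      · simp [hxa, hxb] at hx ⊢; exact hx
  obtain ⟨f, hf, hvf⟩ := hv v
  obtain ⟨p, hpf, hpv⟩ : ∃ p ∈ f, p ≠ v := by
    apply Finset.exists_mem_ne
    rw [h3 f hf]; norm_num
  obtain ⟨q, hqv, hqp, hfe⟩ := third f hf v hvf p hpf hpv.symm
  have hvp := hadj f hf v hvf p hpf hpv.symm
  obtain ⟨g, hg, hgf⟩ : ∃ g ∈ F.filter (fun f => v ∈ f ∧ p ∈ f), g ≠ f := by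
    apply Finset.exists_mem_ne
    rw [h2 v p hvp]; norm_num
  rw [Finset.mem_filter] at hg
  obtain ⟨q', hqv', hqp', hge⟩ := third g hg.1 v hg.2.1 p hg.2.2 hpv.symm
  have hqf : q ∈ f := by rw [hfe]; simp
  have hqg : q' ∈ g := by rw [hge]; simp
  refine ⟨p, q, q', hvp, hadj f hf v hvf q hqf hqv.symm, hadj g hg.1 v hg.2.1 q' hqg hqv'.symm,
    hadj f hf p hpf q hqf hqp.symm, hqp'.symm, ?_⟩
  rintro rfl
  exact hgf (hge.trans hfe.symm)

lemma tri_deg {V : Type*} [Fintype V] [DecidableEq V] (G : SimpleGraph V) [DecidableRel G.Adj]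
    (F : Finset (Finset V)) (hT : IsSphereTriangulation G F) (v : V) : 3 ≤ G.degree v := by
  obtain ⟨p, q, q', h1, h2, h3, h4, h5, h6⟩ := tri_nbr G F hT v
  rw [← SimpleGraph.card_neighborFinset_eq_degree]
  rw [show 3 = ({p, q, q'} : Finset V).card by
    rw [Finset.card_insert_of_notMem, Finset.card_pair h6]; simp [h4.ne, h5]]
  apply Finset.card_le_card
  intro x hx
  simp only [Finset.mem_insert, Finset.mem_singleton] at hx
  rcases hx with rfl | rfl | rfl <;> simpa

end Tri
end KAT

namespace KAT
section Link
variable {V : Type*} [Fintype V] [DecidableEq V]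

lemma psd_disj {X Y : Frm} (h : ∀ z w, 0 ≤ X.Q z w + Y.Q z w) : Disj X Y := by
  rintro z w ⟨h1, h2⟩
  have := h z w
  linarith

/-- A real matrix of determinant one fixes the lower half plane. -/
lemma lhp_pull (a b c d : ℝ) (h : a * d - b * c = 1) : pull a b c d lhp = lhp := by
  apply Frm.ext
  · rw [pull_A, lhp_Q]; simp [lhp]
  · apply Complex.ext
    · rw [pull_B_re]; simp [lhp]
    · rw [pull_B_im]; simp [lhp]; linarith
  · rw [pull_C, lhp_Q]; simp [lhp]

lemma nsq_one (a b c d : ℝ) (h : a * d - b * c = 1) :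
    Complex.normSq ((a : ℂ) * d - b * c) = 1 := by
  have : ((a : ℂ) * d - b * c) = ((a * d - b * c : ℝ) : ℂ) := by push_cast; ring
  rw [this, h]; simp

/-- The normalised picture: `v` is the lower half plane and all other disks are bounded. -/
lemma Pk.step1 {G : SimpleGraph V} {X : V → Frm} (h : Pk G X) (x y v : V) (hxy : x ≠ y)
    (hx : v ≠ x) (hy : v ≠ y) : ∃ Y : V → Frm, Pk G Y ∧
      (∀ u w, ip (Y u) (Y w) = ip (X u) (X w)) ∧ Y v = lhp ∧ ∀ u, u ≠ v → 0 < (Y u).A := by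
  obtain ⟨a, b, c, d, hdet, hp⟩ := exists_norm (X v) (h.self v)
  set X1 : V → Frm := fun u => KAT.pull a b c d (X u) with hX1
  have h1 : Pk G X1 := h.pull a b c d hdet
  have hip1 : ∀ u w, ip (X1 u) (X1 w) = ip (X u) (X w) := by
    intro u w; simp only [hX1]; rw [ip_pull, hdet, one_mul]
  have hv1 : X1 v = lhp := hp
  have shape : ∀ u, u ≠ v → _ := fun u hu => lhp_disj_shape (X1 u) (h1.self u)
    (by rw [← hv1]; exact psd_disj (h1.psd u v hu))
  have him : ∀ u, u ≠ v → (X1 u).B.im ≤ -1 := by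
    intro u hu
    have := h1.le u v hu
    rwa [hv1, ip_lhp] at this
  obtain ⟨s, hs⟩ := Infinite.exists_notMem_finset
    (Finset.univ.image fun u => -(X1 u).B.re / (X1 u).A)
  have hpos : ∀ u, u ≠ v → 0 < (X1 u).Q s 1 := by
    intro u hu
    have hs' : s ≠ -(X1 u).B.re / (X1 u).A := by
      intro hc; apply hs; rw [hc]
      exact Finset.mem_image_of_mem (fun u => -(X1 u).B.re / (X1 u).A) (Finset.mem_univ u)
    have hself := h1.self u
    rw [ip_real] at hself
    have eQ : (X1 u).Q s 1 = (X1 u).A * s ^ 2 + 2 * ((X1 u).B.re * s) + (X1 u).C := by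
      rw [Q_real]; simp
    rw [eQ]
    rcases shape u hu with ⟨hA, hB⟩ | ⟨hA, hre, hB, hC⟩
    · have e : (X1 u).A * ((X1 u).A * s ^ 2 + 2 * ((X1 u).B.re * s) + (X1 u).C)
          = ((X1 u).A * s + (X1 u).B.re) ^ 2 + ((X1 u).B.im ^ 2 - 1) := by
        linear_combination (-1) * hself
      have hne : (X1 u).A * s + (X1 u).B.re ≠ 0 := by
        intro hc; apply hs'
        rw [eq_div_iff hA.ne']; linarith
      have : 0 < (X1 u).A * ((X1 u).A * s ^ 2 + 2 * ((X1 u).B.re * s) + (X1 u).C) := by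
        rw [e]
        have := pow_pos (abs_pos.2 hne) 2
        rw [sq_abs] at this
        nlinarith
      exact pos_of_mul_pos_right this hA.le
    · rw [hA, hre]
      have hC0 : (X1 u).C ≠ 0 := by
        intro hc
        obtain ⟨w, hwu, hwv⟩ : ∃ w, w ≠ u ∧ w ≠ v := by
          by_cases hux : x = u
          · exact ⟨y, by rw [← hux]; exact hxy.symm, hy.symm⟩
          · exact ⟨x, hux, hx.symm⟩
        have l1 := him w hwv
        have l2 := h1.le w u hwu
        rw [ip_real, hA, hre, hB, hc] at l2
        linarith
      have : 0 < (X1 u).C := lt_of_le_of_ne hC (Ne.symm hC0)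
      linarith
  have hd2 : s * 0 - (-1) * 1 = (1 : ℝ) := by ring
  have hn2 := nsq_one s (-1) 1 0 hd2
  refine ⟨fun u => KAT.pull (s : ℝ) (-1 : ℝ) (1 : ℝ) (0 : ℝ) (X1 u), h1.pull _ _ _ _ hn2, ?_, ?_, ?_⟩
  · intro u w
    rw [ip_pull, hn2, one_mul, hip1]
  · show KAT.pull _ _ _ _ (X1 v) = lhp
    rw [hv1]; exact lhp_pull _ _ _ _ hd2
  · intro u hu
    show 0 < (KAT.pull _ _ _ _ (X1 u)).A
    rw [pull_A]
    have := hpos u hu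
    simpa using this

lemma Pk.step2 {G : SimpleGraph V} {X : V → Frm} (h : Pk G X) (x y v : V) (hxy : G.Adj x y)
    (hx : v ≠ x) (hy : v ≠ y) : ∃ Y : V → Frm, Pk G Y ∧
      (∀ u w, ip (Y u) (Y w) = ip (X u) (X w)) ∧ Y v = lhp ∧ (∀ u, u ≠ v → 0 < (Y u).A) ∧
      ∃ K, 0 < K ∧ (Y x).A + (Y y).A = K ∧ (Y x).C + (Y y).C = K ∧
        (Y x).B.re + (Y y).B.re = 0 ∧ (Y x).B.im + (Y y).B.im = -K := by
  obtain ⟨X1, h1, hip1, hv1, hA1⟩ := h.step1 x y v hxy.ne hx hy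
  have bx : (X1 x).B.im ≤ -1 := by
    have := h1.le x v hx.symm
    rwa [hv1, ip_lhp] at this
  have by' : (X1 y).B.im ≤ -1 := by
    have := h1.le y v hy.symm
    rwa [hv1, ip_lhp] at this
  have sx := h1.self x
  have sy := h1.self y
  have sxy := (h1.adj x y hxy.ne).2 hxy
  rw [ip_real] at sx sy sxy
  have ax := hA1 x hx.symm
  have ay := hA1 y hy.symm
  set Ap := (X1 x).A + (X1 y).A with hAp
  set Cp := (X1 x).C + (X1 y).C with hCp
  set R := (X1 x).B.re + (X1 y).B.re with hR
  set S := (X1 x).B.im + (X1 y).B.im with hS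
  have hnull : R ^ 2 + S ^ 2 = Ap * Cp := by
    rw [hR, hS, hAp, hCp]; linarith
  have Appos : 0 < Ap := by positivity
  set α := -S / Ap with hα
  set β := -R / Ap with hβ
  have αpos : 0 < α := div_pos (by linarith) Appos
  set q := √α with hq
  have qpos : 0 < q := Real.sqrt_pos.2 αpos
  have qsq : q ^ 2 = α := Real.sq_sqrt αpos.le
  have hd2 : q * (1 / q) - (β / q) * 0 = (1 : ℝ) := by field_simp; ring
  have hn2 := nsq_one q (β / q) 0 (1 / q) hd2
  have eA : ∀ Z : Frm, (KAT.pull (q : ℝ) (β / q : ℝ) (0 : ℝ) (1 / q : ℝ) Z).A = α * Z.A := by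
    intro Z
    rw [pull_A, Q_real, Complex.ofReal_re, Complex.ofReal_im, Complex.ofReal_re, Complex.ofReal_im]
    linear_combination Z.A * qsq
  have eBr : ∀ Z : Frm, (KAT.pull (q : ℝ) (β / q : ℝ) (0 : ℝ) (1 / q : ℝ) Z).B.re
      = Z.A * β + Z.B.re := by
    intro Z
    rw [pull_B_re]
    simp only [Complex.ofReal_re, Complex.ofReal_im]
    field_simp
    ring
  have eBi : ∀ Z : Frm, (KAT.pull (q : ℝ) (β / q : ℝ) (0 : ℝ) (1 / q : ℝ) Z).B.im
      = Z.B.im := by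
    intro Z
    rw [pull_B_im]
    simp only [Complex.ofReal_re, Complex.ofReal_im]
    field_simp
    ring
  have eC : ∀ Z : Frm, (KAT.pull (q : ℝ) (β / q : ℝ) (0 : ℝ) (1 / q : ℝ) Z).C
      = (Z.A * β ^ 2 + 2 * (Z.B.re * β) + Z.C) / α := by
    intro Z
    rw [pull_C, Q_real]
    simp only [Complex.ofReal_re, Complex.ofReal_im]
    rw [← qsq]
    field_simp
    ring
  refine ⟨fun u => KAT.pull (q : ℝ) (β / q : ℝ) (0 : ℝ) (1 / q : ℝ) (X1 u),
    h1.pull _ _ _ _ hn2, ?_, ?_, ?_, -S, by linarith, ?_, ?_, ?_, ?_⟩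
  · intro u w
    rw [ip_pull, hn2, one_mul, hip1]
  · show KAT.pull _ _ _ _ (X1 v) = lhp
    rw [hv1]; exact lhp_pull _ _ _ _ hd2
  · intro u hu
    rw [eA]
    exact mul_pos αpos (hA1 u hu)
  · rw [eA, eA, ← mul_add, ← hAp, hα]; field_simp
  · rw [eC, eC, ← add_div]
    rw [div_eq_iff αpos.ne']
    have : (X1 x).A * β ^ 2 + 2 * ((X1 x).B.re * β) + (X1 x).C +
        ((X1 y).A * β ^ 2 + 2 * ((X1 y).B.re * β) + (X1 y).C)
        = Ap * β ^ 2 + 2 * (R * β) + Cp := by rw [hAp, hCp, hR]; ring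
    rw [this, hα, hβ]
    field_simp
    linear_combination (-1) * hnull
  · rw [eBr, eBr]
    have : (X1 x).A * β + (X1 x).B.re + ((X1 y).A * β + (X1 y).B.re) = Ap * β + R := by
      rw [hAp, hR]; ring
    rw [this, hβ]; field_simp; ring
  · rw [eBi, eBi, neg_neg, ← hS]

lemma Pk.flower {G : SimpleGraph V} [DecidableRel G.Adj] {X : V → Frm} (h : Pk G X)
    (hE : G.edgeFinset.card + 6 = 3 * Fintype.card V) (hdeg : ∀ v, 3 ≤ G.degree v)
    (x y v : V) (hxy : G.Adj x y)
    (hx : v ≠ x) (hy : v ≠ y) :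
    ∃ m, ∃ b : Fin (m + 1) → V, Flo G (fun u w => ip (X u) (X w)) x y v m b := by
  obtain ⟨Y, hY, hip, hv, hA, K, hK, kA, kC, kR, kI⟩ := h.step2 x y v hxy hx hy
  have hfun : (fun u w => ip (X u) (X w)) = fun u w => ip (Y u) (Y w) := by
    funext u w; rw [hip]
  rw [hfun]
  set t : V → ℝ := fun u => -(Y u).B.re / (Y u).A with ht
  set s : V → ℝ := fun u => -(Y u).B.im / (Y u).A with hs
  set r : V → ℝ := fun u => 1 / (Y u).A with hr
  have hre : ∀ u, u ≠ v → (Y u).B.re = - t u * (Y u).A := by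
    intro u hu; simp only [ht]; field_simp [(hA u hu).ne']
  have him : ∀ u, u ≠ v → (Y u).B.im = - s u * (Y u).A := by
    intro u hu; simp only [hs]; field_simp [(hA u hu).ne']
  have hrA : ∀ u, u ≠ v → r u * (Y u).A = 1 := by
    intro u hu; simp only [hr]; field_simp [(hA u hu).ne']
  have hrp : ∀ u, u ≠ v → 0 < r u := by
    intro u hu; simp only [hr]; have := hA u hu; positivity
  have hC : ∀ u, u ≠ v → (Y u).C = (Y u).A * (t u ^ 2 + s u ^ 2 - r u ^ 2) := by
    intro u hu
    have := hY.self u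
    rw [ip_real, hre u hu, him u hu] at this
    have e := hrA u hu
    have hA' := (hA u hu).ne'
    apply mul_left_cancel₀ hA'
    linear_combination (-1) * this + (1 + r u * (Y u).A) * e
  have hipA : ∀ u w, u ≠ v → w ≠ v → ip (Y u) (Y w) =
      -((Y u).A * (Y w).A / 2) * ((t u - t w) ^ 2 + (s u - s w) ^ 2 - r u ^ 2 - r w ^ 2) := by
    intro u w hu hw
    rw [ip_real, hre u hu, him u hu, hre w hw, him w hw, hC u hu, hC w hw]
    ring
  have hip1 : ∀ u w, u ≠ v → w ≠ v → ip (Y u) (Y w) + 1 =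
      -((Y u).A * (Y w).A / 2) * ((t u - t w) ^ 2 + (s u - s w) ^ 2 - (r u + r w) ^ 2) := by
    intro u w hu hw
    rw [hipA u w hu hw]
    linear_combination (-1) * (r u * (Y u).A) * hrA w hw - hrA u hu
  have hkap : ∀ u, u ≠ v → kap (fun u w => ip (Y u) (Y w)) x y u =
      K * (Y u).A / 2 * (t u ^ 2 + (s u - 1) ^ 2 - r u ^ 2) := by
    intro u hu
    unfold kap
    simp only
    rw [ip_real, ip_real, hC u hu]
    linear_combination (-(Y u).B.re) * kR - (Y u).B.im * kI + (Y u).A / 2 * kC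
      + (Y u).A * (t u ^ 2 + s u ^ 2 - r u ^ 2) / 2 * kA + K * him u hu
  have hkapv : kap (fun u w => ip (Y u) (Y w)) x y v = K := by
    unfold kap
    simp only
    rw [hv, ip_real, ip_real]
    simp [lhp]
    linarith
  have hbot : ∀ u, u ≠ v → (s u = r u ↔ G.Adj v u) := by
    intro u hu
    rw [G.adj_comm, ← hY.adj u v hu, hv, ip_lhp, him u hu]
    have e := hrA u hu
    have hA' := hA u hu
    constructor
    · intro h; rw [h]; linarith
    · intro h
      have : (s u - r u) * (Y u).A = 0 := by linarith
      rcases mul_eq_zero.1 this with h | h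
      · linarith
      · exact absurd h hA'.ne'
  let U := {u : V // u ≠ v}
  let H : SimpleGraph U := G.comap (Subtype.val : U → V)
  have hp : HP H (fun u => t u.1) (fun u => s u.1) (fun u => r u.1) := by
    refine ⟨fun u => hrp u.1 u.2, ?_, ?_, ?_⟩
    · rintro ⟨u, hu⟩
      have := hY.le u v hu
      rw [hv, ip_lhp, him u hu] at this
      have e := hrA u hu
      have hA' := hA u hu
      show r u ≤ s u
      by_contra hc
      push Not at hc
      nlinarith
    · rintro ⟨u, hu⟩ ⟨w, hw⟩ huw
      have huw' : u ≠ w := fun h => huw (Subtype.ext h)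
      have l := hY.le u w huw'
      have e := hip1 u w hu hw
      have hpos := mul_pos (hA u hu) (hA w hw)
      show (r u + r w) ^ 2 ≤ (t u - t w) ^ 2 + (s u - s w) ^ 2
      by_contra hc
      push Not at hc
      nlinarith
    · rintro ⟨u, hu⟩ ⟨w, hw⟩ huw
      have huw' : u ≠ w := fun h => huw (Subtype.ext h)
      have l := hY.adj u w huw'
      have e := hip1 u w hu hw
      have hpos := mul_pos (hA u hu) (hA w hw)
      show G.Adj u w ↔ (t u - t w) ^ 2 + (s u - s w) ^ 2 = (r u + r w) ^ 2
      rw [← l]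
      constructor
      · intro h
        rw [h] at e
        have : ((t u - t w) ^ 2 + (s u - s w) ^ 2 - (r u + r w) ^ 2) = 0 := by
          have e' : -((Y u).A * (Y w).A / 2) *
            ((t u - t w) ^ 2 + (s u - s w) ^ 2 - (r u + r w) ^ 2) = 0 := by linarith
          rcases mul_eq_zero.1 e' with h | h
          · linarith
          · exact h
        linarith
      · intro h
        rw [h] at e
        linarith
  have hbc : (bot (fun u : U => s u.1) (fun u => r u.1)).card = G.degree v := by
    rw [← SimpleGraph.card_neighborFinset_eq_degree]
    apply Finset.card_bij (fun u _ => u.1)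
    · intro u hu
      rw [mem_bot] at hu
      simpa using (hbot u.1 u.2).1 hu
    · intro a _ b _ h; exact Subtype.ext h
    · intro u hu
      have hu' : G.Adj v u := by simpa using hu
      exact ⟨⟨u, hu'.ne'⟩, mem_bot.2 ((hbot u hu'.ne').2 hu'), rfl⟩
  have hUc : Fintype.card U + 1 = Fintype.card V := by
    have h1 : Fintype.card U = Fintype.card V - 1 := by
      simp only [U]
      rw [Fintype.card_subtype_compl]
      simp
    have : 0 < Fintype.card V := Fintype.card_pos_iff.2 ⟨v⟩
    omega
  have hcard : (de H).card + 2 * (bot (fun u : U => s u.1) (fun u => r u.1)).card + 6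
      = 6 * Fintype.card U := by
    have h1 : (de H).card + 2 * G.degree v = (de G).card := de_card_del G v
    have h2 := de_card G
    rw [hbc]
    omega
  have hx' := hkap x hx.symm
  have hy' := hkap y hy.symm
  have kx : kap (fun u w => ip (Y u) (Y w)) x y x = 0 := by
    unfold kap; simp only; rw [hY.self, (hY.adj x y hxy.ne).2 hxy]; norm_num
  have ky : kap (fun u w => ip (Y u) (Y w)) x y y = 0 := by
    unfold kap; simp only; rw [hY.self, (hY.adj y x hxy.ne').2 hxy.symm]; norm_num
  have spec : ∀ u, u ≠ v → kap (fun u w => ip (Y u) (Y w)) x y u = 0 →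
      t u ^ 2 + (s u - 1) ^ 2 = r u ^ 2 := by
    intro u hu h0
    rw [hkap u hu] at h0
    have := hA u hu
    have hpos : 0 < K * (Y u).A / 2 := by positivity
    rcases mul_eq_zero.1 h0 with h | h
    · exact absurd h hpos.ne'
    · linarith
  obtain ⟨m, hm, b, binj, bnbr, bcyc, bnc, bsum⟩ := hp.flower hcard
    (by rw [hbc]; exact hdeg v)
    (by
      rintro ⟨u, hu⟩
      show r u ^ 2 ≤ t u ^ 2 + (s u - 1) ^ 2
      by_cases hux : u = x
      · rw [hux]; exact (spec x hx.symm kx).ge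
      by_cases huy : u = y
      · rw [huy]; exact (spec y hy.symm ky).ge
      have k1 := hY.le u x hux
      have k2 := hY.le u y huy
      have k3 := hkap u hu
      unfold kap at k3
      simp only at k3
      have := hA u hu
      have hpos : 0 < K * (Y u).A / 2 := by positivity
      by_contra hc
      push Not at hc
      nlinarith)
    ⟨⟨x, hx.symm⟩, ⟨y, hy.symm⟩, fun hc => hxy.ne (congrArg Subtype.val hc),
      spec x hx.symm kx, spec y hy.symm ky⟩
  have hwt : ∀ u, u ≠ v → s u = r u → wt (fun u w => ip (Y u) (Y w)) x y v u
      = 2 * r u / (1 + t u ^ 2) := by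
    intro u hu hsr
    unfold wt
    rw [hkapv, hkap u hu, hsr]
    have e := hrA u hu
    have e2 : K + K * (Y u).A / 2 * (t u ^ 2 + (r u - 1) ^ 2 - r u ^ 2)
        = K * (Y u).A / 2 * (1 + t u ^ 2) := by
      linear_combination (-K) * e
    rw [e2]
    have := hA u hu
    rw [div_eq_div_iff (by positivity) (by positivity)]
    linear_combination (-K * (1 + t u ^ 2)) * e
  refine ⟨m, fun i => (b i).1, hm, ?_, ?_, ?_, ?_, ?_⟩
  · intro i j hij; exact binj (Subtype.ext hij)
  · intro u
    constructor
    · intro hu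
      obtain ⟨i, hi⟩ := (bnbr ⟨u, hu.ne'⟩).1 ((hbot u hu.ne').2 hu)
      exact ⟨i, by rw [hi]⟩
    · rintro ⟨i, rfl⟩
      exact (hbot _ (b i).2).1 ((bnbr (b i)).2 ⟨i, rfl⟩)
  · intro i; exact bcyc i
  · intro i j k l h1 h2 h3; exact bnc i j k l h1 h2 h3
  · rw [← bsum]
    apply Finset.sum_congr rfl
    intro i _
    rw [hwt _ (b i).2 ((bnbr (b i)).2 ⟨i, rfl⟩), hwt _ (b (i + 1)).2 ((bnbr (b (i + 1))).2 ⟨_, rfl⟩)]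

lemma ip_comm (X Y : Frm) : ip X Y = ip Y X := by
  rw [ip_real, ip_real]; ring

lemma Pk.gp {G : SimpleGraph V} [DecidableRel G.Adj] {F : Finset (Finset V)}
    (hT : IsSphereTriangulation G F) {X : V → Frm} (h : Pk G X) :
    GP G (fun u w => ip (X u) (X w)) where
  symm u v := ip_comm _ _
  self := h.self
  le := h.le
  adj := h.adj
  flower x y hxy v hx hy := h.flower (tri_edges G F hT) (tri_deg G F hT) x y v hxy hx hy

lemma gram_eq {G : SimpleGraph V} [DecidableRel G.Adj] {F : Finset (Finset V)}
    (hT : IsSphereTriangulation G F) {X X' : V → Frm} (h : Pk G X) (h' : Pk G X') (u v : V) :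
    ip (X u) (X v) = ip (X' u) (X' v) := by
  have := (h.gp hT).unique (h'.gp hT) hT.2.2.2.2.1 (fun v => by
    obtain ⟨p, q, q', h1, h2, h3, h4, h5, h6⟩ := tri_nbr G F hT v
    exact ⟨p, q, h1, h2, h4⟩)
  exact congrFun (congrFun this u) v

end Link
end KAT

namespace KAT
section Final
open ComplexConjugate
variable {V : Type*} [Fintype V] [DecidableEq V]

lemma pull_pull (a b c d a' b' c' d' : ℂ) (X : Frm) :
    pull a' b' c' d' (pull a b c d X) =
      pull (a * a' + b * c') (a * b' + b * d') (c * a' + d * c') (c * b' + d * d') X := by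
  apply Frm.ext
  · rw [pull_A, pull_A, pull_Q]
  · apply Complex.ext
    · rw [pull_B_re, pull_B_re, pull_B_re, pull_B_im, pull_A, pull_C, Q_real, Q_real]
      simp only [Complex.add_re, Complex.add_im, Complex.mul_re, Complex.mul_im]
      ring
    · rw [pull_B_im, pull_B_im, pull_B_re, pull_B_im, pull_A, pull_C, Q_real, Q_real]
      simp only [Complex.add_re, Complex.add_im, Complex.mul_re, Complex.mul_im]
      ring
  · rw [pull_C, pull_C, pull_Q]

/-- Equivalence of families under a unimodular matrix. -/
def Eqv (X Y : V → Frm) : Prop := ∃ a b c d : ℂ, Complex.normSq (a * d - b * c) = 1 ∧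
  ∀ u, Y u = pull a b c d (X u)

lemma Eqv.trans {X Y Z : V → Frm} (h : Eqv X Y) (h' : Eqv Y Z) : Eqv X Z := by
  obtain ⟨a, b, c, d, h1, h2⟩ := h
  obtain ⟨a', b', c', d', h1', h2'⟩ := h'
  refine ⟨_, _, _, _, ?_, fun u => by rw [h2', h2, pull_pull]⟩
  have : (a * a' + b * c') * (c * b' + d * d') - (a * b' + b * d') * (c * a' + d * c')
        = (a * d - b * c) * (a' * d' - b' * c') := by ring
  rw [this, map_mul, h1, h1', one_mul]

lemma Eqv.pk {G : SimpleGraph V} {X Y : V → Frm} (h : Eqv X Y) (hX : Pk G X) : Pk G Y := by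
  obtain ⟨a, b, c, d, h1, h2⟩ := h
  have : Y = fun u => pull a b c d (X u) := funext h2
  rw [this]
  exact hX.pull a b c d h1

lemma eqv_real (X : V → Frm) (a b c d : ℝ) (h : a * d - b * c = 1) :
    Eqv X (fun u => pull a b c d (X u)) := ⟨a, b, c, d, nsq_one a b c d h, fun _ => rfl⟩

lemma Pk.norm2 {G : SimpleGraph V} {X : V → Frm} (h : Pk G X) (x y w : V) (hxy : G.Adj x y)
    (hwx : w ≠ x) (hwy : w ≠ y) : ∃ Y, Eqv X Y ∧ Y x = lhp ∧ Y y = ⟨0, -Complex.I, 2⟩ := by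
  obtain ⟨a, b, c, d, hdet, hp⟩ := exists_norm (X x) (h.self x)
  obtain ⟨X1, e1, hx1⟩ : ∃ X1, Eqv X X1 ∧ X1 x = lhp :=
    ⟨fun u => KAT.pull a b c d (X u), ⟨a, b, c, d, hdet, fun _ => rfl⟩, hp⟩
  have h1 := e1.pk h
  have shape : ∀ Z : V → Frm, Pk G Z → Z x = lhp → _ := fun Z hZ hZx =>
    lhp_disj_shape (Z y) (hZ.self y) (by rw [← hZx]; exact psd_disj (hZ.psd y x hxy.ne'))
  obtain ⟨X2, e2, hx2, hy2⟩ : ∃ X2, Eqv X X2 ∧ X2 x = lhp ∧ (X2 y).A = 0 := by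
    rcases shape X1 h1 hx1 with ⟨hA, -⟩ | ⟨hA, -⟩
    · set s := -(X1 y).B.re / (X1 y).A with hs
      have hd : s * 0 - (-1) * 1 = (1 : ℝ) := by ring
      refine ⟨_, e1.trans (eqv_real X1 s (-1) 1 0 hd), ?_, ?_⟩
      · rw [hx1]; exact lhp_pull _ _ _ _ hd
      · rw [pull_A, Q_real]
        simp only [Complex.ofReal_re, Complex.ofReal_im]
        have hb := (h1.adj y x hxy.ne').2 hxy.symm
        rw [hx1, ip_lhp] at hb
        have hself := h1.self y
        rw [ip_real, hb] at hself
        rw [hs]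
        field_simp
        linear_combination (-1) * hself
    · exact ⟨X1, e1, hx1, hA⟩
  have h2 := e2.pk h
  have sh : (X2 y).B.re = 0 ∧ (X2 y).B.im = -1 ∧ 0 ≤ (X2 y).C := by
    rcases shape X2 h2 hx2 with ⟨hA, -⟩ | ⟨-, h⟩
    · rw [hy2] at hA; exact absurd hA (lt_irrefl _)
    · exact h
  obtain ⟨hre, him, hC⟩ := sh
  have hC0 : (X2 y).C ≠ 0 := by
    intro hc
    have l1 := h2.le w x hwx
    have l2 := h2.le w y hwy
    rw [hx2, ip_lhp] at l1
    rw [ip_real, hy2, hre, him, hc] at l2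
    linarith
  have hCp : 0 < (X2 y).C := lt_of_le_of_ne hC (Ne.symm hC0)
  set q := √((X2 y).C / 2) with hq
  have qpos : 0 < q := Real.sqrt_pos.2 (by linarith)
  have qsq : q ^ 2 = (X2 y).C / 2 := Real.sq_sqrt (by linarith)
  have hd : q * (1 / q) - 0 * 0 = (1 : ℝ) := by field_simp; ring
  refine ⟨_, e2.trans (eqv_real X2 q 0 0 (1 / q) hd), ?_, ?_⟩
  · rw [hx2]; exact lhp_pull _ _ _ _ hd
  · apply Frm.ext
    · rw [pull_A, Q_real]; simp [hy2]
    · apply Complex.ext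
      · rw [pull_B_re]
        simp only [Complex.ofReal_re, Complex.ofReal_im]
        simp [hre]
      · rw [pull_B_im]
        simp only [Complex.ofReal_re, Complex.ofReal_im]
        simp [him]
        field_simp
    · rw [pull_C, Q_real]
      simp only [Complex.ofReal_re, Complex.ofReal_im]
      have : (X2 y).C = 2 * q ^ 2 := by linarith
      rw [this]
      field_simp
      ring

/-- Isometries of subsets of the line. -/
lemma line_iso {S : Type*} (s0 : S) (t t' : S → ℝ)
    (h : ∀ u w, (t u - t w) ^ 2 = (t' u - t' w) ^ 2) :
    (∃ c, ∀ u, t' u = t u + c) ∨ (∃ c, ∀ u, t' u = - t u + c) := by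
  by_cases hall : ∀ u, t' u - t' s0 = t u - t s0
  · left; exact ⟨t' s0 - t s0, fun u => by linarith [hall u]⟩
  · right
    push Not at hall
    obtain ⟨w, hw⟩ := hall
    have hw' : t' w - t' s0 = -(t w - t s0) := by
      rcases sq_eq_sq_iff_eq_or_eq_neg.1 (h w s0) with h | h
      · exact absurd h.symm hw
      · linarith
    have hne : t w - t s0 ≠ 0 := by
      intro hc; rw [hc] at hw hw'; exact hw (by rw [hw']; simp)
    refine ⟨t' s0 + t s0, fun u => ?_⟩
    have : (t w - t s0) * ((t' u - t' s0) + (t u - t s0)) = 0 := by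
      have a1 := h u w
      have a2 := h u s0
      have a3 := h w s0
      have a4 : (t u - t s0) * (t w - t s0) = (t' u - t' s0) * (t' w - t' s0) := by
        linear_combination (1 / 2) * a2 + (1 / 2) * a3 - (1 / 2) * a1
      rw [hw'] at a4
      linarith
    rcases mul_eq_zero.1 this with h | h
    · exact absurd h hne
    · linarith

/-- reflected form -/
noncomputable def rf (X : Frm) : Frm := ⟨X.A, - conj X.B, X.C⟩

lemma ip_rf (X Y : Frm) : ip (rf X) (rf Y) = ip X Y := by
  rw [ip_real, ip_real]; simp [rf]

lemma frm_eq {X Y : Frm} (hX : ip X X = 1) (hY : ip Y Y = 1) (hA : X.A ≠ 0) (h1 : X.A = Y.A)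
    (h2 : X.B.re = Y.B.re) (h3 : X.B.im = Y.B.im) : X = Y := by
  apply Frm.ext h1 (Complex.ext h2 h3)
  rw [ip_real, h1, h2, h3] at hX
  rw [ip_real] at hY
  rw [h1] at hA
  apply mul_left_cancel₀ hA
  linarith

/-- two normalised families with equal Gram matrices -/
lemma norm_cmp {G : SimpleGraph V} {Y Y' : V → Frm} (h : Pk G Y) (h' : Pk G Y') (x y w : V)
    (hwx : w ≠ x) (hwy : w ≠ y)
    (hx : Y x = lhp) (hy : Y y = ⟨0, -Complex.I, 2⟩)
    (hx' : Y' x = lhp) (hy' : Y' y = ⟨0, -Complex.I, 2⟩)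
    (hg : ∀ u v, ip (Y u) (Y v) = ip (Y' u) (Y' v)) :
    (∃ c : ℝ, ∀ u, Y u = pull 1 c 0 1 (Y' u)) ∨ (∃ c : ℝ, ∀ u, Y u = pull 1 c 0 1 (rf (Y' u))) := by
  have ipy : ∀ Z : Frm, ip Z ⟨0, -Complex.I, 2⟩ = - Z.B.im - Z.A := by
    intro Z; rw [ip_real]; simp
  have him : ∀ u, (Y u).B.im = (Y' u).B.im := by
    intro u
    have := hg u x
    rwa [hx, hx', ip_lhp, ip_lhp] at this
  have hA : ∀ u, (Y u).A = (Y' u).A := by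
    intro u
    have := hg u y
    rw [hy, hy', ipy, ipy, him u] at this
    linarith
  have hpos : ∀ u, u ≠ x → u ≠ y → 0 < (Y u).A := by
    intro u hux huy
    have l1 := h.le u x hux
    have l2 := h.le u y huy
    rw [hx, ip_lhp] at l1
    rw [hy, ipy] at l2
    linarith
  let S := {u : V // u ≠ x ∧ u ≠ y}
  have key := line_iso (S := S) ⟨w, hwx, hwy⟩ (fun u => -(Y u.1).B.re / (Y u.1).A)
    (fun u => -(Y' u.1).B.re / (Y' u.1).A) (by
      rintro ⟨u, hu⟩ ⟨v, hv⟩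
      simp only
      have pu := hpos u hu.1 hu.2
      have pv := hpos v hv.1 hv.2
      have s1 := h.self u
      have s2 := h.self v
      have s1' := h'.self u
      have s2' := h'.self v
      have g := hg u v
      rw [ip_real, ip_real, ← hA, ← hA, ← him, ← him] at g
      rw [ip_real] at s1 s2 s1' s2'
      rw [← him, ← hA] at s1' s2'
      rw [← hA, ← hA]
      field_simp
      linear_combination (Y v).A ^ 2 * s1 - (Y v).A ^ 2 * s1' + (Y u).A ^ 2 * s2
        - (Y u).A ^ 2 * s2' - 2 * (Y u).A * (Y v).A * g)
  have cplx : ∀ u, u = x ∨ u = y ∨ (u ≠ x ∧ u ≠ y) := by intro u; tauto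
  have nd : ∀ c : ℝ, Complex.normSq ((1 : ℂ) * 1 - c * 0) = 1 := by intro c; simp
  have plx : ∀ c : ℝ, pull 1 c 0 1 lhp = lhp := by
    intro c
    have := lhp_pull 1 c 0 1 (by ring)
    simpa using this
  have ply : ∀ c : ℝ, pull 1 c 0 1 ⟨0, -Complex.I, 2⟩ = ⟨0, -Complex.I, 2⟩ := by
    intro c
    apply Frm.ext
    · rw [pull_A, Q_real]; simp
    · apply Complex.ext
      · rw [pull_B_re]; simp
      · rw [pull_B_im]; simp
    · rw [pull_C, Q_real]; simp
  have pA : ∀ (c : ℝ) (Z : Frm), (pull 1 c 0 1 Z).A = Z.A := by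
    intro c Z; rw [pull_A, Q_real]; simp
  have pR : ∀ (c : ℝ) (Z : Frm), (pull 1 c 0 1 Z).B.re = Z.A * c + Z.B.re := by
    intro c Z; rw [pull_B_re]; simp
  have pI : ∀ (c : ℝ) (Z : Frm), (pull 1 c 0 1 Z).B.im = Z.B.im := by
    intro c Z; rw [pull_B_im]; simp
  rcases key with ⟨c, hc⟩ | ⟨c, hc⟩
  · left
    refine ⟨c, fun u => ?_⟩
    rcases cplx u with rfl | rfl | hu
    · rw [hx, hx', plx]
    · rw [hy, hy', ply]
    · have pu := hpos u hu.1 hu.2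
      refine frm_eq (h.self u) ?_ pu.ne' ?_ ?_ ?_
      · rw [ip_pull, nd, one_mul, h'.self]
      · rw [pA, hA]
      · rw [pR]
        have := hc ⟨u, hu⟩
        simp only [← hA] at this ⊢
        field_simp at this
        linarith
      · rw [pI, him]
  · right
    refine ⟨-c, fun u => ?_⟩
    rcases cplx u with rfl | rfl | hu
    · rw [hx, hx', show rf lhp = lhp by simp [rf, lhp], plx]
    · rw [hy, hy', show rf ⟨0, -Complex.I, 2⟩ = ⟨0, -Complex.I, 2⟩ by simp [rf], ply]
    · have pu := hpos u hu.1 hu.2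
      refine frm_eq (h.self u) ?_ pu.ne' ?_ ?_ ?_
      · rw [ip_pull, nd, one_mul, ip_rf, h'.self]
      · rw [pA, hA]; rfl
      · rw [pR]
        have := hc ⟨u, hu⟩
        simp only [← hA] at this
        simp only [rf, ← hA, Complex.neg_re, Complex.conj_re]
        field_simp at this
        linarith
      · rw [pI, him]; simp [rf]

lemma rf_mem (X : Frm) (p : RS) : p ∈ diskOf (rf X) ↔ moeb (-1) 0 0 1 (conjRS p) ∈ diskOf X := by
  have hd : (-1 : ℂ) * 1 - 0 * 0 ≠ 0 := by norm_num
  rw [moeb_mem_diskOf _ _ _ _ hd]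
  induction p using OnePoint.rec with
  | infty =>
    rw [conjRS_infty, infty_mem_diskOf, infty_mem_diskOf, pull_A, Q_real]
    simp [rf]
  | coe z =>
    rw [conjRS_coe, coe_mem_diskOf, coe_mem_diskOf, pull_Q, Q_real, Q_real]
    simp [rf]

lemma conjRS_moeb (a b c d : ℂ) (p : RS) :
    conjRS (moeb a b c d p) = moeb (conj a) (conj b) (conj c) (conj d) (conjRS p) := by
  induction p using OnePoint.rec with
  | infty =>
    rw [conjRS_infty, moeb_infty, moeb_infty]
    by_cases hc : c = 0
    · simp [hc, conjRS_infty]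
    · simp [hc, conjRS_coe]
  | coe z =>
    rw [conjRS_coe, moeb_coe, moeb_coe]
    have e : conj c * conj z + conj d = conj (c * z + d) := by simp
    by_cases hc : c * z + d = 0
    · rw [e, if_pos hc, hc]; simp [conjRS_infty]
    · rw [e, if_neg hc, if_neg ((map_ne_zero _).2 hc), conjRS_coe]
      simp

lemma conjRS_conjRS (p : RS) : conjRS (conjRS p) = p := by
  induction p using OnePoint.rec with
  | infty => rfl
  | coe z => simp [conjRS_coe]

lemma isMoebius_comp {f g : RS → RS} (hf : IsMoebius f) (hg : IsMoebius g) :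
    IsMoebius (fun p => f (g p)) := by
  obtain ⟨a, b, c, d, h1, rfl⟩ := hf
  obtain ⟨a', b', c', d', h1', rfl⟩ := hg
  refine ⟨_, _, _, _, ?_, funext fun p => moeb_comp _ _ _ _ _ _ _ _ h1 h1' p⟩
  have : (a * a' + b * c') * (c * b' + d * d') - (a * b' + b * d') * (c * a' + d * c')
        = (a * d - b * c) * (a' * d' - b' * c') := by ring
  rw [this]
  exact mul_ne_zero h1 h1'

lemma isMoebius_surj {f : RS → RS} (hf : IsMoebius f) : Function.Surjective f := by
  obtain ⟨a, b, c, d, h1, rfl⟩ := hf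
  exact fun p => ⟨_, moeb_inv_right _ _ _ _ h1 p⟩

lemma isMoebius_conj {f : RS → RS} (hf : IsMoebius f) :
    ∃ g, IsMoebius g ∧ ∀ p, conjRS (f p) = g (conjRS p) := by
  obtain ⟨a, b, c, d, h1, rfl⟩ := hf
  refine ⟨_, ⟨conj a, conj b, conj c, conj d, ?_, rfl⟩, conjRS_moeb a b c d⟩
  have : conj a * conj d - conj b * conj c = conj (a * d - b * c) := by simp
  rw [this]
  exact (map_ne_zero _).2 h1

lemma image_of_iff {f : RS → RS} (hf : Function.Surjective f) {S T : Set RS}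
    (h : ∀ p, p ∈ S ↔ f p ∈ T) : f '' S = T := by
  ext q
  constructor
  · rintro ⟨p, hp, rfl⟩; exact (h p).1 hp
  · intro hq
    obtain ⟨p, rfl⟩ := hf q
    exact ⟨p, (h p).2 hq, rfl⟩

lemma Eqv.exists_moeb {X Y : V → Frm} (h : Eqv X Y) : ∃ f g, IsMoebius f ∧ IsMoebius g ∧
    (∀ u p, f p ∈ diskOf (X u) ↔ p ∈ diskOf (Y u)) ∧
    (∀ u p, g p ∈ diskOf (Y u) ↔ p ∈ diskOf (X u)) := by
  obtain ⟨a, b, c, d, h1, h2⟩ := h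
  have hd : a * d - b * c ≠ 0 := by
    intro h0; rw [h0] at h1; simp at h1
  have hd' : d * a - (-b) * (-c) ≠ 0 := by
    have : d * a - (-b) * (-c) = a * d - b * c := by ring
    rwa [this]
  refine ⟨moeb a b c d, moeb d (-b) (-c) a, ⟨_, _, _, _, hd, rfl⟩, ⟨_, _, _, _, hd', rfl⟩, ?_, ?_⟩
  · intro u p; rw [h2, moeb_mem_diskOf _ _ _ _ hd]
  · intro u p; rw [h2, ← moeb_mem_diskOf _ _ _ _ hd, moeb_inv_right _ _ _ _ hd]

lemma final {G : SimpleGraph V} [DecidableRel G.Adj] {F : Finset (Finset V)}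
    (hT : IsSphereTriangulation G F) {X X' : V → Frm} (h : Pk G X) (h' : Pk G X') :
    ∃ f : RS → RS, (IsMoebius f ∨ IsAntiMoebius f) ∧ ∀ v, f '' diskOf (X v) = diskOf (X' v) := by
  obtain ⟨x⟩ := hT.2.2.2.2.1.nonempty
  obtain ⟨y, w, -, hxy, hxw, -, hyw, -, -⟩ := tri_nbr G F hT x
  obtain ⟨Y, e, hx, hy⟩ := h.norm2 x y w hxy hxw.ne' hyw.ne'
  obtain ⟨Y', e', hx', hy'⟩ := h'.norm2 x y w hxy hxw.ne' hyw.ne'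
  have hY := e.pk h
  have hY' := e'.pk h'
  have hcmp := norm_cmp hY hY' x y w hxw.ne' hyw.ne' hx hy hx' hy' (gram_eq hT hY hY')
  obtain ⟨-, g, -, hg, -, hgm⟩ := e.exists_moeb
  obtain ⟨f', -, hf', -, hfm', -⟩ := e'.exists_moeb
  have hd : ∀ c : ℝ, (1 : ℂ) * 1 - c * 0 ≠ 0 := by intro c; simp
  rcases hcmp with ⟨c, hc⟩ | ⟨c, hc⟩
  · have hF := isMoebius_comp hf' (isMoebius_comp ⟨1, c, 0, 1, hd c, rfl⟩ hg)
    refine ⟨_, Or.inl hF, fun v => image_of_iff (isMoebius_surj hF) fun p => ?_⟩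
    rw [hfm', moeb_mem_diskOf _ _ _ _ (hd c), ← hc, hgm]
  · obtain ⟨k, hk, hkc⟩ := isMoebius_conj (isMoebius_comp ⟨1, c, 0, 1, hd c, rfl⟩ hg)
    have hF := isMoebius_comp hf' (isMoebius_comp ⟨-1, 0, 0, 1, by norm_num, rfl⟩ hk)
    refine ⟨_, Or.inr ⟨_, hF, rfl⟩, fun v => image_of_iff ?_ fun p => ?_⟩
    · intro q
      obtain ⟨p, hp⟩ := isMoebius_surj hF q
      exact ⟨conjRS p, by simp only [conjRS_conjRS]; exact hp⟩
    · rw [hfm', ← hkc, ← rf_mem, moeb_mem_diskOf _ _ _ _ (hd c), ← hc, hgm]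

end Final
end KAT

/-- **Koebe–Andreev–Thurston rigidity.**  Let `G` be the 1-skeleton of a
triangulation of the 2-sphere, and let `{D_v}` and `{D'_v}` be circle packings in the
Riemann sphere (collections of closed disks with pairwise disjoint interiors) both
realizing `G` as contact graph.  Then some Möbius or anti-Möbius transformation
carries `D_v` to `D'_v` for every vertex `v`. -/
theorem koebe_andreev_thurston_rigidity
    {V : Type*} [Fintype V] [DecidableEq V]
    (G : SimpleGraph V) [DecidableRel G.Adj] (F : Finset (Finset V))
    (hT : IsSphereTriangulation G F)
    (D D' : V → Set RS)
    (hD : ∀ v, IsDiskRS (D v)) (hD' : ∀ v, IsDiskRS (D' v))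
    (hdisj : ∀ u v : V, u ≠ v → Disjoint (interior (D u)) (interior (D v)))
    (hdisj' : ∀ u v : V, u ≠ v → Disjoint (interior (D' u)) (interior (D' v)))
    (hcg : ∀ u v : V, u ≠ v → ((D u ∩ D v).Nonempty ↔ G.Adj u v))
    (hcg' : ∀ u v : V, u ≠ v → ((D' u ∩ D' v).Nonempty ↔ G.Adj u v)) :
    ∃ f : RS → RS, (IsMoebius f ∨ IsAntiMoebius f) ∧ ∀ v, f '' D v = D' v := by
  obtain ⟨X, hX, e⟩ := KAT.exists_Pk G D hD hdisj hcg
  obtain ⟨X', hX', e'⟩ := KAT.exists_Pk G D' hD' hdisj' hcg'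
  obtain ⟨f, hf, h⟩ := KAT.final hT hX hX'
  exact ⟨f, hf, fun v => by rw [e, e']; exact h v⟩
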